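/- There exists a polynomial map f : ℝ² → ℝ² (both coordinate functions real polynomials in two variables, of degree at least 2) that has infinitely many distinct sinks (infinitely many pairwise disjoint attracting periodic orbits) and a period doubling Cantor attractor. -/

import Mathlib

open Filter Set

/-- `f : ℝ² → ℝ²` is a polynomial map of degree at least 2. -/
def IsPolyMapDegTwo (f : ℝ × ℝ → ℝ × ℝ) : Prop :=
  ∃ P Q : MvPolynomial (Fin 2) ℝ,
    2 ≤ max P.totalDegree Q.totalDegree ∧
    ∀ p : ℝ × ℝ,
      f p = (MvPolynomial.eval ![p.1, p.2] P, MvPolynomial.eval ![p.1, p.2] Q)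

/-- `p` is a sink of `f`. -/
def IsSink (f : ℝ × ℝ → ℝ × ℝ) (p : ℝ × ℝ) (n : ℕ) : Prop :=
  1 ≤ n ∧ f^[n] p = p ∧
    ∃ W : Set (ℝ × ℝ), IsOpen W ∧ p ∈ W ∧
      ∀ x ∈ W, Tendsto (fun k => f^[k * n] x) atTop (nhds p)

/-- The forward orbit of a point. -/
def fwdOrbit (f : ℝ × ℝ → ℝ × ℝ) (p : ℝ × ℝ) : Set (ℝ × ℝ) :=
  Set.range fun k => f^[k] p

/-- `f` has infinitely many distinct sinks: a sequence of sinks with pairwise disjoint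
periodic orbits. -/
def HasInfinitelyManySinks (f : ℝ × ℝ → ℝ × ℝ) : Prop :=
  ∃ (p : ℕ → ℝ × ℝ) (n : ℕ → ℕ),
    (∀ i, IsSink f (p i) (n i)) ∧
    Pairwise fun i j => Disjoint (fwdOrbit f (p i)) (fwdOrbit f (p j))

/-- `A` is a period doubling Cantor attractor of `f`. -/
def IsPDCantorAttractor (f : ℝ × ℝ → ℝ × ℝ) (A : Set (ℝ × ℝ)) : Prop :=
  IsCompact A ∧ f '' A = A ∧
    (∃ e : A ≃ₜ ℤ_[2], ∀ (x : A) (hx : f ↑x ∈ A), e ⟨f ↑x, hx⟩ = e x + 1) ∧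
    ∃ U : Set (ℝ × ℝ), IsOpen U ∧ A ⊆ U ∧
      ∀ᵐ x ∂MeasureTheory.volume, x ∈ U →
        (omegaLimit atTop (fun n : ℕ => f^[n]) {x} ∩ A).Nonempty

section
open Filter Set

noncomputable def fr (c : ℝ) : ℕ → ℝ → ℝ
  | 0 => fun x => c - x ^ 2
  | (k+1) => fun x => -(fr c k (fr c k x))

noncomputable def qf (c : ℝ) : ℕ → ℝ
  | 0 => (1 + √(1 + 4 * c)) / 2
  | (k+1) => Classical.epsilon (fun p => p ∈ Icc 0 (qf c k) ∧ fr c k p = p)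

theorem fr_even (c : ℝ) (k : ℕ) (x : ℝ) : fr c k (-x) = fr c k x := by
  induction k with
  | zero => simp [fr]
  | succ k ih => simp [fr, ih]

theorem fr_cont2 (k : ℕ) : Continuous (fun z : ℝ × ℝ => fr z.1 k z.2) := by
  induction k with
  | zero => simp only [fr]; fun_prop
  | succ k ih =>
    simp only [fr]
    exact (ih.comp (continuous_fst.prodMk ih)).neg

theorem fr_cont (c : ℝ) (k : ℕ) : Continuous (fr c k) :=
  (fr_cont2 k).comp (continuous_const.prodMk continuous_id)

theorem fr_lip (k : ℕ) : ∀ R : ℝ, ∃ L : ℝ, 0 ≤ L ∧ ∀ c ∈ Icc (0:ℝ) 2, ∀ x y : ℝ, |x| ≤ R → |y| ≤ R →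
    |fr c k x - fr c k y| ≤ L * |x ^ 2 - y ^ 2| := by
  induction k with
  | zero =>
    intro R
    refine ⟨1, by norm_num, fun c _ x y _ _ => ?_⟩
    simp only [fr]
    rw [← abs_neg, one_mul]
    apply le_of_eq; congr 1; ring
  | succ k ih =>
    intro R
    obtain ⟨L, hL, h⟩ := ih R
    have hc : IsCompact ((Icc (0:ℝ) 2) ×ˢ (Icc (-R) R)) := isCompact_Icc.prod isCompact_Icc
    obtain ⟨R', hR'⟩ := hc.exists_bound_of_continuousOn (fr_cont2 k).continuousOn
    obtain ⟨L', hL', h'⟩ := ih R'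
    refine ⟨L' * (2 * |R'| * L), by positivity, fun c hc x y hx hy => ?_⟩
    have bx : |fr c k x| ≤ R' := hR' (c, x) ⟨hc, abs_le.1 hx⟩
    have bY : |fr c k y| ≤ R' := hR' (c, y) ⟨hc, abs_le.1 hy⟩
    have h1 := h' c hc _ _ bx bY
    have h2 := h c hc x y hx hy
    simp only [fr]
    have e1 : |-(fr c k (fr c k x)) - -(fr c k (fr c k y))| = |fr c k (fr c k x) - fr c k (fr c k y)| := by
      rw [← abs_neg]; congr 1; ring
    have e2 : |fr c k x ^ 2 - fr c k y ^ 2| ≤ 2 * |R'| * |fr c k x - fr c k y| := by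
      rw [show fr c k x ^ 2 - fr c k y ^ 2 = (fr c k x + fr c k y) * (fr c k x - fr c k y) by ring, abs_mul]
      gcongr
      have := abs_add_le (fr c k x) (fr c k y)
      have := le_abs_self R'
      linarith
    rw [e1]
    calc _ ≤ _ := h1
      _ ≤ L' * (2 * |R'| * (L * |x^2-y^2|)) := by
        gcongr
        exact e2.trans (by gcongr)
      _ = _ := by ring

def Lv (f : ℝ → ℝ) (q : ℝ) : Prop := 0 < q ∧ StrictAntiOn f (Icc 0 q) ∧ f q = -q

theorem Lv.fix {f : ℝ → ℝ} {q : ℝ} (h : Lv f q) (hf : Continuous f) (h0 : 0 < f 0) :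
    ∃ p, 0 < p ∧ p < q ∧ f p = p := by
  obtain ⟨hq, ha, hfq⟩ := h
  have : (0:ℝ) ∈ (fun x => f x - x) '' Icc 0 q := by
    apply intermediate_value_Icc' hq.le (by fun_prop)
    constructor <;> simp <;> linarith
  obtain ⟨p, ⟨hp0, hpq⟩, hp⟩ := this
  simp only at hp
  refine ⟨p, lt_of_le_of_ne hp0 ?_, lt_of_le_of_ne hpq ?_, by linarith⟩
  · rintro rfl; linarith
  · rintro rfl; linarith

theorem Lv.fix_unique {f : ℝ → ℝ} {q : ℝ} (h : Lv f q) {p p' : ℝ} (hp : p ∈ Icc 0 q) (hp' : p' ∈ Icc 0 q)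
    (e : f p = p) (e' : f p' = p') : p = p' := by
  rcases lt_trichotomy p p' with hh | hh | hh
  · have := h.2.1 hp hp' hh; linarith
  · exact hh
  · have := h.2.1 hp' hp hh; linarith

theorem qf_succ {c : ℝ} {k : ℕ} (h : Lv (fr c k) (qf c k)) (h0 : 0 < fr c k 0) :
    0 < qf c (k+1) ∧ qf c (k+1) < qf c k ∧ fr c k (qf c (k+1)) = qf c (k+1) := by
  obtain ⟨p, h1, h2, h3⟩ := h.fix (fr_cont c k) h0
  have := Classical.epsilon_spec (p := fun p => p ∈ Icc 0 (qf c k) ∧ fr c k p = p) ⟨p, ⟨h1.le, h2.le⟩, h3⟩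
  have e : qf c (k+1) = p := h.fix_unique this.1 ⟨h1.le, h2.le⟩ this.2 h3
  rw [e]; exact ⟨h1, h2, h3⟩

theorem Lv_succ {c : ℝ} {k : ℕ} (h : Lv (fr c k) (qf c k)) (h0 : 0 < fr c k 0) (h0q : fr c k 0 ≤ qf c k) :
    Lv (fr c (k+1)) (qf c (k+1)) := by
  obtain ⟨h1, h2, h3⟩ := qf_succ h h0
  refine ⟨h1, ?_, by simp [fr, h3]⟩
  have key : ∀ x ∈ Icc 0 (qf c (k+1)), fr c k x ∈ Icc 0 (qf c k) := by
    intro x hx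
    have a1 := h.2.1.antitoneOn ⟨le_rfl, by linarith⟩ ⟨hx.1, by linarith [hx.2]⟩ hx.1
    have a2 := h.2.1.antitoneOn ⟨hx.1, by linarith [hx.2]⟩ ⟨h1.le, h2.le⟩ hx.2
    constructor <;> linarith
  intro x hx y hy hxy
  have := h.2.1 ⟨hx.1, by linarith [hx.2]⟩ ⟨hy.1, by linarith [hy.2]⟩ hxy
  have := h.2.1 (key y hy) (key x hx) this
  simp only [fr]; linarith

def PP (k : ℕ) (a b : ℝ) : Prop :=
  0 ≤ a ∧ a < b ∧ b ≤ 2 ∧ (∀ c ∈ Icc a b, Lv (fr c k) (qf c k) ∧ 0 ≤ fr c k 0 ∧ fr c k 0 ≤ qf c k) ∧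
  fr a k 0 = 0 ∧ (∀ c ∈ Ioc a b, 0 < fr c k 0) ∧ fr b k 0 = qf b k

theorem PP_zero : PP 0 0 2 := by
  refine ⟨le_rfl, by norm_num, le_rfl, ?_, by simp [fr], fun c hc => by simpa [fr] using hc.1, ?_⟩
  · rintro c ⟨hc0, hc2⟩
    have hs : √(1+4*c) ^ 2 = 1 + 4 * c := Real.sq_sqrt (by linarith)
    have hs0 : 0 ≤ √(1+4*c) := Real.sqrt_nonneg _
    refine ⟨⟨by simp only [qf]; linarith, ?_, by simp only [fr, qf]; nlinarith⟩, by simpa [fr], ?_⟩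
    · intro x hx y hy hxy
      simp only [fr]
      nlinarith [hx.1]
    · simp only [fr, qf]
      have : 2 * c - 1 ≤ √(1+4*c) := by
        apply Real.le_sqrt_of_sq_le; nlinarith
      simp; linarith
  · simp only [fr, qf]
    rw [show (1:ℝ) + 4 * 2 = 3 ^ 2 by norm_num, Real.sqrt_sq (by norm_num)]; norm_num

/-- first zero after left endpoint of positive function -/
theorem first_zero {h : ℝ → ℝ} (hc : Continuous h) {a b : ℝ} (hab : a ≤ b) (ha : 0 < h a) (hb : h b < 0) :
    ∃ z, a < z ∧ z < b ∧ h z = 0 ∧ ∀ x ∈ Icc a z, 0 ≤ h x := by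
  have hne : (Icc a b ∩ h ⁻¹' (Iic 0)).Nonempty := ⟨b, ⟨hab, le_rfl⟩, hb.le⟩
  have hcp : IsCompact (Icc a b ∩ h ⁻¹' (Iic 0)) := isCompact_Icc.inter_right (isClosed_Iic.preimage hc)
  obtain ⟨z, ⟨⟨hz1, hz2⟩, hz0⟩, hz⟩ := hcp.exists_isLeast hne
  have hlt : ∀ x, a ≤ x → x < z → 0 < h x := by
    intro x hx hxz
    by_contra hcon
    have := hz ⟨⟨hx, by linarith⟩, not_lt.1 hcon⟩
    linarith
  have hz0' : h z ≤ 0 := hz0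
  have haz : a < z := lt_of_le_of_ne hz1 (by rintro rfl; linarith)
  have : 0 ≤ h z := by
    have h1 : (0:ℝ) ∈ h '' Icc a z := intermediate_value_Icc' hz1 hc.continuousOn ⟨hz0', ha.le⟩
    obtain ⟨w, hw, hw0⟩ := h1
    rcases eq_or_lt_of_le hw.2 with e | e
    · rw [← e, hw0]
    · have := hlt w hw.1 e; linarith
  have hz00 : h z = 0 := le_antisymm hz0' this
  refine ⟨z, haz, lt_of_le_of_ne hz2 (by rintro rfl; linarith), hz00, ?_⟩
  intro x hx
  rcases eq_or_lt_of_le hx.2 with e | e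
  · rw [e, hz00]
  · exact (hlt x hx.1 e).le

theorem last_zero {h : ℝ → ℝ} (hc : Continuous h) {a b : ℝ} (hab : a ≤ b) (ha : h a < 0) (hb : 0 < h b) :
    ∃ z, a < z ∧ z < b ∧ h z = 0 ∧ ∀ x ∈ Ioc z b, 0 < h x := by
  have hne : (Icc a b ∩ h ⁻¹' (Iic 0)).Nonempty := ⟨a, ⟨le_rfl, hab⟩, ha.le⟩
  have hcp : IsCompact (Icc a b ∩ h ⁻¹' (Iic 0)) := isCompact_Icc.inter_right (isClosed_Iic.preimage hc)
  obtain ⟨z, ⟨⟨hz1, hz2⟩, hz0⟩, hz⟩ := hcp.exists_isGreatest hne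
  have hlt : ∀ x, z < x → x ≤ b → 0 < h x := by
    intro x hx hxz
    by_contra hcon
    have := hz ⟨⟨by linarith, by linarith⟩, not_lt.1 hcon⟩
    linarith
  have hz0' : h z ≤ 0 := hz0
  have hzb : z < b := lt_of_le_of_ne hz2 (by rintro rfl; linarith)
  have : 0 ≤ h z := by
    have h1 : (0:ℝ) ∈ h '' Icc z b := intermediate_value_Icc hz2 hc.continuousOn ⟨hz0', hb.le⟩
    obtain ⟨w, hw, hw0⟩ := h1
    rcases eq_or_lt_of_le hw.1 with e | e
    · rw [e, hw0]
    · have := hlt w e hw.2; linarith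
  have hz00 : h z = 0 := le_antisymm hz0' this
  exact ⟨z, lt_of_le_of_ne hz1 (by rintro rfl; linarith), hzb, hz00, fun x hx => hlt x hx.1 hx.2⟩

theorem PP_step {k : ℕ} {a b : ℝ} (h : PP k a b) : ∃ a' b', a < a' ∧ b' ≤ b ∧ PP (k+1) a' b' := by
  obtain ⟨ha0, hab, hb2, hL, hfa, hpos, hfb⟩ := h
  have c0 : Continuous (fun c : ℝ => fr c k 0) := (fr_cont2 k).comp (continuous_id.prodMk continuous_const)
  have cy : Continuous (fun c : ℝ => fr c (k+1) 0) := (fr_cont2 (k+1)).comp (continuous_id.prodMk continuous_const)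
  have ch : Continuous (fun c : ℝ => fr c k (fr c (k+1) 0) - fr c (k+1) 0) :=
    ((fr_cont2 k).comp (continuous_id.prodMk cy)).sub cy
  -- a1
  obtain ⟨L, hL0, hLip⟩ := fr_lip k 1
  have ev : ∀ᶠ c in nhdsWithin a (Ioi a), fr c k 0 < 1 / (L + 1) := by
    have : Tendsto (fun c => fr c k 0) (nhdsWithin a (Ioi a)) (nhds 0) := by
      have := c0.tendsto a
      simp only [hfa] at this
      exact this.mono_left nhdsWithin_le_nhds
    exact this.eventually_lt_const (by positivity)
  have ev2 : ∀ᶠ c in nhdsWithin a (Ioi a), c ∈ Ioo a b := Ioo_mem_nhdsGT hab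
  obtain ⟨a1, hε, ha1, ha1b⟩ := (ev.and ev2).exists
  have hε0 := hpos a1 ⟨ha1, ha1b.le⟩
  have hff : 0 < fr a1 k (fr a1 k 0) := by
    have hlt1 : fr a1 k 0 < 1 := hε.trans_le (by rw [div_le_one (by positivity)]; linarith)
    have := hLip a1 ⟨by linarith, by linarith⟩ (fr a1 k 0) 0 (by rw [abs_of_pos hε0]; exact hlt1.le) (by simp)
    have h2 := (abs_le.1 this).1
    simp only [ne_eq, OfNat.ofNat_ne_zero, not_false_eq_true, zero_pow, sub_zero, abs_sq] at h2
    rw [lt_div_iff₀ (by positivity)] at hε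
    nlinarith
  have hyeq : ∀ c, fr c (k+1) 0 = - fr c k (fr c k 0) := fun c => rfl
  have hLa := hL a1 ⟨ha1.le, ha1b.le⟩
  have hLb := hL b ⟨hab.le, le_rfl⟩
  have hyb : fr b (k+1) 0 = qf b k := by rw [hyeq, hfb, hLb.1.2.2]; ring
  have ha1h : 0 < fr a1 k (fr a1 (k+1) 0) - fr a1 (k+1) 0 := by
    rw [hyeq, fr_even]
    have m1 := hLa.1.2.1.antitoneOn ⟨le_rfl, hLa.1.1.le⟩ ⟨hLa.2.1, hLa.2.2⟩ hLa.2.1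
    have m2 := hLa.1.2.1.antitoneOn ⟨hff.le, m1.trans hLa.2.2⟩ ⟨hLa.2.1, hLa.2.2⟩ m1
    linarith
  have hbh : fr b k (fr b (k+1) 0) - fr b (k+1) 0 < 0 := by
    rw [hyb, hLb.1.2.2]; linarith [hLb.1.1]
  obtain ⟨b', hb'1, hb'2, hb'0, hb'p⟩ := first_zero ch ha1b.le ha1h hbh
  have hLb' := hL b' ⟨by linarith, hb'2.le⟩
  have hp' := hpos b' ⟨by linarith, hb'2.le⟩
  have yb' : 0 < fr b' (k+1) 0 := by
    by_contra hcon
    push Not at hcon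
    obtain ⟨p, p1, p2, p3⟩ := hLb'.1.fix (fr_cont _ _) hp'
    set t := fr b' k (fr b' k 0) with ht
    have hy' : fr b' (k+1) 0 = -t := rfl
    rw [hy'] at hcon hb'0
    rw [fr_even] at hb'0
    have m1 := hLb'.1.2.1.antitoneOn ⟨le_rfl, hLb'.1.1.le⟩ ⟨hLb'.2.1, hLb'.2.2⟩ hLb'.2.1
    have ht0 : 0 ≤ t := by linarith
    have htq : t ≤ qf b' k := m1.trans hLb'.2.2
    have htp : p < t := by
      by_contra hc
      have := hLb'.1.2.1.antitoneOn ⟨ht0, htq⟩ ⟨p1.le, p2.le⟩ (not_lt.1 hc)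
      linarith
    have hf0p : p ≤ fr b' k 0 := by
      have := hLb'.1.2.1.antitoneOn ⟨le_rfl, hLb'.1.1.le⟩ ⟨p1.le, p2.le⟩ p1.le
      linarith
    have := hLb'.1.2.1.antitoneOn ⟨p1.le, p2.le⟩ ⟨hLb'.2.1, hLb'.2.2⟩ hf0p
    linarith
  have hya1 : fr a1 (k+1) 0 < 0 := by rw [hyeq]; linarith
  obtain ⟨a', ha'1, ha'2, ha'0, ha'p⟩ := last_zero cy hb'1.le hya1 yb'
  have hyq : ∀ c ∈ Icc a b, fr c (k+1) 0 ≤ qf c k := by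
    intro c hc
    obtain ⟨l1, l2, l3⟩ := hL c hc
    have := l1.2.1.antitoneOn ⟨l2, l3⟩ ⟨l1.1.le, le_rfl⟩ l3
    rw [hyeq]; linarith [l1.2.2]
  refine ⟨a', b', by linarith, hb'2.le, by linarith, ha'2, by linarith, ?_, ha'0, ha'p, ?_⟩
  · intro c hc
    have hcab : c ∈ Icc a b := ⟨by linarith [hc.1], by linarith [hc.2]⟩
    obtain ⟨l1, l2, l3⟩ := hL c hcab
    have l4 := hpos c ⟨by linarith [hc.1], by linarith [hc.2]⟩
    have y0 : 0 ≤ fr c (k+1) 0 := by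
      rcases eq_or_lt_of_le hc.1 with e | e
      · rw [← e, ha'0]
      · exact (ha'p c ⟨e, hc.2⟩).le
    refine ⟨Lv_succ l1 l4 l3, y0, ?_⟩
    obtain ⟨p1, p2, p3⟩ := qf_succ l1 l4
    by_contra hcon
    push Not at hcon
    have := l1.2.1 ⟨p1.le, p2.le⟩ ⟨y0, hyq c hcab⟩ hcon
    have := hb'p c ⟨by linarith [hc.1], hc.2⟩
    linarith
  · obtain ⟨p1, p2, p3⟩ := qf_succ hLb'.1 hp'
    exact hLb'.1.fix_unique ⟨yb'.le, hyq b' ⟨by linarith, hb'2.le⟩⟩ ⟨p1.le, p2.le⟩ (by linarith) p3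

theorem exists_feig : ∃ c : ℝ, 0 < c ∧ c ≤ 2 ∧ ∀ k, Lv (fr c k) (qf c k) ∧ 0 < fr c k 0 ∧ fr c k 0 < qf c k := by
  have hstep : ∀ k, ∀ s : {s : ℝ × ℝ // PP k s.1 s.2}, ∃ t : {t : ℝ × ℝ // PP (k+1) t.1 t.2},
      s.1.1 < t.1.1 ∧ t.1.2 ≤ s.1.2 := by
    rintro k ⟨s, hs⟩
    obtain ⟨a', b', h1, h2, h3⟩ := PP_step hs
    exact ⟨⟨(a', b'), h3⟩, h1, h2⟩
  choose nx hnx using hstep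
  let sq : (k : ℕ) → {s : ℝ × ℝ // PP k s.1 s.2} := fun k => Nat.rec ⟨(0,2), PP_zero⟩ (fun k s => nx k s) k
  have hs1 : ∀ k, (sq k).1.1 < (sq (k+1)).1.1 := fun k => (hnx k (sq k)).1
  have hs2 : ∀ k, (sq (k+1)).1.2 ≤ (sq k).1.2 := fun k => (hnx k (sq k)).2
  have hm : StrictMono (fun k => (sq k).1.1) := strictMono_nat_of_lt_succ hs1
  have ha : Antitone (fun k => (sq k).1.2) := antitone_nat_of_succ_le hs2
  have hle : ∀ j k, (sq j).1.1 ≤ (sq k).1.2 := by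
    intro j k
    have h1 := hm.monotone (le_max_left j k)
    have h2 := ha (le_max_right j k)
    have h3 := (sq (max j k)).2.2.1
    simp only at h1 h2
    linarith
  have hbdd : BddAbove (range (fun k => (sq k).1.1)) := ⟨_, by rintro _ ⟨j, rfl⟩; exact hle j 0⟩
  set c := ⨆ k, (sq k).1.1 with hc
  have hcl : ∀ k, (sq k).1.1 < c := fun k => (hs1 k).trans_le (le_ciSup hbdd (k+1))
  have hcu : ∀ k, c ≤ (sq k).1.2 := fun k => ciSup_le (fun j => hle j k)
  have h0 : ∀ k, Lv (fr c k) (qf c k) ∧ 0 < fr c k 0 ∧ fr c k 0 ≤ qf c k := by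
    intro k
    have := (sq k).2.2.2.2.1 c ⟨(hcl k).le, hcu k⟩
    exact ⟨this.1, (sq k).2.2.2.2.2.2.1 c ⟨hcl k, hcu k⟩, this.2.2⟩
  refine ⟨c, hcl 0, hcu 0, fun k => ⟨(h0 k).1, (h0 k).2.1, lt_of_le_of_ne (h0 k).2.2 ?_⟩⟩
  intro e
  have h1 : fr c (k+1) 0 = qf c k := by
    show - fr c k (fr c k 0) = _
    rw [e, (h0 k).1.2.2]; ring
  have h2 := (h0 (k+1)).2.2
  have h3 := (qf_succ (h0 k).1 (h0 k).2.1).2.1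
  linarith
end

section
open Filter Set

def CR (g : ℝ → ℝ) (I : Set ℝ) : Prop := ∀ a b c d, a ∈ I → b ∈ I → c ∈ I → d ∈ I → a < b → b < c → c < d →
  (d - a) * (c - b) * ((g b - g a) * (g d - g c)) ≤ (g d - g a) * (g c - g b) * ((b - a) * (d - c))

def Dif (g : ℝ → ℝ) (I : Set ℝ) : Prop := (StrictMonoOn g I ∨ StrictAntiOn g I) ∧ CR g I

theorem Dif.mono {g : ℝ → ℝ} {I J : Set ℝ} (h : Dif g J) (hIJ : I ⊆ J) : Dif g I :=
  ⟨h.1.imp (fun h => h.mono hIJ) (fun h => h.mono hIJ),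
   fun a b c d ha hb hc hd => h.2 a b c d (hIJ ha) (hIJ hb) (hIJ hc) (hIJ hd)⟩

theorem Dif.neg {g : ℝ → ℝ} {I : Set ℝ} (h : Dif g I) : Dif (fun x => - g x) I := by
  refine ⟨?_, fun a b c d ha hb hc hd h1 h2 h3 => ?_⟩
  · rcases h.1 with h | h
    · right; intro x hx y hy hxy; exact neg_lt_neg (h hx hy hxy)
    · left; intro x hx y hy hxy; exact neg_lt_neg (h hx hy hxy)
  · have := h.2 a b c d ha hb hc hd h1 h2 h3
    nlinarith

theorem cr_aux {x y X Y G K : ℝ} (hY : 0 < Y) (hy : 0 < y) (hx : 0 ≤ x) (hK : 0 ≤ K)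
    (h1 : X * K ≤ G * Y) (h2 : x * Y ≤ X * y) : x * K ≤ G * y := by
  have : x * K * Y ≤ G * y * Y := by
    calc x * K * Y = (x * Y) * K := by ring
      _ ≤ (X * y) * K := by gcongr
      _ = (X * K) * y := by ring
      _ ≤ (G * Y) * y := by gcongr
      _ = _ := by ring
  exact le_of_mul_le_mul_right this hY

theorem Dif.comp {g h : ℝ → ℝ} {I J : Set ℝ} (hg : Dif g J) (hh : Dif h I) (hm : MapsTo h I J) :
    Dif (fun x => g (h x)) I := by
  constructor
  · rcases hg.1 with g1 | g1 <;> rcases hh.1 with h1 | h1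
    · left; intro x hx y hy hxy; exact g1 (hm hx) (hm hy) (h1 hx hy hxy)
    · right; intro x hx y hy hxy; exact g1 (hm hy) (hm hx) (h1 hx hy hxy)
    · right; intro x hx y hy hxy; exact g1 (hm hx) (hm hy) (h1 hx hy hxy)
    · left; intro x hx y hy hxy; exact g1 (hm hy) (hm hx) (h1 hx hy hxy)
  · intro a b c d ha hb hc hd h1 h2 h3
    have e2 := hh.2 a b c d ha hb hc hd h1 h2 h3
    have Kpos : 0 ≤ (g (h b) - g (h a)) * (g (h d) - g (h c)) := by
      rcases hg.1 with g1 | g1 <;> rcases hh.1 with k1 | k1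
      · have := g1 (hm ha) (hm hb) (k1 ha hb h1); have := g1 (hm hc) (hm hd) (k1 hc hd h3)
        apply mul_nonneg <;> linarith
      · have := g1 (hm hb) (hm ha) (k1 ha hb h1); have := g1 (hm hd) (hm hc) (k1 hc hd h3)
        apply mul_nonneg_of_nonpos_of_nonpos <;> linarith
      · have := g1 (hm ha) (hm hb) (k1 ha hb h1); have := g1 (hm hc) (hm hd) (k1 hc hd h3)
        apply mul_nonneg_of_nonpos_of_nonpos <;> linarith
      · have := g1 (hm hb) (hm ha) (k1 ha hb h1); have := g1 (hm hd) (hm hc) (k1 hc hd h3)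
        apply mul_nonneg <;> linarith
    have hy : 0 < (b - a) * (d - c) := mul_pos (by linarith) (by linarith)
    have hx : 0 ≤ (d - a) * (c - b) := mul_nonneg (by linarith) (by linarith)
    rcases hh.1 with k1 | k1
    · have l1 := k1 ha hb h1; have l2 := k1 hb hc h2; have l3 := k1 hc hd h3
      have e1 := hg.2 _ _ _ _ (hm ha) (hm hb) (hm hc) (hm hd) l1 l2 l3
      exact cr_aux (mul_pos (by linarith) (by linarith)) hy hx Kpos e1 e2
    · have l1 := k1 ha hb h1; have l2 := k1 hb hc h2; have l3 := k1 hc hd h3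
      have e1 := hg.2 _ _ _ _ (hm hd) (hm hc) (hm hb) (hm ha) l3 l2 l1
      refine cr_aux (X := (h d - h a) * (h c - h b)) (Y := (h b - h a) * (h d - h c))
        (mul_pos_of_neg_of_neg (by linarith) (by linarith)) hy hx Kpos ?_ e2
      nlinarith

theorem Dif_Q_pos (c : ℝ) : Dif (fr c 0) (Ici 0) := by
  constructor
  · right; intro x hx y hy hxy; simp only [fr]; simp only [mem_Ici] at hx; nlinarith
  · intro a b e d ha hb hc hd h1 h2 h3
    simp only [fr]; simp only [mem_Ici] at *
    have k1 : 0 ≤ (d - a) * (e - b) * ((b - a) * (d - e)) := by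
      apply mul_nonneg <;> apply mul_nonneg <;> linarith
    have k2 : 0 ≤ (d - b) * (e - a) := mul_nonneg (by linarith) (by linarith)
    nlinarith [mul_nonneg k1 k2]

theorem Dif_Q_neg (c : ℝ) : Dif (fr c 0) (Iic 0) := by
  have h : Dif (fun x : ℝ => -x) (Iic 0) := by
    refine ⟨Or.inr (fun x _ y _ h => neg_lt_neg h), fun a b c d _ _ _ _ _ _ _ => le_of_eq (by ring)⟩
  have := (Dif_Q_pos c).comp h (fun x hx => by simpa using hx)
  have e : (fun x => fr c 0 (-x)) = fr c 0 := by ext x; exact fr_even c 0 x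
  rwa [e] at this

theorem Dif_affine (a : ℝ) (I : Set ℝ) : Dif (fun x : ℝ => a - x) I :=
  ⟨Or.inr (fun x _ y _ h => by simp; exact h), fun a b c d _ _ _ _ _ _ _ => le_of_eq (by ring)⟩

theorem Dif_iter (c : ℝ) (m : ℕ) : ∀ J : Set ℝ, IsPreconnected J → InjOn (fr c 0)^[m] J → Dif (fr c 0)^[m] J := by
  induction m with
  | zero =>
    intro J _ _
    refine ⟨Or.inl (fun x _ y _ h => by simpa using h), fun a b c d _ _ _ _ _ _ _ => le_of_eq ?_⟩
    simp
  | succ m ih =>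
    intro J hJ hinj
    have e : (fr c 0)^[m+1] = fun x => (fr c 0)^[m] (fr c 0 x) := by
      ext x; rw [Function.iterate_succ_apply]
    rw [e] at hinj ⊢
    have hQ : InjOn (fr c 0) J := fun x hx y hy h => hinj hx hy (by simp only [h])
    have hJ' : J ⊆ Ici 0 ∨ J ⊆ Iic 0 := by
      by_contra hcon
      push Not at hcon
      obtain ⟨h1, h2⟩ := hcon
      obtain ⟨x, hx, hx0⟩ := not_subset.1 h1
      obtain ⟨y, hy, hy0⟩ := not_subset.1 h2
      simp only [mem_Ici, mem_Iic, not_le] at hx0 hy0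
      have hoc := hJ.ordConnected
      have h3 : min (-x) y ∈ J := hoc.out hx hy ⟨le_min (by linarith) (by linarith), min_le_right _ _⟩
      have h4 : -min (-x) y ∈ J := hoc.out hx hy ⟨by linarith [min_le_left (-x) y], by
        have : 0 < min (-x) y := lt_min (by linarith) hy0
        linarith⟩
      have := hQ h3 h4 (fr_even c 0 _).symm
      have : 0 < min (-x) y := lt_min (by linarith) hy0
      linarith
    have hD : Dif (fr c 0) J := by
      rcases hJ' with h | h
      · exact (Dif_Q_pos c).mono h
      · exact (Dif_Q_neg c).mono h
    refine (ih (fr c 0 '' J) (hJ.image _ (fr_cont c 0).continuousOn) ?_).comp hD (mapsTo_image _ _)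
    rintro _ ⟨x, hx, rfl⟩ _ ⟨y, hy, rfl⟩ h
    rw [hinj hx hy h]

def Feig (c : ℝ) : Prop := 0 < c ∧ c ≤ 2 ∧ ∀ k, Lv (fr c k) (qf c k) ∧ 0 < fr c k 0 ∧ fr c k 0 < qf c k

theorem iter_fr (c : ℝ) (k : ℕ) (x : ℝ) : (fr c 0)^[2 ^ k] x = (-1) ^ k * fr c k x := by
  induction k generalizing x with
  | zero => simp
  | succ k ih =>
    rw [pow_succ, mul_two, Function.iterate_add_apply, ih, ih]
    have : fr c k ((-1) ^ k * fr c k x) = fr c k (fr c k x) := by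
      rcases neg_one_pow_eq_or ℝ k with h | h <;> rw [h]
      · simp
      · rw [neg_one_mul, fr_even]
    rw [this, pow_succ]; simp [fr]

theorem iter_fr_abs (c : ℝ) (k : ℕ) (x : ℝ) : |(fr c 0)^[2 ^ k] x| = |fr c k x| := by
  rw [iter_fr, abs_mul, abs_pow]; simp

variable {c : ℝ}

theorem Feig.q0 (h : Feig c) (k : ℕ) : 0 < qf c k := (h.2.2 k).1.1
theorem Feig.anti (h : Feig c) (k : ℕ) : StrictAntiOn (fr c k) (Icc 0 (qf c k)) := (h.2.2 k).1.2.1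
theorem Feig.fq (h : Feig c) (k : ℕ) : fr c k (qf c k) = - qf c k := (h.2.2 k).1.2.2
theorem Feig.v0 (h : Feig c) (k : ℕ) : 0 < fr c k 0 := (h.2.2 k).2.1
theorem Feig.vq (h : Feig c) (k : ℕ) : fr c k 0 < qf c k := (h.2.2 k).2.2
theorem Feig.pq (h : Feig c) (k : ℕ) : qf c (k+1) < qf c k := (qf_succ (h.2.2 k).1 (h.v0 k)).2.1
theorem Feig.fp (h : Feig c) (k : ℕ) : fr c k (qf c (k+1)) = qf c (k+1) := (qf_succ (h.2.2 k).1 (h.v0 k)).2.2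
theorem Feig.pv (h : Feig c) (k : ℕ) : qf c (k+1) < fr c k 0 := by
  have := h.anti k ⟨le_rfl, (h.q0 k).le⟩ ⟨(h.q0 (k+1)).le, (h.pq k).le⟩ (h.q0 (k+1))
  rwa [h.fp k] at this
theorem Feig.fv (_h : Feig c) (k : ℕ) : fr c k (fr c k 0) = - fr c (k+1) 0 := by simp [fr]

theorem Feig.dif (h : Feig c) (k : ℕ) : Dif (fr c k) (Icc 0 (qf c k)) := by
  have h1 : InjOn (fr c 0)^[2^k] (Icc 0 (qf c k)) := by
    intro x hx y hy e
    rw [iter_fr, iter_fr] at e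
    exact (h.anti k).injOn hx hy (mul_left_cancel₀ (by simp) e)
  have h2 := Dif_iter c _ _ isPreconnected_Icc h1
  rcases neg_one_pow_eq_or ℝ k with hk | hk
  · have e : (fr c 0)^[2^k] = fr c k := by ext x; rw [iter_fr, hk, one_mul]
    rwa [e] at h2
  · have e : (fun x => -(fr c 0)^[2^k] x) = fr c k := by ext x; rw [iter_fr, hk]; ring
    have := h2.neg
    rwa [e] at this

noncomputable def psi (c : ℝ) : ℕ → ℝ → ℝ
  | 0 => fun t => c - t
  | (k+1) => fun t => - fr c k (psi c k t)

theorem fr_psi (c : ℝ) (k : ℕ) (x : ℝ) : fr c k x = psi c k (x ^ 2) := by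
  induction k with
  | zero => simp [fr, psi]
  | succ k ih => simp [fr, psi, ih]

theorem psi_cont (c : ℝ) (k : ℕ) : Continuous (psi c k) := by
  induction k with
  | zero => simp only [psi]; fun_prop
  | succ k ih => simp only [psi]; exact ((fr_cont c k).comp ih).neg

noncomputable def Qb (c : ℝ) : ℕ → ℝ
  | 0 => 2 * qf c 0
  | (k+1) => qf c k

theorem psi_data (h : Feig c) (k : ℕ) : ∃ τ > 0, StrictAntiOn (psi c k) (Icc (-τ) (qf c k ^ 2)) ∧
    Dif (psi c k) (Icc (-τ) (qf c k ^ 2)) ∧ psi c k (-τ) = Qb c k ∧ 4 * qf c k ≤ 3 * Qb c k := by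
  induction k with
  | zero =>
    have hv : c < qf c 0 := by simpa [fr] using h.vq 0
    have := h.q0 0
    refine ⟨2 * qf c 0 - c, by linarith, fun x _ y _ hxy => by simp only [psi]; linarith, Dif_affine _ _, ?_, ?_⟩
    · simp only [psi, Qb]; ring
    · simp only [Qb]; linarith
  | succ k ih =>
    obtain ⟨τ, hτ, ha, hD, hb, hQ⟩ := ih
    have q0 := h.q0 k
    have p0 := h.q0 (k+1)
    have hpq := h.pq k
    have hv := h.vq k
    have hpv := h.pv k
    set q := qf c k with hq
    set p := qf c (k+1) with hp
    set v := fr c k 0 with hvd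
    have psi0 : psi c k 0 = v := by rw [hvd, fr_psi]; simp
    have psip : psi c k (p^2) = p := by rw [← fr_psi]; exact h.fp k
    have psiq : psi c k (q^2) = -q := by rw [← fr_psi]; exact h.fq k
    have hp2 : p ^ 2 < q ^ 2 := by nlinarith
    -- tau'
    have : q ∈ psi c k '' Icc (-τ) 0 := by
      apply intermediate_value_Icc' (by linarith) (psi_cont c k).continuousOn
      rw [psi0, hb]; exact ⟨hv.le, by linarith⟩
    obtain ⟨s, ⟨hs1, hs2⟩, hs⟩ := this
    have hs0 : s < 0 := lt_of_le_of_ne hs2 (by rintro rfl; linarith)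
    have hsub : Icc s (p^2) ⊆ Icc (-τ) (q^2) := Icc_subset_Icc hs1 hp2.le
    have hmaps : MapsTo (psi c k) (Icc s (p^2)) (Icc 0 q) := by
      intro t ht
      have m1 := ha.antitoneOn (hsub ⟨le_rfl, by linarith [sq_nonneg p]⟩) (hsub ht) ht.1
      have m2 := ha.antitoneOn (hsub ht) (hsub ⟨by nlinarith, le_rfl⟩) ht.2
      constructor <;> linarith
    refine ⟨-s, by linarith, ?_, ?_, ?_, ?_⟩
    · rw [neg_neg]
      intro x hx y hy hxy
      have := ha (hsub hx) (hsub hy) hxy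
      have := h.anti k (hmaps hy) (hmaps hx) this
      simp only [psi]; linarith
    · rw [neg_neg]
      exact ((h.dif k).comp (hD.mono hsub) hmaps).neg
    · rw [neg_neg]; simp only [psi, Qb]; rw [hs, h.fq k]; ring
    · simp only [Qb]
      have e := hD.2 (-τ) 0 (p^2) (q^2) ⟨le_rfl, by nlinarith⟩ ⟨by linarith, by positivity⟩ ⟨by nlinarith, hp2.le⟩
        ⟨by nlinarith, le_rfl⟩ (by linarith) (by positivity) hp2
      rw [hb, psi0, psip, psiq] at e
      have e2 : τ * (q + p) * (p^2 * (Qb c k - v)) ≤ τ * (q + p) * ((q + Qb c k) * (v - p) * (q - p)) := by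
        have : 0 ≤ q^2 * p^2 * ((Qb c k - v) * (q + p)) := by
          apply mul_nonneg (by positivity); apply mul_nonneg <;> linarith
        nlinarith
      have e3 := le_of_mul_le_mul_left e2 (by positivity)
      have e4 : (q + Qb c k) * (v - p) * (q - p) ≤ 7 * (Qb c k - q) * (q - p) * (q - p) := by
        have : (q + Qb c k) * (v - p) ≤ 7 * (Qb c k - q) * (q - p) := by
          apply mul_le_mul <;> linarith
        exact mul_le_mul_of_nonneg_right this (by linarith)
      have e5 : p^2 * (Qb c k - q) ≤ p^2 * (Qb c k - v) := by gcongr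
      have e6 : (Qb c k - q) * p^2 ≤ (Qb c k - q) * (7 * (q-p)^2) := by nlinarith
      have e7 := le_of_mul_le_mul_left e6 (by linarith)
      by_contra hcon
      push Not at hcon
      nlinarith

theorem Feig.p34 (h : Feig c) (k : ℕ) : 4 * qf c (k+1) ≤ 3 * qf c k := by
  obtain ⟨τ, _, _, _, _, hh⟩ := psi_data h (k+1)
  exact hh

theorem Feig.q_tendsto (h : Feig c) : Tendsto (qf c) atTop (nhds 0) := by
  have hb : ∀ k, qf c k ≤ qf c 0 * (3/4) ^ k := by
    intro k
    induction k with
    | zero => simp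
    | succ k ih => rw [pow_succ]; linarith [h.p34 k]
  refine squeeze_zero (fun k => (h.q0 k).le) hb ?_
  have := (tendsto_pow_atTop_nhds_zero_of_lt_one (r := (3/4:ℝ)) (by norm_num) (by norm_num)).const_mul (qf c 0)
  simpa using this

theorem Feig.eta (h : Feig c) (k : ℕ) : qf c (k+1) ≤ 5 * (fr c k 0 - qf c (k+1)) := by
  obtain ⟨τ, hτ, ha, hD, hb, hQ⟩ := psi_data h k
  have q0 := h.q0 k
  have p0 := h.q0 (k+1)
  have hpq := h.pq k
  have hv := h.vq k
  have hpv := h.pv k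
  have hv' := h.v0 (k+1)
  have hv'' := h.vq (k+1)
  have hfv := h.fv k
  set q := qf c k with hq
  set p := qf c (k+1) with hp
  set v := fr c k 0 with hvd
  set v' := fr c (k+1) 0
  have psi0 : psi c k 0 = v := by rw [hvd, fr_psi]; simp
  have psip : psi c k (p^2) = p := by rw [← fr_psi]; exact h.fp k
  have psiv : psi c k (v^2) = -v' := by rw [← fr_psi]; exact hfv
  have hp2 : p ^ 2 < v ^ 2 := by nlinarith
  have hv2 : v ^ 2 < q ^ 2 := by nlinarith
  have e := hD.2 (-τ) 0 (p^2) (v^2) ⟨le_rfl, by nlinarith⟩ ⟨by linarith, by positivity⟩ ⟨by nlinarith, by linarith⟩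
        ⟨by nlinarith, hv2.le⟩ (by linarith) (by positivity) hp2
  rw [hb, psi0, psip, psiv] at e
  have e2 : τ * (p^3 * (Qb c k - v)) ≤ τ * ((v' + Qb c k) * (v - p)^2 * (v + p)) := by
    have t1 : 0 ≤ v^2 * p^2 * ((Qb c k - v) * (p + v')) := by
      apply mul_nonneg (by positivity); apply mul_nonneg <;> linarith
    have t2 : 0 ≤ τ * p^2 * ((Qb c k - v) * v') := by
      apply mul_nonneg (by positivity); apply mul_nonneg <;> linarith
    nlinarith
  have e3 := le_of_mul_le_mul_left e2 hτ
  have e4 : (v' + Qb c k) * ((v - p)^2 * (v + p)) ≤ (2 * Qb c k) * ((v - p)^2 * (v + p)) := by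
    apply mul_le_mul_of_nonneg_right _ (by apply mul_nonneg (by positivity); linarith)
    linarith
  have e5 : p^3 * (Qb c k / 4) ≤ p^3 * (Qb c k - v) := by gcongr; linarith
  have e6 : Qb c k * p^3 ≤ Qb c k * (8 * ((v - p)^2 * (v + p))) := by nlinarith
  have e7 := le_of_mul_le_mul_left e6 (by linarith)
  by_contra hcon
  push Not at hcon
  have e8 : (v-p)^2 ≤ (p/5)^2 := by apply pow_le_pow_left₀ <;> linarith
  have e9 : (v-p)^2 * (v + p) ≤ (p/5)^2 * (11/5 * p) := by
    apply mul_le_mul e8 <;> first | positivity | linarith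
  nlinarith [pow_pos p0 3]
end

section
open Filter Set
variable {c : ℝ}

def II (c : ℝ) (k i : ℕ) : Set ℝ := (fr c 0)^[i] '' Icc (-(qf c k)) (qf c k)

theorem iter_cont (c : ℝ) (i : ℕ) : Continuous (fr c 0)^[i] := (fr_cont c 0).iterate i

theorem iter_even (c : ℝ) (i : ℕ) (hi : 1 ≤ i) (x : ℝ) : (fr c 0)^[i] (-x) = (fr c 0)^[i] x := by
  obtain ⟨j, rfl⟩ := Nat.exists_eq_add_of_le' hi
  rw [Function.iterate_succ_apply, Function.iterate_succ_apply, fr_even]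

theorem iter_abs (c : ℝ) (i : ℕ) (hi : 1 ≤ i) (x : ℝ) : (fr c 0)^[i] (|x|) = (fr c 0)^[i] x := by
  rcases abs_choice x with h | h <;> rw [h]
  exact iter_even c i hi x

theorem fr_abs (c : ℝ) (k : ℕ) (x : ℝ) : fr c k |x| = fr c k x := by
  rcases abs_choice x with h | h <;> rw [h]
  exact fr_even c k x

theorem Feig.range (h : Feig c) (k : ℕ) {x : ℝ} (hx : |x| ≤ qf c k) : -(qf c k) ≤ fr c k x ∧ fr c k x ≤ fr c k 0 := by
  rw [← fr_abs]
  have h1 := (h.anti k).antitoneOn ⟨le_rfl, (h.q0 k).le⟩ ⟨abs_nonneg x, hx⟩ (abs_nonneg x)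
  have h2 := (h.anti k).antitoneOn ⟨abs_nonneg x, hx⟩ ⟨(h.q0 k).le, le_rfl⟩ hx
  rw [h.fq k] at h2
  exact ⟨h2, h1⟩

theorem Feig.range' (h : Feig c) (k : ℕ) {x : ℝ} (hx : |x| ≤ qf c (k+1)) : qf c (k+1) ≤ fr c k x ∧ fr c k x ≤ fr c k 0 := by
  rw [← fr_abs]
  have hp := h.pq k
  have h1 := (h.anti k).antitoneOn ⟨le_rfl, (h.q0 k).le⟩ ⟨abs_nonneg x, by linarith⟩ (abs_nonneg x)
  have h2 := (h.anti k).antitoneOn ⟨abs_nonneg x, by linarith⟩ ⟨(h.q0 (k+1)).le, hp.le⟩ hx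
  rw [h.fp k] at h2
  exact ⟨h2, h1⟩

theorem Feig.absfr (h : Feig c) (k : ℕ) {x : ℝ} (hx : |x| ≤ qf c k) : |fr c k x| ≤ qf c k := by
  have := h.range k hx; have := h.vq k
  rw [abs_le]; constructor <;> linarith

theorem II_wrap (h : Feig c) (k i : ℕ) : II c k (i + 2^k) ⊆ II c k i := by
  rintro _ ⟨x, hx, rfl⟩
  rw [Function.iterate_add_apply]
  refine ⟨_, ?_, rfl⟩
  refine abs_le.1 ?_
  rw [iter_fr_abs]
  exact h.absfr k (abs_le.2 hx)

theorem II_sub (h : Feig c) (k i : ℕ) : II c (k+1) i ⊆ II c k i := by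
  apply image_mono
  have := h.pq k
  apply Icc_subset_Icc <;> linarith

theorem II_compact (k i : ℕ) : IsCompact (II c k i) := isCompact_Icc.image (iter_cont c i)

theorem II_nonempty (h : Feig c) (k i : ℕ) : (II c k i).Nonempty :=
  ⟨_, 0, ⟨by linarith [h.q0 k], (h.q0 k).le⟩, rfl⟩

theorem shrink_aux {x y z p q v v' : ℝ} (hx : 0 ≤ x) (hy : 0 ≤ y) (hz : 0 ≤ z) (hp : 0 < p) (hpq : 4 * p ≤ 3 * q)
    (hv : v < q) (hv' : v' < p) (hv0 : 0 < v') (het : p ≤ 5 * (v - p))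
    (e : (x + y + z) * y * ((v - p) * (q - v')) ≤ (v + q) * (p + v') * (x * z)) : y ≤ 9/10 * (x + y + z) := by
  have e1 : (x + y + z) * y * (p / 5 * (q / 4)) ≤ (x + y + z) * y * ((v - p) * (q - v')) := by
    apply mul_le_mul_of_nonneg_left _ (by positivity)
    apply mul_le_mul <;> linarith
  have e2 : (v + q) * (p + v') * (x * z) ≤ (2 * q) * (2 * p) * (x * z) := by
    apply mul_le_mul_of_nonneg_right _ (by positivity)
    apply mul_le_mul <;> linarith
  have hq : 0 < q := by linarith
  have e3 : (p * q) * ((x + y + z) * y) ≤ (p * q) * (80 * (x * z)) := by nlinarith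
  have e4 := le_of_mul_le_mul_left e3 (by positivity)
  by_contra hcon
  push Not at hcon
  nlinarith [sq_nonneg (x - z), mul_nonneg hx hy, mul_nonneg hz hy]

theorem II_shrink (h : Feig c) (k i : ℕ) (h1 : 1 ≤ i) (h2 : i ≤ 2^k) :
    Metric.diam (II c (k+1) (i + 2^k)) ≤ 9/10 * Metric.diam (II c k i) := by
  have q0 := h.q0 k
  have p0 := h.q0 (k+1)
  have hpq := h.pq k
  have hv := h.vq k
  have hpv := h.pv k
  have hv' := h.v0 (k+1)
  have hv'' := h.vq (k+1)
  have hfv := h.fv k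
  have het := h.eta k
  have h34 := h.p34 k
  have hfp := h.fp k
  have hfq := h.fq k
  set g := (fr c 0)^[i] with hg
  set R := (fr c 0)^[2^k - i] with hR
  have hRg : ∀ x, R (g x) = (-1)^k * fr c k x := by
    intro x
    rw [hR, hg, ← Function.iterate_add_apply, Nat.sub_add_cancel h2, iter_fr]
  have hinj : InjOn (fun x => R (g x)) (Icc 0 (qf c k)) := by
    intro x hx y hy e
    simp only [hRg] at e
    exact (h.anti k).injOn hx hy (mul_left_cancel₀ (by simp) e)
  have hgD : Dif g (Icc 0 (qf c k)) := Dif_iter c i _ isPreconnected_Icc (fun x hx y hy e => hinj hx hy (congrArg R e))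
  have hRD : Dif R (g '' Icc 0 (qf c k)) := by
    apply Dif_iter c _ _ (isPreconnected_Icc.image _ (iter_cont c i).continuousOn)
    rintro _ ⟨x, hx, rfl⟩ _ ⟨y, hy, rfl⟩ e
    rw [hinj hx hy e]
  have m0 : (0:ℝ) ∈ Icc 0 (qf c k) := ⟨le_rfl, q0.le⟩
  have mp : qf c (k+1) ∈ Icc 0 (qf c k) := ⟨p0.le, hpq.le⟩
  have mv : fr c k 0 ∈ Icc 0 (qf c k) := ⟨by linarith, hv.le⟩
  have mq : qf c k ∈ Icc 0 (qf c k) := ⟨q0.le, le_rfl⟩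
  have mm : ∀ x ∈ Icc 0 (qf c k), g x ∈ g '' Icc 0 (qf c k) := fun x hx => ⟨x, hx, rfl⟩
  have heps : ((-1:ℝ)^k) * ((-1:ℝ)^k) = 1 := by rw [← mul_pow]; simp
  have hdq : |g (qf c k) - g 0| ≤ Metric.diam (II c k i) := by
    have := Metric.dist_le_diam_of_mem (II_compact (c := c) k i).isBounded (x := g (qf c k)) (y := g 0)
      ⟨_, ⟨by linarith, le_rfl⟩, rfl⟩ ⟨_, ⟨by linarith, q0.le⟩, rfl⟩
    rwa [Real.dist_eq] at this
  have key : |g (fr c k 0) - g (qf c (k+1))| ≤ 9/10 * |g (qf c k) - g 0| := by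
    rcases hgD.1 with hm | hm
    · have l1 := hm m0 mp p0; have l2 := hm mp mv hpv; have l3 := hm mv mq hv
      have e := hRD.2 _ _ _ _ (mm _ m0) (mm _ mp) (mm _ mv) (mm _ mq) l1 l2 l3
      simp only [hRg, hfv, hfp, hfq] at e
      rw [abs_of_pos (by linarith), abs_of_pos (by linarith)]
      have := shrink_aux (x := g (qf c (k+1)) - g 0) (y := g (fr c k 0) - g (qf c (k+1)))
        (z := g (qf c k) - g (fr c k 0)) (by linarith) (by linarith) (by linarith) p0 h34 hv hv'' hv' het
        (by linear_combination e + (-(g (qf c k) - g 0) * (g (fr c k 0) - g (qf c (k+1))) * ((fr c k 0 - qf c (k+1)) * (qf c k - fr c (k+1) 0)) + (fr c k 0 + qf c k) * (qf c (k+1) + fr c (k+1) 0) * ((g (qf c (k+1)) - g 0) * (g (qf c k) - g (fr c k 0)))) * heps)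
      linarith
    · have l1 := hm m0 mp p0; have l2 := hm mp mv hpv; have l3 := hm mv mq hv
      have e := hRD.2 _ _ _ _ (mm _ mq) (mm _ mv) (mm _ mp) (mm _ m0) l3 l2 l1
      simp only [hRg, hfv, hfp, hfq] at e
      rw [abs_of_neg (by linarith), abs_of_neg (by linarith)]
      have := shrink_aux (x := -(g (qf c (k+1)) - g 0)) (y := -(g (fr c k 0) - g (qf c (k+1))))
        (z := -(g (qf c k) - g (fr c k 0))) (by linarith) (by linarith) (by linarith) p0 h34 hv hv'' hv' het
        (by linear_combination e + (-(g (qf c k) - g 0) * (g (fr c k 0) - g (qf c (k+1))) * ((fr c k 0 - qf c (k+1)) * (qf c k - fr c (k+1) 0)) + (fr c k 0 + qf c k) * (qf c (k+1) + fr c (k+1) 0) * ((g (qf c (k+1)) - g 0) * (g (qf c k) - g (fr c k 0)))) * heps)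
      linarith
  refine Metric.diam_le_of_forall_dist_le (by have := Metric.diam_nonneg (s := II c k i); positivity) ?_
  have rep : ∀ x ∈ II c (k+1) (i + 2^k), ∃ s ∈ Icc (qf c (k+1)) (fr c k 0), g s = x := by
    rintro _ ⟨x, hx, rfl⟩
    refine ⟨fr c k x, h.range' k (abs_le.2 hx), ?_⟩
    rw [Function.iterate_add_apply, iter_fr, ← iter_abs c i h1 ((-1)^k * fr c k x), abs_mul, abs_pow, abs_neg, abs_one,
      one_pow, one_mul, iter_abs c i h1]
  intro x hx y hy
  obtain ⟨s, hs, rfl⟩ := rep x hx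
  obtain ⟨t, ht, rfl⟩ := rep y hy
  rw [Real.dist_eq]
  refine le_trans ?_ (key.trans (by linarith))
  have hsI : s ∈ Icc 0 (qf c k) := ⟨by linarith [hs.1], by linarith [hs.2]⟩
  have htI : t ∈ Icc 0 (qf c k) := ⟨by linarith [ht.1], by linarith [ht.2]⟩
  rcases hgD.1 with hm | hm
  · have a1 := hm.monotoneOn mp hsI hs.1; have a2 := hm.monotoneOn hsI mv hs.2
    have b1 := hm.monotoneOn mp htI ht.1; have b2 := hm.monotoneOn htI mv ht.2
    rw [abs_of_nonneg (a := g (fr c k 0) - g (qf c (k+1))) (by linarith), abs_le]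
    constructor <;> linarith
  · have a1 := hm.antitoneOn mp hsI hs.1; have a2 := hm.antitoneOn hsI mv hs.2
    have b1 := hm.antitoneOn mp htI ht.1; have b2 := hm.antitoneOn htI mv ht.2
    rw [abs_of_nonpos (a := g (fr c k 0) - g (qf c (k+1))) (by linarith), abs_le]
    constructor <;> linarith

theorem diam_tendsto (h : Feig c) (i : ℕ → ℕ) (hi : ∀ k, i k < 2^k) (hs : ∀ k, i (k+1) = i k ∨ i (k+1) = i k + 2^k) :
    Tendsto (fun k => Metric.diam (II c k (i k))) atTop (nhds 0) := by
  have hmono : Monotone i := monotone_nat_of_le_succ (fun k => by rcases hs k with h | h <;> rw [h]; exact Nat.le_add_right _ _)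
  have hsub : ∀ k, II c (k+1) (i (k+1)) ⊆ II c k (i k) := by
    intro k
    rcases hs k with h1 | h1 <;> rw [h1]
    · exact II_sub h k _
    · exact (II_sub h k _).trans (II_wrap h k _)
  have hanti : Antitone (fun k => Metric.diam (II c k (i k))) :=
    antitone_nat_of_succ_le (fun k => Metric.diam_mono (hsub k) (II_compact k _).isBounded)
  by_cases hf : ∃ᶠ k in atTop, 1 ≤ i k ∧ i (k+1) = i k + 2^k
  · have hlim := tendsto_atTop_ciInf hanti ⟨0, by rintro _ ⟨k, rfl⟩; exact Metric.diam_nonneg⟩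
    set ℓ := ⨅ k, Metric.diam (II c k (i k)) with hl
    have hlim' := hlim.comp (tendsto_add_atTop_nat 1)
    have hle : ℓ ≤ 9/10 * ℓ := by
      refine le_of_tendsto_of_frequently (hlim'.sub (hlim.const_mul (9/10:ℝ))) (b := 0) ?_ |> fun h => by linarith
      refine hf.mono (fun k hk => ?_)
      have := II_shrink h k (i k) hk.1 (hi k).le
      simp only [Function.comp, hk.2]
      linarith
    have h0 : 0 ≤ ℓ := le_ciInf (fun k => Metric.diam_nonneg)
    have : ℓ = 0 := by linarith
    rwa [this] at hlim
  · rw [not_frequently] at hf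
    obtain ⟨K, hK⟩ := eventually_atTop.1 hf
    have hev : ∃ K' m, ∀ k ≥ K', i k = m := by
      by_cases hz : ∀ k, i k = 0
      · exact ⟨0, 0, fun k _ => hz k⟩
      · push Not at hz
        obtain ⟨k0, hk0⟩ := hz
        refine ⟨max K k0, i (max K k0), fun k hk => ?_⟩
        induction k, hk using Nat.le_induction with
        | base => rfl
        | succ k hk ih =>
          have h1 : 1 ≤ i k := (Nat.one_le_iff_ne_zero.2 hk0).trans (hmono ((le_max_right _ _).trans hk))
          have := hK k ((le_max_left _ _).trans hk)
          rcases hs k with h2 | h2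
          · omega
          · exact absurd ⟨h1, h2⟩ this
    obtain ⟨K', m, hm⟩ := hev
    have hc0 : ContinuousAt (fr c 0)^[m] 0 := (iter_cont c m).continuousAt
    rw [Metric.tendsto_atTop]
    intro ε hε
    obtain ⟨δ, hδ, hd⟩ := Metric.continuousAt_iff.1 hc0 (ε/4) (by positivity)
    obtain ⟨K2, hK2⟩ := Metric.tendsto_atTop.1 h.q_tendsto δ hδ
    refine ⟨max K' K2, fun k hk => ?_⟩
    rw [Real.dist_eq, sub_zero, abs_of_nonneg Metric.diam_nonneg, hm k ((le_max_left _ _).trans hk)]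
    have hq := hK2 k ((le_max_right _ _).trans hk)
    rw [Real.dist_eq, sub_zero, abs_of_pos (h.q0 k)] at hq
    refine lt_of_le_of_lt (b := ε/2) (Metric.diam_le_of_forall_dist_le (by positivity) ?_) (by linarith)
    rintro _ ⟨x, hx, rfl⟩ _ ⟨y, hy, rfl⟩
    have d1 := hd (x := x) (by rw [Real.dist_eq, sub_zero]; exact lt_of_le_of_lt (abs_le.2 hx) hq)
    have d2 := hd (x := y) (by rw [Real.dist_eq, sub_zero]; exact lt_of_le_of_lt (abs_le.2 hy) hq)
    have := dist_triangle_right ((fr c 0)^[m] x) ((fr c 0)^[m] y) ((fr c 0)^[m] 0)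
    linarith

theorem II_point (h : Feig c) (i : ℕ → ℕ) (hi : ∀ k, i k < 2^k) (hs : ∀ k, i (k+1) = i k ∨ i (k+1) = i k + 2^k) :
    ∃! x, ∀ k, x ∈ II c k (i k) := by
  have hsub : ∀ k, II c (k+1) (i (k+1)) ⊆ II c k (i k) := by
    intro k
    rcases hs k with h1 | h1 <;> rw [h1]
    · exact II_sub h k _
    · exact (II_sub h k _).trans (II_wrap h k _)
  obtain ⟨x, hx⟩ := IsCompact.nonempty_iInter_of_sequence_nonempty_isCompact_isClosed (fun k => II c k (i k)) hsub
    (fun k => II_nonempty h _ _) (II_compact _ _) (fun k => (II_compact _ _).isClosed)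
  rw [mem_iInter] at hx
  refine ⟨x, hx, fun y hy => ?_⟩
  have := diam_tendsto h i hi hs
  have h0 : dist y x ≤ 0 := ge_of_tendsto this (Eventually.of_forall (fun k =>
    Metric.dist_le_diam_of_mem (II_compact k _).isBounded (hy k) (hx k)))
  exact dist_le_zero.1 h0
end

section
open Filter Set
variable {c : ℝ}

noncomputable def ad (a : ℤ_[2]) (k : ℕ) : ℕ := (PadicInt.toZModPow k a).val

theorem ad_lt (a : ℤ_[2]) (k : ℕ) : ad a k < 2^k := ZMod.val_lt _

theorem ad_mod (a : ℤ_[2]) (k : ℕ) : ad a k = ad a (k+1) % 2^k := by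
  unfold ad
  rw [← PadicInt.cast_toZModPow k (k+1) (Nat.le_succ k) a, ZMod.cast_eq_val, ZMod.val_natCast]

theorem ad_step (a : ℤ_[2]) (k : ℕ) : ad a (k+1) = ad a k ∨ ad a (k+1) = ad a k + 2^k := by
  have h1 := ad_mod a k
  have h2 := ad_lt a (k+1)
  rw [pow_succ] at h2
  have h3 := Nat.mod_add_div (ad a (k+1)) (2^k)
  have h4 : ad a (k+1) / 2^k < 2 := Nat.div_lt_of_lt_mul h2
  rw [← h1] at h3
  interval_cases hh : ad a (k+1) / 2^k
  · left; omega
  · right; omega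

theorem ad_add (a : ℤ_[2]) (n k : ℕ) : ad (a + n) k = (ad a k + n) % 2^k := by
  unfold ad
  rw [map_add, map_natCast, ZMod.val_add, ZMod.val_natCast, Nat.add_mod_mod]

theorem ad_zero (k : ℕ) : ad 0 k = 0 := by simp [ad]

theorem ad_nhds (a : ℤ_[2]) (k : ℕ) : ∀ᶠ b in nhds a, ad b k = ad a k := by
  rw [Metric.eventually_nhds_iff]
  refine ⟨(2:ℝ)^(-(k:ℤ)), by positivity, fun b hb => ?_⟩
  have : ‖b - a‖ ≤ ((2:ℕ):ℝ)^(-(k:ℤ)) := by rw [← dist_eq_norm]; exact_mod_cast hb.le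
  rw [PadicInt.norm_le_pow_iff_mem_span_pow, ← PadicInt.ker_toZModPow, RingHom.mem_ker, map_sub, sub_eq_zero] at this
  simp only [ad, this]

theorem ad_ext {a b : ℤ_[2]} (h : ∀ k, ad a k = ad b k) : a = b :=
  PadicInt.ext_of_toZModPow.1 (fun k => ZMod.val_injective _ (h k))

theorem exists_pi (h : Feig c) : ∃ π : ℤ_[2] → ℝ, Continuous π ∧ Function.Injective π ∧
    (∀ a, fr c 0 (π a) = π (a + 1)) ∧ π 0 = 0 ∧ ∀ a, |π a| < qf c 0 := by
  have hex := fun a => II_point h (ad a) (ad_lt a) (ad_step a)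
  choose π hπ using fun a => (hex a).exists
  have huniq : ∀ a x, (∀ k, x ∈ II c k (ad a k)) → x = π a := fun a x hx => (hex a).unique hx (hπ a)
  have hcomm : ∀ a, fr c 0 (π a) = π (a + 1) := by
    intro a
    apply huniq
    intro k
    have e : ad (a+1) k = (ad a k + 1) % 2^k := by simpa using ad_add a 1 k
    have hm : fr c 0 (π a) ∈ II c k (ad a k + 1) := by
      obtain ⟨x, hx, hx'⟩ := hπ a k
      exact ⟨x, hx, by rw [Function.iterate_succ_apply', hx']⟩
    have hl := ad_lt a k
    rcases Nat.lt_or_ge (ad a k + 1) (2^k) with hh | hh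
    · rw [e, Nat.mod_eq_of_lt hh]; exact hm
    · have : ad a k + 1 = 2^k := by omega
      rw [e, this, Nat.mod_self]
      rw [this, ← zero_add (2^k)] at hm
      exact II_wrap h k 0 hm
  have hcommn : ∀ (n : ℕ) a, (fr c 0)^[n] (π a) = π (a + n) := by
    intro n
    induction n with
    | zero => intro a; simp
    | succ n ih => intro a; rw [Function.iterate_succ_apply', ih, hcomm]; push_cast; congr 1; ring
  have small : ∀ a k, ad a k = 0 → |π a| < qf c k := by
    intro a k hk
    have h1 := hπ a (k+1)
    rcases ad_step a k with h2 | h2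
    · rw [h2, hk] at h1
      obtain ⟨x, hx, hx'⟩ := h1
      simp only [Function.iterate_zero, id] at hx'
      rw [← hx']
      exact lt_of_le_of_lt (abs_le.2 hx) (h.pq k)
    · rw [h2, hk, zero_add] at h1
      obtain ⟨x, hx, hx'⟩ := h1
      rw [← hx', iter_fr_abs]
      have := h.range' k (abs_le.2 hx)
      rw [abs_of_pos (by linarith [h.q0 (k+1)])]
      linarith [h.vq k]
  have big : ∀ a k, ad a (k+1) = 2^k → qf c (k+1) ≤ |π a| := by
    intro a k hk
    have h1 := hπ a (k+1)
    rw [hk] at h1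
    obtain ⟨x, hx, hx'⟩ := h1
    rw [← hx', iter_fr_abs]
    have := h.range' k (abs_le.2 hx)
    rw [abs_of_pos (by linarith [h.q0 (k+1)])]
    exact this.1
  refine ⟨π, ?_, ?_, hcomm, ?_, fun a => small a 0 (by have := ad_lt a 0; simp at this; exact this)⟩
  · rw [continuous_iff_continuousAt]
    intro a
    rw [Metric.continuousAt_iff']
    intro ε hε
    obtain ⟨k, hk⟩ := ((diam_tendsto h (ad a) (ad_lt a) (ad_step a)).eventually_lt_const hε).exists
    filter_upwards [ad_nhds a k] with b hb
    refine lt_of_le_of_lt (Metric.dist_le_diam_of_mem (II_compact k _).isBounded ?_ (hπ a k)) hk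
    rw [← hb]; exact hπ b k
  · intro a b hab
    by_contra hne
    have hd : ∃ k, ad a k ≠ ad b k := by
      by_contra hcon; push Not at hcon; exact hne (ad_ext hcon)
    classical
    obtain ⟨k, hk, hmin⟩ : ∃ k, ad a (k+1) ≠ ad b (k+1) ∧ ad a k = ad b k := by
      have h1 := Nat.find_spec hd
      have h2 : Nat.find hd ≠ 0 := by
        intro h0; rw [h0] at h1
        have := ad_lt a 0; have := ad_lt b 0; simp at *; omega
      obtain ⟨k, hk⟩ := Nat.exists_eq_succ_of_ne_zero h2
      refine ⟨k, by rw [hk] at h1; exact h1, ?_⟩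
      have := Nat.find_min hd (m := k) (by omega)
      simpa using this
    -- shift
    set n := 2^k - ad a k with hn
    have hl := ad_lt a k
    have za : ad (a + n) k = 0 := by
      rw [ad_add, hn, Nat.add_sub_cancel' hl.le, Nat.mod_self]
    have zb : ad (b + n) k = 0 := by
      rw [ad_add, ← hmin, hn, Nat.add_sub_cancel' hl.le, Nat.mod_self]
    have hne' : ad (a + n) (k+1) ≠ ad (b + n) (k+1) := by
      rw [ad_add, ad_add]
      intro e
      have e2 : ad a (k+1) ≡ ad b (k+1) [MOD 2^(k+1)] := Nat.ModEq.add_right_cancel' n e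
      have := Nat.ModEq.eq_of_lt_of_lt e2 (ad_lt _ _) (ad_lt _ _)
      exact hk this
    have heq : π (a + n) = π (b + n) := by rw [← hcommn, ← hcommn, hab]
    rcases ad_step (a+n) k with h1 | h1 <;> rcases ad_step (b+n) k with h2 | h2 <;> rw [za] at h1 <;> rw [zb] at h2
    · exact hne' (h1.trans h2.symm)
    · have := small _ _ h1; have := big (b+n) k (by simpa using h2); rw [heq] at *; linarith
    · have := small _ _ h2; have := big (a+n) k (by simpa using h1); rw [heq] at *; linarith
    · exact hne' (h1.trans h2.symm)
  · symm
    apply huniq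
    intro k
    rw [ad_zero]
    exact ⟨0, ⟨by linarith [h.q0 k], (h.q0 k).le⟩, rfl⟩
end

section
open Filter Set Topology
variable {c : ℝ}

theorem fr_diff (c : ℝ) (k : ℕ) : Differentiable ℝ (fr c k) := by
  induction k with
  | zero => simp only [fr]; fun_prop
  | succ k ih => simp only [fr]; exact (ih.comp ih).neg

theorem Feig.expand (h : Feig c) (k : ℕ) : 1 < (deriv (fr c k) (qf c (k+1)))^2 := by
  have q0 := h.q0 k
  have p0 := h.q0 (k+1)
  have hpq := h.pq k
  have hv := h.vq k
  have hpv := h.pv k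
  have hv' := h.v0 (k+1)
  have hv'' := h.vq (k+1)
  have hfv := h.fv k
  have hfp := h.fp k
  set p := qf c (k+1) with hp
  set v := fr c k 0 with hvd
  set v' := fr c (k+1) 0 with hv'd
  obtain ⟨z, ⟨hz1, hz2⟩, hz⟩ : (0:ℝ) ∈ fr c k '' Icc p v := by
    apply intermediate_value_Icc' hpv.le (fr_cont c k).continuousOn
    rw [hfv, hfp]; constructor <;> linarith
  have hpz : p < z := lt_of_le_of_ne hz1 (by rintro rfl; linarith)
  have hzv : z < v := lt_of_le_of_ne hz2 (by rintro rfl; linarith)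
  set g : ℝ → ℝ := fun x => fr c k (fr c k x) with hg
  have hsub : Icc 0 z ⊆ Icc 0 (qf c k) := Icc_subset_Icc le_rfl (by linarith)
  have hmaps : MapsTo (fr c k) (Icc 0 z) (Icc 0 (qf c k)) := by
    intro x hx
    have m1 := (h.anti k).antitoneOn ⟨le_rfl, q0.le⟩ (hsub hx) hx.1
    have m2 := (h.anti k).antitoneOn (hsub hx) ⟨by linarith, by linarith⟩ hx.2
    constructor <;> linarith
  have hD : Dif g (Icc 0 z) := (h.dif k).comp ((h.dif k).mono hsub) hmaps
  set D := (deriv (fr c k) p)^2 with hDd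
  have hder : HasDerivAt g D p := by
    have h1 : HasDerivAt (fr c k) (deriv (fr c k) p) p := (fr_diff c k p).hasDerivAt
    have h2 : HasDerivAt (fr c k) (deriv (fr c k) p) (fr c k p) := by rw [hfp]; exact h1
    have := h2.comp p h1
    rw [hDd, sq]; exact this
  have g0 : g 0 = -v' := hfv
  have gp : g p = p := by simp only [hg, hfp]
  have gz : g z = v := by simp only [hg, hz]; rfl
  have hsl : Tendsto (slope g p) (𝓝[>] p) (𝓝 D) :=
    (hasDerivAt_iff_tendsto_slope.1 hder).mono_left (nhdsWithin_mono _ (fun x hx => ne_of_gt hx))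
  have hid : Tendsto (fun y : ℝ => y) (𝓝[>] p) (𝓝 p) := nhdsWithin_le_nhds
  have hgt : Tendsto g (𝓝[>] p) (𝓝 p) := by
    have := hder.continuousAt.tendsto
    rw [gp] at this
    exact this.mono_left nhdsWithin_le_nhds
  have hle : z * ((p + v') * (v - p)) ≤ (v + v') * D * (p * (z - p)) := by
    refine le_of_tendsto_of_tendsto (((hgt.const_sub v).const_mul (p+v')).const_mul z)
      ((hsl.const_mul (v + v')).mul ((hid.const_sub z).const_mul p)) ?_
    filter_upwards [Ioo_mem_nhdsGT hpz] with y hy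
    have e := hD.2 0 p y z ⟨le_rfl, by linarith⟩ ⟨p0.le, hz1⟩ ⟨by linarith [hy.1], hy.2.le⟩ ⟨by linarith, le_rfl⟩ p0 hy.1 hy.2
    rw [g0, gp, gz] at e
    have hyp : 0 < y - p := by linarith [hy.1]
    rw [slope_def_field, gp]
    have e2 : (y - p) * (z * ((p + v') * (v - g y))) ≤ (y - p) * ((v + v') * ((g y - p) / (y - p)) * (p * (z - y))) := by
      have : (y - p) * ((v + v') * ((g y - p) / (y - p)) * (p * (z - y))) = (v + v') * (g y - p) * (p * (z - y)) := by
        field_simp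
      rw [this]; nlinarith
    exact le_of_mul_le_mul_left e2 hyp
  by_contra hcon
  push Not at hcon
  have hb : (v + v') * D * (p * (z - p)) ≤ (v + v') * 1 * (p * (z - p)) := by
    have : 0 ≤ p * (z - p) := mul_nonneg p0.le (by linarith)
    gcongr
    linarith
  nlinarith [mul_pos (pow_pos p0 2) (sub_pos.2 hzv), mul_pos hv' (pow_pos (sub_pos.2 hpz) 2),
    mul_nonneg hv'.le (mul_nonneg (by linarith : (0:ℝ) ≤ z) (sub_pos.2 hzv).le)]

theorem Feig.up (h : Feig c) (k : ℕ) {x : ℝ} (h1 : -(qf c k) < x) (h2 : x < qf c (k+1)) : x < fr c k x := by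
  cases k with
  | zero =>
    have a1 := h.fq 0
    have a2 := h.fp 0
    have a3 := h.q0 0
    have a4 := h.q0 1
    simp only [fr] at *
    have : (qf c 0 + qf c 1) * (qf c 1 - qf c 0 + 1) = 0 := by linarith
    have e : qf c 1 = qf c 0 - 1 := by
      rcases mul_eq_zero.1 this with h | h <;> linarith
    simp only [zero_add] at *
    nlinarith [mul_pos (by linarith : 0 < x + qf c 0) (by linarith : 0 < qf c 1 - x)]
  | succ k =>
    have p0 := h.q0 (k+1)
    have hp'p := h.pq (k+1)
    rcases le_or_gt 0 x with hx | hx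
    · have := h.anti (k+1) ⟨hx, by linarith⟩ ⟨(h.q0 _).le, hp'p.le⟩ h2
      rw [h.fp (k+1)] at this
      linarith
    · by_contra hcon
      push Not at hcon
      have v0 := h.v0 (k+1)
      set p := qf c (k+1) with hp
      set F := fr c (k+1) with hF
      have hFc : Continuous F := fr_cont c (k+1)
      have Fmp : F (-p) = -p := by rw [hF, fr_even, h.fq]
      obtain ⟨x1, ⟨hx1, hx2⟩, hx3⟩ : (0:ℝ) ∈ (fun x => F x - x) '' Icc x 0 := by
        apply intermediate_value_Icc hx.le (by fun_prop)
        constructor <;> simp <;> linarith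
      simp only at hx3
      have hx0 : x1 < 0 := lt_of_le_of_ne hx2 (by rintro rfl; linarith)
      have hFm : StrictMonoOn F (Icc (-p) 0) := by
        intro s hs t ht hst
        have := h.anti (k+1) (a := -t) (b := -s) ⟨by linarith [ht.2], by linarith [ht.1]⟩ ⟨by linarith [hs.2], by linarith [hs.1]⟩ (by linarith)
        rw [fr_even, fr_even] at this
        exact this
      have hFD : Dif F (Icc (-p) 0) := by
        have hh : Dif (fun x : ℝ => 0 - x) (Icc (-p) 0) := Dif_affine 0 _
        have := (h.dif (k+1)).comp hh (fun x hx => ⟨by linarith [hx.2], by linarith [hx.1]⟩)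
        have e : (fun x => fr c (k+1) (0 - x)) = F := by ext x; rw [zero_sub, fr_even]
        rwa [e] at this
      have below : ∀ s, -p < s → s < x1 → F s < s := by
        intro s hs1 hs2
        have e := hFD.2 (-p) s x1 0 ⟨le_rfl, by linarith⟩ ⟨hs1.le, by linarith⟩ ⟨by linarith, hx2⟩ ⟨by linarith, le_rfl⟩ hs1 hs2 hx0
        have m := hFm ⟨hs1.le, by linarith⟩ ⟨by linarith, hx2⟩ hs2
        rw [Fmp] at e
        rw [show F x1 = x1 by linarith] at e m
        by_contra hc2
        push Not at hc2
        have t1 : (F 0 - -p) * (x1 - F s) * ((s - -p) * (0 - x1)) ≤ (F 0 - -p) * (x1 - s) * ((s - -p) * (0 - x1)) := by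
          have : 0 ≤ (s - -p) * (0 - x1) := mul_nonneg (by linarith) (by linarith)
          have : 0 ≤ F 0 - -p := by linarith
          gcongr
        have t2 : (0 - -p) * (x1 - s) * ((s - -p) * (F 0 - x1)) ≤ (0 - -p) * (x1 - s) * ((F s - -p) * (F 0 - x1)) := by
          have : 0 ≤ F 0 - x1 := by linarith
          have : 0 ≤ (0 - -p) * (x1 - s) := mul_nonneg (by linarith) (by linarith)
          gcongr
        have t3 : 0 < (x1 - s) * (s - -p) * (F 0 * (x1 + p)) := by
          apply mul_pos <;> apply mul_pos <;> linarith
        nlinarith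
      have hder : HasDerivAt F ((deriv (fr c k) p)^2) (-p) := by
        have d1 : HasDerivAt (fr c k) (deriv (fr c k) p) p := (fr_diff c k p).hasDerivAt
        have d2 : HasDerivAt (fr c k) (-(deriv (fr c k) p)) (-p) := by
          have h3 : HasDerivAt (fun x : ℝ => -x) (-1) (-p) := hasDerivAt_neg _
          have h4 : HasDerivAt (fr c k) (deriv (fr c k) p) (-(-p)) := by rw [neg_neg]; exact d1
          have := h4.comp (-p) h3
          have e : (fr c k ∘ fun x : ℝ => -x) = fr c k := by ext x; exact fr_even c k x
          rw [e] at this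
          simpa using this
        have d3 : HasDerivAt (fr c k) (deriv (fr c k) p) (fr c k (-p)) := by rw [fr_even, h.fp k]; exact d1
        have := (d3.comp (-p) d2).neg
        have e : (deriv (fr c k) p)^2 = -(deriv (fr c k) p * -(deriv (fr c k) p)) := by ring
        rw [e]; exact this
      have hsl : Tendsto (slope F (-p)) (𝓝[>] (-p)) (𝓝 ((deriv (fr c k) p)^2)) :=
        (hasDerivAt_iff_tendsto_slope.1 hder).mono_left (nhdsWithin_mono _ (fun x hx => ne_of_gt hx))
      have hle : (deriv (fr c k) p)^2 ≤ 1 := by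
        refine le_of_tendsto hsl ?_
        filter_upwards [Ioo_mem_nhdsGT (show -p < x1 by linarith)] with y hy
        rw [slope_def_field, Fmp, div_le_one (by linarith [hy.1])]
        have := below y hy.1 hy.2
        linarith
      have := h.expand k
      linarith

/-- trapping intervals -/
theorem Feig.trap (h : Feig c) (m : ℝ) (hm : -(qf c 0) < m) : ∃ l r : ℕ → ℝ, l 0 < m ∧ ∀ k, -(qf c k) < l k ∧ l k < 0 ∧ fr c k 0 < r k ∧ r k < qf c k ∧
    ∀ x ∈ Icc (l k) (r k), l k < fr c k x ∧ fr c k x ≤ fr c k 0 := by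
  have : ∀ k, ∃ lr : ℝ × ℝ, (k = 0 → lr.1 < m) ∧ -(qf c k) < lr.1 ∧ lr.1 < 0 ∧ fr c k 0 < lr.2 ∧ lr.2 < qf c k ∧
    ∀ x ∈ Icc (lr.1) (lr.2), lr.1 < fr c k x ∧ fr c k x ≤ fr c k 0 := by
    intro k
    have q0 := h.q0 k
    obtain ⟨r, hr1, hr2⟩ := exists_between (h.vq k)
    have v0 := h.v0 k
    have hfr : -(qf c k) < fr c k r := by
      have := h.anti k ⟨by linarith, hr2.le⟩ ⟨q0.le, le_rfl⟩ hr2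
      rwa [h.fq] at this
    obtain ⟨l, hl1, hl2⟩ := exists_between (show -(qf c k) < min (min (fr c k r) 0) (if k = 0 then m else 0) by
      refine lt_min (lt_min hfr (by linarith)) ?_
      split_ifs with hk
      · rw [hk]; exact hm
      · linarith)
    rw [lt_min_iff, lt_min_iff] at hl2
    refine ⟨(l, r), fun hk => by simpa [hk] using hl2.2, hl1, hl2.1.2, hr1, hr2, fun x hx => ?_⟩
    simp only at hx ⊢
    have hxq : |x| ≤ qf c k := abs_le.2 ⟨by linarith [hx.1], by linarith [hx.2]⟩
    refine ⟨?_, (h.range k hxq).2⟩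
    rcases le_or_gt 0 x with h0 | h0
    · have := (h.anti k).antitoneOn ⟨h0, by linarith [hx.2]⟩ ⟨by linarith, hr2.le⟩ hx.2
      linarith [hl2.1.1]
    · have := h.up k (x := x) (by linarith [hx.1]) (by linarith [h.q0 (k+1)])
      linarith [hx.1]
  choose lr hlr using this
  exact ⟨fun k => (lr k).1, fun k => (lr k).2, (hlr 0).1 rfl, fun k => (hlr k).2⟩

/-- every point of (-p,p) eventually enters the trap under F -/
theorem Feig.enter (h : Feig c) (k : ℕ) {l r : ℝ} (hl0 : l < 0) (hr : fr c k 0 < r)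
    {x : ℝ} (hx : |x| < qf c k) : ∃ n, (fr c k)^[n] x ∈ Ioo l r := by
  by_contra hcon
  push Not at hcon
  set y : ℕ → ℝ := fun n => (fr c k)^[n+1] x with hy
  have hys : ∀ n, y (n+1) = fr c k (y n) := fun n => Function.iterate_succ_apply' _ _ _
  have hin : ∀ n, |(fr c k)^[n] x| < qf c k := by
    intro n
    induction n with
    | zero => simpa
    | succ n ih =>
      rw [Function.iterate_succ_apply']
      have h1 := h.range k ih.le
      have h2 := h.vq k
      have h3 := h.anti k ⟨abs_nonneg _, ih.le⟩ ⟨(h.q0 k).le, le_rfl⟩ ih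
      rw [fr_abs, h.fq] at h3
      rw [abs_lt]; constructor <;> linarith
  have hyl : ∀ n, y n ≤ l := by
    intro n
    by_contra hc
    push Not at hc
    refine hcon (n+1) ⟨hc, ?_⟩
    have := (h.range k (hin n).le).2
    rw [Function.iterate_succ_apply']; linarith
  have hyq : ∀ n, -(qf c k) < y n := fun n => (abs_lt.1 (hin (n+1))).1
  have hmono : Monotone y := monotone_nat_of_le_succ (fun n => by
    rw [hys]; exact (h.up k (hyq n) (by linarith [hyl n, h.q0 (k+1)])).le)
  have hlim := tendsto_atTop_ciSup hmono ⟨l, by rintro _ ⟨n, rfl⟩; exact hyl n⟩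
  set s := ⨆ n, y n
  have hs1 : s ≤ l := le_of_tendsto' hlim hyl
  have hs2 : -(qf c k) < s := lt_of_lt_of_le (hyq 0) (ge_of_tendsto' hlim (fun n => hmono (Nat.zero_le n)))
  have hfix : fr c k s = s := by
    have l1 := ((fr_cont c k).tendsto s).comp hlim
    have l2 := hlim.comp (tendsto_add_atTop_nat 1)
    refine tendsto_nhds_unique l1 ?_
    refine l2.congr (fun n => by simp only [Function.comp, hys])
  have := h.up k hs2 (by linarith [h.q0 (k+1)])
  linarith

/-- pseudo-orbit lemma -/
theorem Feig.pseudo (h : Feig c) (k : ℕ) {l r l' r' : ℝ} (hl : -(qf c k) < l) (hr : r < qf c k)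
    (hl0' : l' < 0) (hr' : fr c (k+1) 0 < r')
    (y : ℕ → ℝ) (hy : ∀ n, y n ∈ Icc l r) (hps : Tendsto (fun n => y (n+1) - fr c k (y n)) atTop (𝓝 0))
    (hnf : ¬ ∃ᶠ n in atTop, -(y n) ∈ Ioo l' r') : Tendsto y atTop (𝓝 (qf c (k+1))) := by
  set f := fr c k with hf
  have hfc : Continuous f := fr_cont c k
  set p := qf c (k+1) with hp
  let S : Set ℝ := {s | MapClusterPt s atTop y}
  have hSI : ∀ s ∈ S, s ∈ Icc l r := fun s hs =>
    isClosed_Icc.mem_of_frequently_of_tendsto (f := id) (b := 𝓝 s)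
      (by
        rw [frequently_iff]
        intro U hU
        obtain ⟨n, hn⟩ := (mapClusterPt_iff_frequently.1 hs U hU).exists
        exact ⟨y n, hn, hy n⟩) tendsto_id
  -- invariance
  have hSf : ∀ s ∈ S, f s ∈ S := by
    intro s hs
    rw [mem_ofPred_eq, mapClusterPt_iff_ultrafilter] at hs ⊢
    obtain ⟨U, hU, hUs⟩ := hs
    refine ⟨U.map (· + 1), ?_, ?_⟩
    · exact (tendsto_map'_iff.2 ((tendsto_add_atTop_nat 1).mono_left hU)) |> fun h => h
    · rw [Ultrafilter.coe_map, tendsto_map'_iff]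
      have h1 := (hfc.tendsto s).comp hUs
      have h2 := (hps.mono_left hU).add h1
      rw [zero_add] at h2
      refine h2.congr (fun n => by simp [Function.comp])
  have hSf' : ∀ s ∈ S, ∃ t ∈ S, f t = s := by
    intro s hs
    rw [mem_ofPred_eq, mapClusterPt_iff_ultrafilter] at hs
    obtain ⟨U, hU, hUs⟩ := hs
    have hUp : ((U.map (fun n => n - 1) : Ultrafilter ℕ) : Filter ℕ) ≤ atTop := by
      exact (tendsto_sub_atTop_nat 1).mono_left hU
    have hb : ((U.map (fun n => y (n - 1)) : Ultrafilter ℝ) : Filter ℝ) ≤ 𝓟 (Icc l r) := by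
      rw [le_principal_iff]
      exact (Filter.Eventually.of_forall (fun n : ℕ => hy (n-1)) : ∀ᶠ n in (U : Filter ℕ), y (n-1) ∈ Icc l r)
    obtain ⟨t, _, ht⟩ := isCompact_Icc.ultrafilter_le_nhds _ hb
    have ht' : Tendsto (fun n => y (n-1)) U (𝓝 t) := ht
    refine ⟨t, ?_, ?_⟩
    · rw [mem_ofPred_eq, mapClusterPt_iff_ultrafilter]
      exact ⟨_, hUp, by rw [Ultrafilter.coe_map, tendsto_map'_iff]; exact ht'⟩
    · have h1 := (hfc.tendsto t).comp ht'
      have h2 : Tendsto (fun n => y (n-1+1) - f (y (n-1))) U (𝓝 0) :=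
        hps.comp ((tendsto_sub_atTop_nat 1).mono_left hU)
      have h3 : Tendsto (fun n => y (n-1+1)) U (𝓝 s) := by
        refine hUs.congr' ?_
        filter_upwards [hU (eventually_ge_atTop 1)] with n hn
        rw [Nat.sub_add_cancel hn]
      have h4 := h3.sub h2
      rw [sub_zero] at h4
      refine tendsto_nhds_unique h1 (h4.congr (fun n => by simp [Function.comp]))
  have hST : ∀ s ∈ S, -s ∉ Ioo l' r' := by
    intro s hs hm
    apply hnf
    have : (fun x : ℝ => -x) ⁻¹' (Ioo l' r') ∈ 𝓝 s := continuous_neg.continuousAt.preimage_mem_nhds (Ioo_mem_nhds hm.1 hm.2)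
    exact mapClusterPt_iff_frequently.1 hs _ this
  have hSp : ∀ s ∈ S, ¬ |s| < p := by
    intro s hs hsp
    obtain ⟨n, hn⟩ := h.enter (k+1) hl0' hr' (x := -s) (by rwa [abs_neg])
    have key : ∀ n, ∀ s ∈ S, ∃ t ∈ S, -t = (fr c (k+1))^[n] (-s) := by
      intro n
      induction n with
      | zero => intro s hs; exact ⟨s, hs, rfl⟩
      | succ n ih =>
        intro s hs
        obtain ⟨t, ht, e⟩ := ih s hs
        refine ⟨f (f t), hSf _ (hSf _ ht), ?_⟩
        rw [Function.iterate_succ_apply', ← e, fr_even]; rfl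
    obtain ⟨t, ht, e⟩ := key n s hs
    exact hST t ht (by rw [e]; exact hn)
  have hSv : ∀ s ∈ S, s ≤ f 0 := by
    intro s hs
    obtain ⟨t, ht, rfl⟩ := hSf' s hs
    have := hSI t ht
    exact (h.range k (abs_le.2 ⟨by linarith [this.1], by linarith [this.2]⟩)).2
  have p0 := h.q0 (k+1)
  have hpq := h.pq k
  have hScl : IsClosed S := isClosed_setOfPred_clusterPt
  have hSne : S.Nonempty := by
    obtain ⟨s, _, hs⟩ := isCompact_Icc.exists_mapClusterPt (f := atTop) (u := y) (s := Icc l r)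
      (le_principal_iff.2 (show ∀ᶠ n in atTop, y n ∈ Icc l r from Filter.Eventually.of_forall hy))
    exact ⟨s, hs⟩
  have hSc : IsCompact S := isCompact_Icc.of_isClosed_subset hScl hSI
  obtain ⟨s0, hs0, hmin⟩ := hSc.exists_isLeast hSne
  have hs0p : -p < s0 := by
    by_contra hcon
    push Not at hcon
    obtain ⟨t, ht, e⟩ := hSf' s0 hs0
    have h1 := hmin ht
    have h2 := hSI t ht
    have h3 := hSp t ht
    rcases le_or_gt p t with h4 | h4
    · have := (h.anti k).antitoneOn ⟨by linarith, by linarith [h2.2]⟩ ⟨(h.v0 k).le, (h.vq k).le⟩ (hSv t ht)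
      rw [h.fv] at this
      have := h.vq (k+1)
      linarith
    · have := h.up k (x := t) (by linarith [h2.1]) h4
      linarith
  have hSeq : ∀ s ∈ S, p ≤ s := by
    intro s hs
    have h1 := hmin hs
    by_contra hcon
    push Not at hcon
    exact hSp s hs (abs_lt.2 ⟨by linarith, hcon⟩)
  have hSpp : ∀ s ∈ S, s = p := by
    intro s hs
    obtain ⟨t, ht, e⟩ := hSf' s hs
    have h1 := hSeq t ht
    have h2 := hSI t ht
    have := (h.anti k).antitoneOn ⟨by linarith, by linarith [h2.2]⟩ ⟨by linarith, by linarith [h2.2]⟩ h1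
    rw [h.fp] at this
    have := hSeq s hs
    linarith
  exact isCompact_Icc.tendsto_nhds_of_unique_mapClusterPt (Filter.Eventually.of_forall hy) (fun s _ hs => hSpp s hs)
end

section
open Filter Set Topology MeasureTheory
variable {c : ℝ}

noncomputable def LL (μ : ℝ) : ℝ × ℝ →L[ℝ] ℝ × ℝ := (0 : ℝ × ℝ →L[ℝ] ℝ).prod (μ • ContinuousLinearMap.snd ℝ ℝ ℝ)

theorem LL_apply (μ : ℝ) (z : ℝ × ℝ) : LL μ z = (0, μ * z.2) := by simp [LL]

theorem null_slice {s : Set (ℝ × ℝ)} (hm : MeasurableSet s) (h : ∀ v x x', (v, x) ∈ s → (v, x') ∈ s → x = x') :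
    volume s = 0 := by
  rw [Measure.volume_eq_prod, Measure.measure_prod_null hm]
  refine Filter.Eventually.of_forall (fun v => ?_)
  refine Set.Subsingleton.measure_zero (fun x hx y hy => h v x y hx hy) _

theorem saddle_null {F : ℝ × ℝ → ℝ × ℝ} (hF : Continuous F) {P : ℝ × ℝ} {μ : ℝ} (hd : HasStrictFDerivAt F (LL μ) P)
    (hμ : 1 < |μ|) : ∃ ρ > 0, volume {z | ∀ m, F^[m] z ∈ Metric.closedBall P ρ} = 0 := by
  set κ : ℝ := (|μ| - 1) / 2 ⊓ 1 / 2 with hκ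
  have k0 : 0 < κ := lt_min (by linarith) (by norm_num)
  have k1 : κ ≤ (|μ| - 1) / 2 := min_le_left _ _
  have k2 : κ ≤ 1/2 := min_le_right _ _
  obtain ⟨s, hs, hsl⟩ := hd.approximates_deriv_on_nhds (c := ⟨κ, k0.le⟩) (Or.inr k0)
  obtain ⟨ρ, hρ, hρs⟩ := Metric.nhds_basis_closedBall.mem_iff.1 hs
  refine ⟨ρ, hρ, null_slice ?_ ?_⟩
  · have : {z | ∀ m, F^[m] z ∈ Metric.closedBall P ρ} = ⋂ m, (F^[m]) ⁻¹' Metric.closedBall P ρ := by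
      ext z; simp
    rw [this]
    exact MeasurableSet.iInter (fun m => ((hF.iterate m).measurable) Metric.isClosed_closedBall.measurableSet)
  · intro v x x' hz hz'
    by_contra hne
    have step : ∀ z ∈ Metric.closedBall P ρ, ∀ z' ∈ Metric.closedBall P ρ, |z.1 - z'.1| ≤ |z.2 - z'.2| →
        |(F z).1 - (F z').1| ≤ |(F z).2 - (F z').2| ∧ (1 + κ) * |z.2 - z'.2| ≤ |(F z).2 - (F z').2| := by
      intro z hz z' hz' hle
      have e := hsl z (hρs hz) z' (hρs hz')
      have hn : ‖z - z'‖ = |z.2 - z'.2| := by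
        rw [Prod.norm_def]; simp only [Prod.fst_sub, Prod.snd_sub, Real.norm_eq_abs]
        exact max_eq_right hle
      rw [hn, LL_apply] at e
      have e' : ‖F z - F z' - (0, μ * (z - z').2)‖ ≤ κ * |z.2 - z'.2| := e
      have e1 := (norm_fst_le _).trans e'
      have e2 := (norm_snd_le _).trans e'
      simp only [Prod.fst_sub, Prod.snd_sub, Real.norm_eq_abs, sub_zero] at e1 e2
      have e3 : |μ| * |z.2 - z'.2| - |(F z).2 - (F z').2| ≤ κ * |z.2 - z'.2| := by
        rw [← abs_mul]
        have := abs_sub_abs_le_abs_sub (μ * (z.2 - z'.2)) ((F z).2 - (F z').2)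
        rw [abs_sub_comm (μ * (z.2 - z'.2))] at this
        linarith
      have : 0 ≤ |z.2 - z'.2| := abs_nonneg _
      constructor <;> nlinarith
    have key : ∀ m, |(F^[m] (v,x)).1 - (F^[m] (v,x')).1| ≤ |(F^[m] (v,x)).2 - (F^[m] (v,x')).2| ∧
        (1+κ)^m * |x - x'| ≤ |(F^[m] (v,x)).2 - (F^[m] (v,x')).2| := by
      intro m
      induction m with
      | zero => simp
      | succ m ih =>
        have := step _ (hz m) _ (hz' m) ih.1
        rw [Function.iterate_succ_apply', Function.iterate_succ_apply']
        refine ⟨this.1, le_trans ?_ this.2⟩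
        rw [pow_succ]; nlinarith [ih.2]
    have hx0 : 0 < |x - x'| := abs_pos.2 (sub_ne_zero.2 hne)
    obtain ⟨m, hm⟩ := pow_unbounded_of_one_lt (2 * ρ / |x - x'|) (show 1 < 1 + κ by linarith)
    rw [div_lt_iff₀ hx0] at hm
    have h1 := (key m).2
    have h2 : |(F^[m] (v,x)).2 - (F^[m] (v,x')).2| ≤ 2 * ρ := by
      have a1 := Metric.mem_closedBall.1 (hz m)
      have a2 := Metric.mem_closedBall.1 (hz' m)
      have a3 := dist_triangle_right (F^[m] (v,x)) (F^[m] (v,x')) P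
      have a4 : |(F^[m] (v,x)).2 - (F^[m] (v,x')).2| ≤ dist (F^[m] (v,x)) (F^[m] (v,x')) := by
        rw [Prod.dist_eq, ← Real.dist_eq]; exact le_max_right _ _
      linarith
    linarith

section
variable {A B : ℝ × ℝ → ℝ} {Φ : ℝ × ℝ → ℝ × ℝ}

theorem Phi_strict (hA : ContDiff ℝ 1 A) (hB : ContDiff ℝ 1 B)
    (hΦ : Φ = fun z => (z.1^2 * A z, fr c 0 z.2 + z.1^2 * B z)) (x : ℝ) :
    HasStrictFDerivAt Φ (LL (-2 * x)) (0, x) := by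
  have dA := hA.contDiffAt.hasStrictFDerivAt (x := ((0:ℝ), x)) one_ne_zero
  have dB := hB.contDiffAt.hasStrictFDerivAt (x := ((0:ℝ), x)) one_ne_zero
  have d1 : HasStrictFDerivAt (fun z : ℝ × ℝ => z.1) (ContinuousLinearMap.fst ℝ ℝ ℝ) ((0:ℝ), x) := hasStrictFDerivAt_fst
  have d2 : HasStrictFDerivAt (fun z : ℝ × ℝ => z.2) (ContinuousLinearMap.snd ℝ ℝ ℝ) ((0:ℝ), x) := hasStrictFDerivAt_snd
  have e := ((d1.pow 2).mul dA).prodMk (((d2.pow 2).const_sub c).add ((d1.pow 2).mul dB))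
  rw [hΦ]
  simp only [fr]
  refine e.congr_fderiv ?_
  ext <;> simp [LL]

theorem Phi_zero (hΦ : Φ = fun z => (z.1^2 * A z, fr c 0 z.2 + z.1^2 * B z)) (n : ℕ) (x : ℝ) :
    Φ^[n] (0, x) = (0, (fr c 0)^[n] x) := by
  induction n with
  | zero => rfl
  | succ n ih => rw [Function.iterate_succ_apply', ih, Function.iterate_succ_apply', hΦ]; simp

theorem Phi_iter (hA : ContDiff ℝ 1 A) (hB : ContDiff ℝ 1 B)
    (hΦ : Φ = fun z => (z.1^2 * A z, fr c 0 z.2 + z.1^2 * B z)) (n : ℕ) (x : ℝ) :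
    ∃ μ, HasDerivAt (fr c 0)^[n+1] μ x ∧ HasStrictFDerivAt Φ^[n+1] (LL μ) (0, x) := by
  have dQ : ∀ y, HasDerivAt (fr c 0) (-2 * y) y := by
    intro y
    have := ((hasDerivAt_id y).pow 2).const_sub c
    simpa [fr] using this
  induction n with
  | zero =>
    simp only [zero_add, Function.iterate_one]
    exact ⟨_, dQ x, Phi_strict hA hB hΦ x⟩
  | succ n ih =>
    obtain ⟨μ, h1, h2⟩ := ih
    have d := dQ ((fr c 0)^[n+1] x)
    refine ⟨_, by rw [Function.iterate_succ']; exact d.comp x h1, ?_⟩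
    rw [Function.iterate_succ']
    have h3 := Phi_strict hA hB hΦ ((fr c 0)^[n+1] x)
    rw [← Phi_zero hΦ (n+1) x] at h3
    refine (h3.comp _ h2).congr_fderiv ?_
    ext <;> simp [LL]

theorem Phi_cont (hA : ContDiff ℝ 1 A) (hB : ContDiff ℝ 1 B)
    (hΦ : Φ = fun z => (z.1^2 * A z, fr c 0 z.2 + z.1^2 * B z)) : Continuous Φ := by
  have := hA.continuous
  have := hB.continuous
  have := fr_cont c 0
  rw [hΦ]; fun_prop

theorem nosq (k : ℕ) : ((-1:ℝ)^k) * ((-1:ℝ)^k) = 1 := by rw [← mul_pow]; simp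

theorem fr_sgn (c : ℝ) (k j : ℕ) (x : ℝ) : fr c k ((-1)^j * x) = fr c k x := by
  rcases neg_one_pow_eq_or ℝ j with h | h <;> rw [h]
  · rw [one_mul]
  · rw [neg_one_mul, fr_even]

theorem Phi_saddle (h : Feig c) (hA : ContDiff ℝ 1 A) (hB : ContDiff ℝ 1 B)
    (hΦ : Φ = fun z => (z.1^2 * A z, fr c 0 z.2 + z.1^2 * B z)) (j : ℕ) :
    ∃ ρ > 0, volume {z | ∀ m, (Φ^[2^j])^[m] z ∈ Metric.closedBall ((0:ℝ), (-1)^j * qf c (j+1)) ρ} = 0 := by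
  obtain ⟨n, hn⟩ : ∃ n, 2^j = n + 1 := Nat.exists_eq_succ_of_ne_zero (by positivity)
  obtain ⟨μ, h1, h2⟩ := Phi_iter hA hB hΦ n ((-1)^j * qf c (j+1))
  rw [← hn] at h1 h2
  refine saddle_null ((Phi_cont hA hB hΦ).iterate _) h2 ?_
  have e := h.expand j
  set p := qf c (j+1)
  have d1 : HasDerivAt (fun x => (-1)^j * (fr c 0)^[2^j] ((-1)^j * x)) ((-1)^j * (μ * ((-1)^j * 1))) p := by
    exact (h1.comp p ((hasDerivAt_id p).const_mul ((-1)^j))).const_mul _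
  have e2 : (fun x => (-1)^j * (fr c 0)^[2^j] ((-1)^j * x)) = fr c j := by
    ext x
    rw [iter_fr, fr_sgn, ← mul_assoc, nosq, one_mul]
  rw [e2] at d1
  have e3 : (-1)^j * (μ * ((-1)^j * 1)) = μ := by
    have := nosq j
    linear_combination μ * this
  rw [e3] at d1
  rw [d1.deriv] at e
  exact (one_lt_sq_iff_one_lt_abs _).1 e

theorem margin {f : ℝ → ℝ} (hf : Continuous f) {l r : ℝ} (h : ∀ x ∈ Icc l r, l < f x ∧ f x < r) :
    ∃ δ > 0, ∀ x ∈ Icc l r, l + δ < f x ∧ f x < r - δ := by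
  rcases (Icc l r).eq_empty_or_nonempty with he | hne
  · exact ⟨1, one_pos, by simp [he]⟩
  · obtain ⟨x0, hx0, hm⟩ := isCompact_Icc.exists_isMinOn hne (f := fun x => min (f x - l) (r - f x)) (by fun_prop)
    have hp : 0 < min (f x0 - l) (r - f x0) := lt_min (by linarith [(h x0 hx0).1]) (by linarith [(h x0 hx0).2])
    refine ⟨min (f x0 - l) (r - f x0) / 2, by linarith, fun x hx => ?_⟩
    have h1 : min (f x0 - l) (r - f x0) ≤ min (f x - l) (r - f x) := hm hx
    have := min_le_left (f x - l) (r - f x)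
    have := min_le_right (f x - l) (r - f x)
    constructor <;> linarith

theorem PD2D (h : Feig c) (hA : ContDiff ℝ 1 A) (hB : ContDiff ℝ 1 B)
    (hΦ : Φ = fun z => (z.1^2 * A z, fr c 0 z.2 + z.1^2 * B z))
    (hnull : ∀ s : Set (ℝ × ℝ), volume s = 0 → volume (Φ ⁻¹' s) = 0) : ∃ S, IsPDCantorAttractor Φ S := by
  obtain ⟨π, πc, πi, πs, π0, πq⟩ := exists_pi h
  have hΦc := Phi_cont hA hB hΦ
  set J : ℤ_[2] → ℝ × ℝ := fun a => (0, π a) with hJ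
  have Jc : Continuous J := by fun_prop
  have Ji : Function.Injective J := fun a b e => πi (Prod.mk.inj e).2
  have Js : ∀ a, Φ (J a) = J (a + 1) := by
    intro a
    have := Phi_zero hΦ 1 (π a)
    simp only [Function.iterate_one] at this
    rw [hJ]; simp only; rw [this, πs]
  -- minimum
  obtain ⟨_, ⟨a0, rfl⟩, hmin⟩ := (isCompact_range πc).exists_isLeast (range_nonempty π)
  obtain ⟨l, r, hl0, hlr⟩ := h.trap (π a0) (abs_lt.1 (πq a0)).1
  have q0 := h.q0 0
  obtain ⟨δ, hδ, hδm⟩ := margin (fr_cont c 0) (l := l 0) (r := r 0) (fun x hx =>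
    ⟨((hlr 0).2.2.2.2 x hx).1, lt_of_le_of_lt ((hlr 0).2.2.2.2 x hx).2 (hlr 0).2.2.1⟩)
  have Kc : IsCompact ((Icc (-1:ℝ) 1) ×ˢ (Icc (-(qf c 0)) (qf c 0))) := isCompact_Icc.prod isCompact_Icc
  obtain ⟨MA, hMA⟩ := Kc.exists_bound_of_continuousOn hA.continuous.continuousOn
  obtain ⟨MB, hMB⟩ := Kc.exists_bound_of_continuousOn hB.continuous.continuousOn
  set M := |MA| + |MB| + 1 with hM
  have M1 : 1 ≤ M := by have := abs_nonneg MA; have := abs_nonneg MB; linarith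
  obtain ⟨ε, hε0, hε⟩ : ∃ ε : ℝ, 0 < ε ∧ ε ≤ 1 ∧ M * ε ≤ 1/2 ∧ M * ε ^ 2 ≤ δ := by
    refine ⟨min (1 / (2 * M)) (δ), lt_min (by positivity) hδ, ?_⟩
    have e1 := min_le_left (1 / (2 * M)) δ
    have e2 := min_le_right (1 / (2 * M)) δ
    set ε := min (1 / (2 * M)) δ with hε
    have e0 : 0 < ε := lt_min (by positivity) hδ
    have e3 : M * ε ≤ 1/2 := by
      calc M * ε ≤ M * (1 / (2 * M)) := by gcongr
        _ = 1/2 := by field_simp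
    refine ⟨by nlinarith, e3, by nlinarith⟩
  obtain ⟨hε1, hε2, hε3⟩ := hε
  set U : Set (ℝ × ℝ) := Ioo (-ε) ε ×ˢ Ioo (l 0) (r 0) with hU
  have hUK : ∀ z ∈ U, z ∈ (Icc (-1:ℝ) 1) ×ˢ (Icc (-(qf c 0)) (qf c 0)) := by
    rintro z ⟨⟨z1, z2⟩, ⟨z3, z4⟩⟩
    have := hlr 0
    exact ⟨⟨by linarith, by linarith⟩, ⟨by linarith, by linarith⟩⟩
  have hstep : ∀ z ∈ U, Φ z ∈ U ∧ |(Φ z).1| ≤ |z.1| / 2 := by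
    intro z hz
    have hzK := hUK z hz
    have a1 := hMA z hzK
    have b1 := hMB z hzK
    have a2 : |A z| ≤ M := by rw [← Real.norm_eq_abs]; have := le_abs_self MA; have := abs_nonneg MB; linarith
    have b2 : |B z| ≤ M := by rw [← Real.norm_eq_abs]; have := le_abs_self MB; have := abs_nonneg MA; linarith
    have z1 : |z.1| < ε := abs_lt.2 hz.1
    have hx := hδm z.2 ⟨hz.2.1.le, hz.2.2.le⟩
    have v1 : |z.1^2 * A z| ≤ |z.1| / 2 := by
      rw [abs_mul, abs_pow]
      have : |z.1|^2 * |A z| ≤ |z.1|^2 * M := by gcongr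
      nlinarith [abs_nonneg z.1]
    have v2 : |z.1^2 * B z| ≤ δ := by
      rw [abs_mul, abs_pow]
      calc |z.1|^2 * |B z| ≤ ε^2 * M := by gcongr
        _ ≤ δ := by linarith
    have v3 := abs_le.1 v2
    rw [hΦ]
    refine ⟨⟨abs_lt.1 (by simp only; linarith [abs_nonneg z.1]), ?_⟩, v1⟩
    simp only [mem_Ioo]
    constructor <;> linarith
  -- null set
  have hsad := Phi_saddle h hA hB hΦ
  choose ρ hρ hρn using hsad
  have hnulln : ∀ (n : ℕ) (s : Set (ℝ × ℝ)), volume s = 0 → volume (Φ^[n] ⁻¹' s) = 0 := by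
    intro n
    induction n with
    | zero => intro s hs; simpa using hs
    | succ n ih =>
      intro s hs
      rw [Function.iterate_succ', preimage_comp]
      exact ih _ (hnull s hs)
  have hae : ∀ᵐ z : ℝ × ℝ, ∀ j N : ℕ, ¬ (∀ m, (Φ^[2^j])^[m] (Φ^[N] z) ∈ Metric.closedBall ((0:ℝ), (-1)^j * qf c (j+1)) (ρ j)) := by
    rw [ae_all_iff]; intro j
    rw [ae_all_iff]; intro N
    have := hnulln N _ (hρn j)
    rw [ae_iff]
    convert this using 2
    ext z; simp
  refine ⟨range J, isCompact_range Jc, ?_, ?_, U, isOpen_Ioo.prod isOpen_Ioo, ?_, ?_⟩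
  · ext z
    constructor
    · rintro ⟨_, ⟨a, rfl⟩, rfl⟩; exact ⟨a+1, (Js a).symm⟩
    · rintro ⟨a, rfl⟩
      exact ⟨J (a - 1), ⟨_, rfl⟩, by rw [Js, sub_add_cancel]⟩
  · let e := (Continuous.homeoOfEquivCompactToT2 (f := Equiv.ofInjective J Ji) (by
      rw [continuous_induced_rng]; exact Jc))
    refine ⟨e.symm, ?_⟩
    rintro ⟨_, ⟨a, rfl⟩⟩ hx
    have e1 : (⟨Φ (J a), hx⟩ : range J) = e (a + 1) := by
      apply Subtype.ext; exact Js a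
    have e2 : (⟨J a, ⟨a, rfl⟩⟩ : range J) = e a := rfl
    rw [e1, e2]; simp
  · rintro _ ⟨a, rfl⟩
    refine ⟨⟨by simp [hJ]; linarith, by simp [hJ]; linarith⟩, ?_, ?_⟩
    · exact lt_of_lt_of_le hl0 (hmin ⟨a, rfl⟩)
    · have e1 : π a = fr c 0 (π (a - 1)) := by rw [πs, sub_add_cancel]
      have e2 : fr c 0 (π (a-1)) ≤ fr c 0 0 := by simp only [fr]; nlinarith [sq_nonneg (π (a-1))]
      have := (hlr 0).2.2.1
      simp only [hJ]; linarith
  · filter_upwards [hae] with z hz hzU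
    have orb : ∀ n, Φ^[n] z ∈ U ∧ |(Φ^[n] z).1| ≤ ε * (1/2)^n := by
      intro n
      induction n with
      | zero => exact ⟨hzU, by simpa using (abs_lt.2 hzU.1).le⟩
      | succ n ih =>
        rw [Function.iterate_succ_apply']
        have := hstep _ ih.1
        refine ⟨this.1, ?_⟩
        rw [pow_succ]; linarith [this.2, ih.2]
    have vt : Tendsto (fun n => (Φ^[n] z).1) atTop (𝓝 0) := by
      rw [tendsto_zero_iff_abs_tendsto_zero]
      refine squeeze_zero (fun n => abs_nonneg _) (fun n => (orb n).2) ?_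
      simpa using (tendsto_pow_atTop_nhds_zero_of_lt_one (r := (1/2:ℝ)) (by norm_num) (by norm_num)).const_mul ε
    have Gt : ∀ n, Tendsto (fun k => (Φ^[n] (Φ^[k] z)).2 - (fr c 0)^[n] (Φ^[k] z).2) atTop (𝓝 0) := by
      intro n
      set G : ℝ × ℝ → ℝ := fun w => (Φ^[n] w).2 - (fr c 0)^[n] w.2 with hG
      have Gc : Continuous G := by
        have := hΦc.iterate n; have := iter_cont c n
        fun_prop
      have G0 : ∀ x, G (0, x) = 0 := by intro x; simp only [hG, Phi_zero hΦ]; ring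
      have uc := Kc.uniformContinuousOn_of_continuous Gc.continuousOn
      rw [Metric.uniformContinuousOn_iff] at uc
      rw [Metric.tendsto_atTop]
      intro η hη
      obtain ⟨d, hd, huc⟩ := uc η hη
      obtain ⟨N, hN⟩ := Metric.tendsto_atTop.1 vt d hd
      refine ⟨N, fun k hk => ?_⟩
      have k1 := hUK _ (orb k).1
      have := huc (Φ^[k] z) k1 (0, (Φ^[k] z).2) ⟨⟨by norm_num, by norm_num⟩, k1.2⟩ (by
        have := hN k hk
        rw [Prod.dist_eq]; simpa using this)
      rwa [G0] at this
    have V : ∀ j, ∃ N, ∀ m, (-1)^j * (Φ^[N + m * 2^j] z).2 ∈ Icc (l j) (r j) := by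
      intro j
      induction j with
      | zero => exact ⟨0, fun m => by
          have := (orb (0 + m * 2^0)).1.2
          rw [pow_zero, one_mul]; exact ⟨this.1.le, this.2.le⟩⟩
      | succ j ih =>
        obtain ⟨N, hN⟩ := ih
        have tN : Tendsto (fun m : ℕ => N + m * 2^j) atTop atTop :=
          tendsto_atTop_mono (fun m => (Nat.le_mul_of_pos_right m (by positivity)).trans (Nat.le_add_left _ _)) tendsto_id
        set y : ℕ → ℝ := fun m => (-1)^j * (Φ^[N + m * 2^j] z).2 with hy
        have hps : Tendsto (fun n => y (n+1) - fr c j (y n)) atTop (𝓝 0) := by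
          have := ((Gt (2^j)).comp tN).const_mul ((-1)^j)
          rw [mul_zero] at this
          refine this.congr (fun m => ?_)
          simp only [hy, Function.comp]
          rw [fr_sgn, iter_fr, mul_sub, ← mul_assoc ((-1:ℝ)^j), nosq, one_mul, ← Function.iterate_add_apply]
          congr 4; ring
        have hfq : ∃ᶠ n in atTop, -(y n) ∈ Ioo (l (j+1)) (r (j+1)) := by
          by_contra hnf
          have hyt := h.pseudo j (hlr j).1 (hlr j).2.2.2.1 (hlr (j+1)).2.1 (hlr (j+1)).2.2.1 y hN hps hnf
          have hxt : Tendsto (fun m => (Φ^[N + m * 2^j] z)) atTop (𝓝 ((0:ℝ), (-1)^j * qf c (j+1))) := by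
            have h1 := (vt.comp tN).prodMk_nhds (hyt.const_mul ((-1)^j))
            refine h1.congr (fun m => ?_)
            simp only [hy, Function.comp]
            rw [← mul_assoc, nosq, one_mul]
          obtain ⟨m0, hm0⟩ := eventually_atTop.1 (hxt.eventually (Metric.closedBall_mem_nhds _ (hρ j)))
          refine hz j (N + m0 * 2^j) (fun m => ?_)
          have := hm0 (m0 + m) (by omega)
          rw [← Function.iterate_mul, ← Function.iterate_add_apply]
          have e : 2^j * m + (N + m0 * 2^j) = N + (m0 + m) * 2^j := by ring
          rw [e]; exact this
        obtain ⟨δ', hδ', hm'⟩ := margin (fr_cont c (j+1)) (l := l (j+1)) (r := r (j+1)) (fun x hx =>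
          ⟨((hlr (j+1)).2.2.2.2 x hx).1, lt_of_le_of_lt ((hlr (j+1)).2.2.2.2 x hx).2 (hlr (j+1)).2.2.1⟩)
        obtain ⟨n0, hn0⟩ := Metric.tendsto_atTop.1 (Gt (2^(j+1))) δ' hδ'
        obtain ⟨m, hm1, hm2⟩ := (hfq.and_eventually (tN.eventually_ge_atTop n0)).exists
        refine ⟨N + m * 2^j, fun i => ?_⟩
        induction i with
        | zero =>
          have : (-1:ℝ)^(j+1) * (Φ^[N + m * 2^j + 0 * 2^(j+1)] z).2 = -(y m) := by
            simp only [hy, zero_mul, add_zero]; ring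
          rw [this]; exact ⟨hm1.1.le, hm1.2.le⟩
        | succ i ih =>
          set k := N + m * 2^j + i * 2^(j+1) with hk
          have e : N + m * 2^j + (i+1) * 2^(j+1) = 2^(j+1) + k := by rw [hk]; ring
          rw [e, Function.iterate_add_apply]
          have g1 := hn0 k (by have : n0 ≤ N + m * 2^j := hm2
                               rw [hk]; exact this.trans (Nat.le_add_right _ _))
          rw [Real.dist_eq, sub_zero, iter_fr] at g1
          have g2 := hm' _ ih
          rw [fr_sgn] at g2
          have g3 : |(-1:ℝ)^(j+1) * (Φ^[2^(j+1)] (Φ^[k] z)).2 - fr c (j+1) (Φ^[k] z).2| < δ' := by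
            have : (-1:ℝ)^(j+1) * (Φ^[2^(j+1)] (Φ^[k] z)).2 - fr c (j+1) (Φ^[k] z).2 =
              (-1:ℝ)^(j+1) * ((Φ^[2^(j+1)] (Φ^[k] z)).2 - (-1:ℝ)^(j+1) * fr c (j+1) (Φ^[k] z).2) := by
              rw [mul_sub, ← mul_assoc ((-1:ℝ)^(j+1)) ((-1:ℝ)^(j+1)), nosq, one_mul]
            rw [this, abs_mul, abs_pow, abs_neg, abs_one, one_pow, one_mul]
            exact g1
          have g4 := abs_lt.1 g3
          constructor <;> linarith
    refine ⟨J 0, ?_, ⟨0, rfl⟩⟩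
    rw [mem_omegaLimit_singleton_iff_mapClusterPt, mapClusterPt_iff_frequently]
    intro s hs
    obtain ⟨η, hη, hηs⟩ := Metric.mem_nhds_iff.1 hs
    obtain ⟨j, hj⟩ := (h.q_tendsto.eventually_lt_const hη).exists
    obtain ⟨N, hN⟩ := V j
    have tN : Tendsto (fun m : ℕ => N + m * 2^j) atTop atTop :=
      tendsto_atTop_mono (fun m => (Nat.le_mul_of_pos_right m (by positivity)).trans (Nat.le_add_left _ _)) tendsto_id
    have ev : ∀ᶠ m in atTop, Φ^[N + m * 2^j] z ∈ s := by
      filter_upwards [(vt.comp tN).eventually (Metric.ball_mem_nhds 0 hη)] with m hm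
      apply hηs
      rw [Metric.mem_ball, Prod.dist_eq]
      refine max_lt ?_ ?_
      · simpa [hJ] using hm
      · have hh := hN m
        have h2 := hlr j
        have : |(-1)^j * (Φ^[N + m * 2^j] z).2| < η := by
          rw [abs_lt]; constructor <;> linarith [hh.1, hh.2]
        rw [abs_mul, abs_pow, abs_neg, abs_one, one_pow, one_mul] at this
        simpa [hJ, π0] using this
    exact tN.frequently ev.frequently
end
end

section
open Filter Set Topology MeasureTheory

theorem null1 {g : ℝ → ℝ} (hg : AnalyticOnNhd ℝ g univ) {x : ℝ} (hx : g x ≠ 0) :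
    volume {y | g y = 0} = 0 := by
  have h1 := hg.preimage_zero_mem_codiscreteWithin (x := x) hx (mem_univ _) isConnected_univ
  have h2 := ae_restrict_le_codiscreteWithin (μ := (volume : Measure ℝ)) MeasurableSet.univ h1
  rw [Measure.restrict_univ] at h2
  rw [mem_ae_iff] at h2
  convert h2 using 2
  ext y; simp

theorem null2 {d : ℝ × ℝ → ℝ} (hd : AnalyticOnNhd ℝ d univ) {z : ℝ × ℝ} (hz : d z ≠ 0) :
    volume {y | d y = 0} = 0 := by
  have hc : Continuous d := continuousOn_univ.1 hd.continuousOn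
  have hm : MeasurableSet {y | d y = 0} := (isClosed_eq hc continuous_const).measurableSet
  rw [Measure.volume_eq_prod]
  rw [Measure.measure_prod_null hm]
  have h1 : volume {w | d (w, z.2) = 0} = 0 := by
    refine null1 (g := fun w => d (w, z.2)) (x := z.1) ?_ hz
    exact fun w _ => (hd (w, z.2) (mem_univ _)).comp (f := fun w : ℝ => (w, z.2)) (by fun_prop)
  have h2 : ∀ᵐ w : ℝ, d (w, z.2) ≠ 0 := by
    rw [ae_iff]; simpa using h1
  filter_upwards [h2] with w hw
  refine null1 (g := fun b => d (w, b)) (x := z.2) ?_ hw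
  exact fun b _ => (hd (w, b) (mem_univ _)).comp (f := fun b : ℝ => (w, b)) (by fun_prop)

theorem null_pre {f : ℝ × ℝ → ℝ × ℝ} (hf : AnalyticOnNhd ℝ f univ) (z : ℝ × ℝ) {a a' : ℝ}
    (ha : a ≠ 0) (ha' : a' ≠ 0)
    (h1 : HasDerivAt (fun t => (f (t, z.2)).1) a z.1)
    (h2 : HasDerivAt (fun t => (f (z.1, t)).2) a' z.2)
    (h3 : ∀ t, (f (t, z.2)).2 = (f z).2) (s : Set (ℝ × ℝ)) (hs : volume s = 0) :
    volume (f ⁻¹' s) = 0 := by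
  set d : ℝ × ℝ → ℝ := fun y => (fderiv ℝ f y (1,0)).1 * (fderiv ℝ f y (0,1)).2
    - (fderiv ℝ f y (0,1)).1 * (fderiv ℝ f y (1,0)).2 with hdd
  have hfd : AnalyticOnNhd ℝ (fderiv ℝ f) univ := hf.fderiv
  have hdf : Differentiable ℝ f := fun y => (hf y (mem_univ _)).differentiableAt
  have hp : ∀ v : ℝ × ℝ, AnalyticOnNhd ℝ (fun y => fderiv ℝ f y v) univ := fun v y hy =>
    ((ContinuousLinearMap.apply ℝ (ℝ × ℝ) v).analyticAt _).comp (hfd y hy)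
  have hd : AnalyticOnNhd ℝ d univ := by
    intro y hy
    have e1 := hp (1,0) y hy
    have e2 := hp (0,1) y hy
    have a1 := ((ContinuousLinearMap.fst ℝ ℝ ℝ).analyticAt _).comp (f := fun y => fderiv ℝ f y (1,0)) (x := y) e1
    have a2 := ((ContinuousLinearMap.snd ℝ ℝ ℝ).analyticAt _).comp (f := fun y => fderiv ℝ f y (1,0)) (x := y) e1
    have b1 := ((ContinuousLinearMap.fst ℝ ℝ ℝ).analyticAt _).comp (f := fun y => fderiv ℝ f y (0,1)) (x := y) e2
    have b2 := ((ContinuousLinearMap.snd ℝ ℝ ℝ).analyticAt _).comp (f := fun y => fderiv ℝ f y (0,1)) (x := y) e2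
    exact (a1.mul b2).sub (b1.mul a2)
  have c1 : HasDerivAt (fun t => f (t, z.2)) (fderiv ℝ f z (1,0)) z.1 := by
    have := (hdf z).hasFDerivAt.comp_hasDerivAt (x := z.1) (f := fun t : ℝ => (t, z.2)) (f' := (1,0))
      ((hasDerivAt_id _).prodMk (hasDerivAt_const _ _))
    exact this
  have c2 : HasDerivAt (fun t => f (z.1, t)) (fderiv ℝ f z (0,1)) z.2 := by
    have := (hdf z).hasFDerivAt.comp_hasDerivAt (x := z.2) (f := fun t : ℝ => (z.1, t)) (f' := (0,1))
      ((hasDerivAt_const _ _).prodMk (hasDerivAt_id _))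
    exact this
  have d1 : (fderiv ℝ f z (1,0)).1 = a := by
    have := (ContinuousLinearMap.fst ℝ ℝ ℝ).hasFDerivAt.comp_hasDerivAt _ c1
    exact this.unique h1
  have d2 : (fderiv ℝ f z (0,1)).2 = a' := by
    have := (ContinuousLinearMap.snd ℝ ℝ ℝ).hasFDerivAt.comp_hasDerivAt _ c2
    exact this.unique h2
  have d3 : (fderiv ℝ f z (1,0)).2 = 0 := by
    have := (ContinuousLinearMap.snd ℝ ℝ ℝ).hasFDerivAt.comp_hasDerivAt _ c1
    refine this.unique ?_
    have e : (⇑(ContinuousLinearMap.snd ℝ ℝ ℝ) ∘ fun t => f (t, z.2)) = fun _ => (f z).2 := by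
      funext t; exact h3 t
    rw [e]; exact hasDerivAt_const _ _
  have hdz : d z ≠ 0 := by
    simp only [hdd, d1, d2, d3, mul_zero, sub_zero]; exact mul_ne_zero ha ha'
  have hn := null2 hd hdz
  have hsplit : f ⁻¹' s ⊆ {y | d y = 0} ∪ (f ⁻¹' s ∩ {y | d y ≠ 0}) := by
    intro y hy
    by_cases h : d y = 0
    · exact Or.inl h
    · exact Or.inr ⟨hy, h⟩
  refine measure_mono_null hsplit (measure_union_null hn ?_)
  apply measure_null_of_locally_null
  rintro y ⟨-, hy⟩
  have inj : Function.Injective (fderiv ℝ f y) := by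
    rw [injective_iff_map_eq_zero]
    rintro ⟨p, q⟩ hpq
    have e : ((p, q) : ℝ × ℝ) = p • (1,0) + q • (0,1) := by simp
    rw [e, map_add, map_smul, map_smul] at hpq
    have k1 := congrArg Prod.fst hpq
    have k2 := congrArg Prod.snd hpq
    simp only [Prod.fst_add, Prod.snd_add, Prod.smul_fst, Prod.smul_snd, smul_eq_mul, Prod.fst_zero, Prod.snd_zero] at k1 k2
    have hy' : (fderiv ℝ f y (1,0)).1 * (fderiv ℝ f y (0,1)).2
      - (fderiv ℝ f y (0,1)).1 * (fderiv ℝ f y (1,0)).2 ≠ 0 := hy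
    generalize (fderiv ℝ f y (1,0)).1 = A at *
    generalize (fderiv ℝ f y (1,0)).2 = B at *
    generalize (fderiv ℝ f y (0,1)).1 = C at *
    generalize (fderiv ℝ f y (0,1)).2 = D at *
    have p0 : (A * D - C * B) * p = 0 := by linear_combination D * k1 - C * k2
    have q0 : (A * D - C * B) * q = 0 := by linear_combination A * k2 - B * k1
    have := (mul_eq_zero.1 p0).resolve_left hy'
    have := (mul_eq_zero.1 q0).resolve_left hy'
    ext <;> simp [*]
  set E : (ℝ × ℝ) ≃L[ℝ] (ℝ × ℝ) :=
    (LinearEquiv.ofInjectiveEndo (fderiv ℝ f y : (ℝ × ℝ) →ₗ[ℝ] (ℝ × ℝ)) inj).toContinuousLinearEquiv with hE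
  have hEe : (E : (ℝ × ℝ) →L[ℝ] (ℝ × ℝ)) = fderiv ℝ f y := by
    ext <;> rfl
  have hcd : ContDiffAt ℝ 1 f y := (hf y (mem_univ _)).contDiffAt
  have hFD : HasFDerivAt f (E : (ℝ × ℝ) →L[ℝ] (ℝ × ℝ)) y := by rw [hEe]; exact (hdf y).hasFDerivAt
  have hli := hcd.to_localInverse hFD (by norm_num)
  have hst := hcd.hasStrictFDerivAt' hFD (by norm_num)
  set g := hcd.localInverse hFD (by norm_num) with hg
  have hev : ∀ᶠ x in 𝓝 y, g (f x) = x := hst.eventually_left_inverse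
  have hdiff : ∀ᶠ v in 𝓝 (f y), DifferentiableAt ℝ g v := by
    filter_upwards [hli.eventually (by simp)] with v hv using hv.differentiableAt (by norm_num)
  have hev2 := (hdf y).continuousAt.eventually hdiff
  refine ⟨f ⁻¹' s ∩ {x | g (f x) = x ∧ DifferentiableAt ℝ g (f x)}, ?_, ?_⟩
  · rw [mem_nhdsWithin_iff_eventually]
    filter_upwards [hev, hev2] with x h1 h2 h3
    exact ⟨h3.1, h1, h2⟩
  · have : f ⁻¹' s ∩ {x | g (f x) = x ∧ DifferentiableAt ℝ g (f x)} ⊆ g '' (s ∩ {v | DifferentiableAt ℝ g v}) := by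
      rintro x ⟨h1, h2, h3⟩
      exact ⟨f x, ⟨h1, h3⟩, h2⟩
    refine measure_mono_null this ?_
    refine addHaar_image_eq_zero_of_differentiableOn_of_addHaar_eq_zero _ (fun v hv => hv.2.differentiableWithinAt) ?_
    exact measure_mono_null inter_subset_left hs
end

section
open Filter Set

structure Good (s t C K : ℝ) (A B : ℝ → ℝ → ℝ) : Prop where
  a0 : A 0 0 = 1
  b0 : B 0 0 = 1
  la : ∀ w ∈ Icc 0 t, ∀ b ∈ Icc 0 t, ∀ w' ∈ Icc 0 t, ∀ b' ∈ Icc 0 t,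
    |A w b - A w' b'| ≤ 51/100 * (s * |w - w'|) + C * |b - b'|
  lb : ∀ w ∈ Icc 0 t, ∀ b ∈ Icc 0 t, ∀ w' ∈ Icc 0 t, ∀ b' ∈ Icc 0 t,
    |B w b - B w' b'| ≤ 1/100 * (s * |w - w'|) + C * |b - b'|
  fa : ∀ w ∈ Icc 0 (t^2), ∀ b ∈ Icc (48/100:ℝ) (81/100), |A w b - 1/2| ≤ 1/200
  fb : ∀ w ∈ Icc 0 (t^2), ∀ b ∈ Icc (48/100:ℝ) (81/100), |B w b - 1| ≤ 1/200
  ga : ∀ w ∈ Icc 0 (t^2), ∀ b ∈ Icc (48/100:ℝ) (81/100), ∀ w' ∈ Icc 0 (t^2), ∀ b' ∈ Icc (48/100:ℝ) (81/100),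
    |A w b - A w' b'| ≤ K * |w - w'| + 5/100 * |b - b'|
  gb : ∀ w ∈ Icc 0 (t^2), ∀ b ∈ Icc (48/100:ℝ) (81/100), ∀ w' ∈ Icc 0 (t^2), ∀ b' ∈ Icc (48/100:ℝ) (81/100),
    |B w b - B w' b'| ≤ K * |w - w'| + 1/100 * |b - b'|

theorem mulstep {X X' A A' τ M : ℝ} (hX : X ∈ Icc (0:ℝ) 1) (hX' : X' ∈ Icc (0:ℝ) 1)
    (hA : |A - 1| ≤ τ) (hAA : |A - A'| ≤ 2 * M * τ) (hXX : |X - X'| ≤ 2 * M) :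
    |X * A - X| ≤ τ ∧ |(X * A - X' * A') - (X - X')| ≤ 4 * M * τ := by
  have t0 : 0 ≤ τ := (abs_nonneg _).trans hA
  constructor
  · rw [show X * A - X = X * (A - 1) by ring, abs_mul, abs_of_nonneg hX.1]
    nlinarith [abs_nonneg (A-1), hX.2]
  · rw [show (X * A - X' * A') - (X - X') = (X - X') * (A - 1) + X' * (A - A') by ring]
    refine (abs_add_le _ _).trans ?_
    rw [abs_mul, abs_mul, abs_of_nonneg hX'.1]
    have h1 : |X - X'| * |A - 1| ≤ 2 * M * τ := mul_le_mul hXX hA (abs_nonneg _) ((abs_nonneg _).trans hXX)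
    have h2 : X' * |A - A'| ≤ 1 * (2 * M * τ) := mul_le_mul hX'.2 hAA (abs_nonneg _) zero_le_one
    linarith

theorem tri_in {x x0 e : ℝ} (h : |x - x0| ≤ e) (he : e ≤ 1/1000) (h0 : x0 ∈ Icc (1/10:ℝ) (9/10)) :
    x ∈ Icc (0:ℝ) 1 := by
  have := abs_le.1 h
  constructor <;> linarith [h0.1, h0.2]

set_option maxHeartbeats 2000000 in
theorem chain {s t C K : ℝ} {A B : ℝ → ℝ → ℝ} {G : ℝ × ℝ → ℝ × ℝ} (hst : s * t = 1) (ht : 0 < t) (ht2 : t ≤ 1/2)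
    (hC : 1 ≤ C) (hCt : C * t ≤ 1/4000) (hG : ∀ w b, G (w, b) = (s * (w * A w b), t * (b * B w b)))
    (h : Good s t C K A B) {X0 Y0 X0' Y0' M : ℝ} (hX : X0 ∈ Icc (1/10:ℝ) (9/10)) (hY : Y0 ∈ Icc (1/10:ℝ) (9/10))
    (hX' : X0' ∈ Icc (1/10:ℝ) (9/10)) (hY' : Y0' ∈ Icc (1/10:ℝ) (9/10)) (hM1 : |X0 - X0'| ≤ M) (hM2 : |Y0 - Y0'| ≤ M)
    (n : ℕ) : ∀ k m, k + m = n → ∃ X Y X' Y' : ℝ,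
      G^[k] (t^(n+1) * X0, t * Y0) = (t^(m+1) * X, t^(k+1) * Y) ∧
      G^[k] (t^(n+1) * X0', t * Y0') = (t^(m+1) * X', t^(k+1) * Y') ∧
      |X - X0| ≤ 2 * C * (t^(m+1) + t - t^(k+1)) ∧ |Y - Y0| ≤ 2 * C * (t^(m+1) + t - t^(k+1)) ∧
      |X' - X0'| ≤ 2 * C * (t^(m+1) + t - t^(k+1)) ∧ |Y' - Y0'| ≤ 2 * C * (t^(m+1) + t - t^(k+1)) ∧
      |(X - X') - (X0 - X0')| ≤ 4 * M * (2 * C * (t^(m+1) + t - t^(k+1))) ∧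
      |(Y - Y') - (Y0 - Y0')| ≤ 4 * M * (2 * C * (t^(m+1) + t - t^(k+1))) := by
  have M0 : 0 ≤ M := (abs_nonneg _).trans hM1
  have tp : ∀ j : ℕ, 0 < t^j := fun j => pow_pos ht j
  have tl : ∀ j : ℕ, t^(j+1) ≤ t := fun j => by
    rw [pow_succ]; nlinarith [pow_le_one₀ ht.le (by linarith : t ≤ 1) (n := j)]
  have Eb : ∀ k m : ℕ, 0 ≤ 2 * C * (t^(m+1) + t - t^(k+1)) ∧ 2 * C * (t^(m+1) + t - t^(k+1)) ≤ 1/1000 := by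
    intro k m
    constructor
    · have : 0 ≤ t^(m+1) + t - t^(k+1) := by linarith [tl k, tp (m+1)]
      positivity
    · have : t^(m+1) + t - t^(k+1) ≤ 2 * t := by linarith [tl m, tp (k+1)]
      nlinarith
  intro k
  induction k with
  | zero =>
    intro m hm
    have e : m = n := by omega
    subst e
    have e0 := (Eb 0 m).1
    refine ⟨X0, Y0, X0', Y0', by simp, by simp, ?_, ?_, ?_, ?_, ?_, ?_⟩ <;>
      first
      | (simp only [sub_self, abs_zero]; exact e0)
      | (simp only [sub_self, abs_zero]; exact mul_nonneg (by positivity) e0)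
  | succ k ih =>
    intro m hm
    obtain ⟨X, Y, X', Y', e1, e2, i1, i2, i3, i4, i5, i6⟩ := ih (m+1) (by omega)
    obtain ⟨E0, E1⟩ := Eb k (m+1)
    set E := 2 * C * (t^(m+1+1) + t - t^(k+1)) with hE
    set F := 2 * C * (t^(m+1) + t - t^(k+1+1)) with hF
    set τ := C * (t^(m+1) + t^(k+1)) with hτ
    have hτ0 : 0 ≤ τ := by have := tp (m+1); have := tp (k+1); positivity
    have hEF : E + τ ≤ F := by
      have p1 : t^(m+1+1) = t^(m+1) * t := pow_succ _ _
      have p2 : t^(k+1+1) = t^(k+1) * t := pow_succ _ _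
      have : F - E - τ = C * ((t^(m+1) + t^(k+1)) * (1 - 2 * t)) := by
        rw [hF, hE, hτ, p1, p2]; ring
      have : 0 ≤ C * ((t^(m+1) + t^(k+1)) * (1 - 2 * t)) := by
        have := tp (m+1); have := tp (k+1)
        have : 0 ≤ 1 - 2 * t := by linarith
        positivity
      linarith
    have rX := tri_in i1 E1 hX
    have rY := tri_in i2 E1 hY
    have rX' := tri_in i3 E1 hX'
    have rY' := tri_in i4 E1 hY'
    have dX : |X - X'| ≤ 2 * M := by
      have q1 : 4 * M * E ≤ M := by nlinarith
      have := abs_add_le ((X - X') - (X0 - X0')) (X0 - X0')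
      rw [sub_add_cancel] at this; linarith
    have dY : |Y - Y'| ≤ 2 * M := by
      have q1 : 4 * M * E ≤ M := by nlinarith
      have := abs_add_le ((Y - Y') - (Y0 - Y0')) (Y0 - Y0')
      rw [sub_add_cancel] at this; linarith
    have inn : ∀ (j : ℕ) (x : ℝ), x ∈ Icc (0:ℝ) 1 → t^(j+1) * x ∈ Icc 0 t := fun j x hx =>
      ⟨mul_nonneg (tp _).le hx.1, by nlinarith [tl j, tp (j+1), hx.2, hx.1]⟩
    have sw : ∀ x : ℝ, s * (t^(m+1+1) * x) = t^(m+1) * x := fun x => by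
      rw [pow_succ]; linear_combination (t^(m+1) * x) * hst
    have oneA : ∀ x ∈ Icc (0:ℝ) 1, ∀ y ∈ Icc (0:ℝ) 1, |A (t^(m+1+1) * x) (t^(k+1) * y) - 1| ≤ τ ∧
        |B (t^(m+1+1) * x) (t^(k+1) * y) - 1| ≤ τ := by
      intro x hx y hy
      have z : (0:ℝ) ∈ Icc 0 t := ⟨le_rfl, ht.le⟩
      have h1 := h.la _ (inn (m+1) x hx) _ (inn k y hy) 0 z 0 z
      have h2 := h.lb _ (inn (m+1) x hx) _ (inn k y hy) 0 z 0 z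
      rw [h.a0] at h1; rw [h.b0] at h2
      rw [sub_zero, sub_zero, abs_of_nonneg (inn (m+1) x hx).1, abs_of_nonneg (inn k y hy).1, sw] at h1 h2
      have g1 : t^(m+1) * x ≤ t^(m+1) := by nlinarith [tp (m+1), hx.2]
      have g2 : C * (t^(k+1) * y) ≤ C * t^(k+1) := by
        have : t^(k+1) * y ≤ t^(k+1) := by nlinarith [tp (k+1), hy.2]
        nlinarith
      have g3 : t^(m+1) ≤ C * t^(m+1) := by nlinarith [tp (m+1)]
      have g4 : 0 ≤ t^(m+1) * x := mul_nonneg (tp _).le hx.1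
      constructor <;> rw [hτ, mul_add] <;> linarith
    have dA : |A (t^(m+1+1) * X) (t^(k+1) * Y) - A (t^(m+1+1) * X') (t^(k+1) * Y')| ≤ 2 * M * τ ∧
        |B (t^(m+1+1) * X) (t^(k+1) * Y) - B (t^(m+1+1) * X') (t^(k+1) * Y')| ≤ 2 * M * τ := by
      have h1 := h.la _ (inn (m+1) X rX) _ (inn k Y rY) _ (inn (m+1) X' rX') _ (inn k Y' rY')
      have h2 := h.lb _ (inn (m+1) X rX) _ (inn k Y rY) _ (inn (m+1) X' rX') _ (inn k Y' rY')
      rw [← mul_sub, ← mul_sub, abs_mul, abs_mul, abs_of_pos (tp _), abs_of_pos (tp _), sw] at h1 h2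
      have g1 : t^(m+1) * |X - X'| ≤ t^(m+1) * (2 * M) := mul_le_mul_of_nonneg_left dX (tp _).le
      have g2 : C * (t^(k+1) * |Y - Y'|) ≤ C * (t^(k+1) * (2 * M)) :=
        mul_le_mul_of_nonneg_left (mul_le_mul_of_nonneg_left dY (tp _).le) (by linarith)
      have g3 : t^(m+1) * (2 * M) ≤ C * (t^(m+1) * (2 * M)) := by
        have : 0 ≤ t^(m+1) * (2 * M) := mul_nonneg (tp _).le (by linarith)
        nlinarith
      have g4 : 0 ≤ t^(m+1) * |X - X'| := mul_nonneg (tp _).le (abs_nonneg _)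
      have g5 : 2 * M * τ = C * (t^(m+1) * (2 * M)) + C * (t^(k+1) * (2 * M)) := by rw [hτ]; ring
      constructor <;> rw [g5] <;> linarith
    obtain ⟨u1, u2⟩ := mulstep rX rX' (oneA X rX Y rY).1 dA.1 dX
    obtain ⟨v1, v2⟩ := mulstep rY rY' (oneA X rX Y rY).2 dA.2 dY
    have dX2 : |X' - X| ≤ 2 * M := by rwa [abs_sub_comm]
    have dY2 : |Y' - Y| ≤ 2 * M := by rwa [abs_sub_comm]
    obtain ⟨u3, -⟩ := mulstep rX' rX (oneA X' rX' Y' rY').1 (by rw [abs_sub_comm]; exact dA.1) dX2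
    obtain ⟨v3, -⟩ := mulstep rY' rY (oneA X' rX' Y' rY').2 (by rw [abs_sub_comm]; exact dA.2) dY2
    have tr : ∀ x y z : ℝ, |x - y| ≤ τ → |y - z| ≤ E → |x - z| ≤ F := fun x y z p q =>
      (abs_sub_le x y z).trans (by linarith)
    have tr2 : ∀ x y z : ℝ, |x - y| ≤ 4 * M * τ → |y - z| ≤ 4 * M * E → |x - z| ≤ 4 * M * F := fun x y z p q =>
      (abs_sub_le x y z).trans (by have := mul_le_mul_of_nonneg_left hEF (by linarith : 0 ≤ 4 * M); linarith)
    refine ⟨X * A (t^(m+1+1) * X) (t^(k+1) * Y), Y * B (t^(m+1+1) * X) (t^(k+1) * Y),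
      X' * A (t^(m+1+1) * X') (t^(k+1) * Y'), Y' * B (t^(m+1+1) * X') (t^(k+1) * Y'), ?_, ?_,
      tr _ _ _ u1 i1, tr _ _ _ v1 i2, tr _ _ _ u3 i3, tr _ _ _ v3 i4, tr2 _ _ _ u2 i5, tr2 _ _ _ v2 i6⟩
    · rw [Function.iterate_succ_apply', e1, hG]
      refine Prod.ext ?_ ?_
      · show s * (t^(m+1+1) * X * _) = _
        rw [mul_assoc, sw]
      · show t * (t^(k+1) * Y * _) = _
        ring
    · rw [Function.iterate_succ_apply', e2, hG]
      refine Prod.ext ?_ ?_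
      · show s * (t^(m+1+1) * X' * _) = _
        rw [mul_assoc, sw]
      · show t * (t^(k+1) * Y' * _) = _
        ring
end

section
open Filter Set

theorem dmul {x x' y y' a b c d : ℝ} (hx : |x - x'| ≤ a) (hy : |y| ≤ b) (hx' : |x'| ≤ c) (hyy : |y - y'| ≤ d) :
    |x * y - x' * y'| ≤ a * b + c * d := by
  rw [show x * y - x' * y' = (x - x') * y + x' * (y - y') by ring]
  refine (abs_add_le _ _).trans ?_
  rw [abs_mul, abs_mul]
  exact add_le_add (mul_le_mul hx hy (abs_nonneg _) ((abs_nonneg _).trans hx))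
    (mul_le_mul hx' hyy (abs_nonneg _) ((abs_nonneg _).trans hx'))

theorem numA {x A : ℝ} (rx : x ∈ Icc (226/1000:ℝ) (4202/10000)) (hA : |A - 1| ≤ 51/100 * x + 1/4000) :
    x * A ∈ Ioo (19/100:ℝ) (52/100) := by
  obtain ⟨h1, h2⟩ := abs_le.1 hA
  obtain ⟨r1, r2⟩ := rx
  have p1 : x * (1 - 51/100 * x - 1/4000) ≤ x * A := mul_le_mul_of_nonneg_left (by linarith) (by linarith)
  have p2 : x * A ≤ x * (1 + 51/100 * x + 1/4000) := mul_le_mul_of_nonneg_left (by linarith) (by linarith)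
  have p3 := mul_nonneg (sub_nonneg.2 r1) (sub_nonneg.2 r2)
  have p4 : x * x ≤ (4202/10000) * (4202/10000) := mul_le_mul r2 r2 (by linarith) (by norm_num)
  constructor <;> linarith

theorem numB {x y A : ℝ} (rx : x ∈ Icc (226/1000:ℝ) (4202/10000)) (ry : y ∈ Icc (476/1000:ℝ) (8151/10000))
    (hA : |A - 1| ≤ 1/100 * x + 1/4000) : y * A ∈ Ioo (46/100:ℝ) (83/100) := by
  obtain ⟨h1, h2⟩ := abs_le.1 hA
  obtain ⟨r1, r2⟩ := rx
  obtain ⟨s1, s2⟩ := ry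
  have p1 : y * (995/1000) ≤ y * A := mul_le_mul_of_nonneg_left (by linarith) (by linarith)
  have p2 : y * A ≤ y * (1005/1000) := mul_le_mul_of_nonneg_left (by linarith) (by linarith)
  constructor <;> linarith

theorem numX {q A : ℝ} (hq : q ∈ Icc (46/100:ℝ) (83/100)) (hA : |A - 1/2| ≤ 1/200) :
    q * A ∈ Icc (227/1000:ℝ) (4192/10000) := by
  obtain ⟨h1, h2⟩ := abs_le.1 hA
  obtain ⟨r1, r2⟩ := hq
  have p1 : q * (495/1000) ≤ q * A := mul_le_mul_of_nonneg_left (by linarith) (by linarith)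
  have p2 : q * A ≤ q * (505/1000) := mul_le_mul_of_nonneg_left (by linarith) (by linarith)
  constructor <;> linarith

theorem numY {q A : ℝ} (hq : q ∈ Icc (48/100:ℝ) (81/100)) (hA : |A - 1| ≤ 1/200) :
    q * A ∈ Icc (477/1000:ℝ) (8141/10000) := by
  obtain ⟨h1, h2⟩ := abs_le.1 hA
  obtain ⟨r1, r2⟩ := hq
  have p1 : q * (995/1000) ≤ q * A := mul_le_mul_of_nonneg_left (by linarith) (by linarith)
  have p2 : q * A ≤ q * (1005/1000) := mul_le_mul_of_nonneg_left (by linarith) (by linarith)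
  constructor <;> linarith

set_option maxHeartbeats 1000000 in
theorem passage {s t C K : ℝ} {A B : ℝ → ℝ → ℝ} {G : ℝ × ℝ → ℝ × ℝ} (hst : s * t = 1) (ht : 0 < t) (ht2 : t ≤ 1/2)
    (hC : 1 ≤ C) (hCt : C * t ≤ 1/4000) (hG : ∀ w b, G (w, b) = (s * (w * A w b), t * (b * B w b)))
    (h : Good s t C K A B) (hK : 0 ≤ K) {n : ℕ} (hn : K * t^(n+2) ≤ 1/2000)
    {a q a' q' M : ℝ} (ha : a ∈ Icc (19/100:ℝ) (52/100)) (hq : q ∈ Icc (46/100:ℝ) (83/100))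
    (ha' : a' ∈ Icc (19/100:ℝ) (52/100)) (hq' : q' ∈ Icc (46/100:ℝ) (83/100))
    (hM1 : |a - a'| ≤ M) (hM2 : |q - q'| ≤ 20/17 * M) :
    ∃ a1 q1 a1' q1' : ℝ, G^[n+2] (t^(n+2) * q, 1 - a) = (a1, t^(n+2) * q1) ∧
      G^[n+2] (t^(n+2) * q', 1 - a') = (a1', t^(n+2) * q1') ∧
      a1 ∈ Ioo (19/100:ℝ) (52/100) ∧ q1 ∈ Ioo (46/100:ℝ) (83/100) ∧
      |a1 - a1'| ≤ 19/20 * M ∧ |q1 - q1'| ≤ 19/17 * M := by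
  have M0 : 0 ≤ M := (abs_nonneg _).trans hM1
  have tp : ∀ j : ℕ, 0 < t^j := fun j => pow_pos ht j
  have tl : ∀ j : ℕ, t^(j+1) ≤ t := fun j => by
    rw [pow_succ]; nlinarith [pow_le_one₀ ht.le (by linarith : t ≤ 1) (n := j)]
  have inn : ∀ (j : ℕ) (x : ℝ), x ∈ Icc (0:ℝ) 1 → t^(j+1) * x ∈ Icc 0 t := fun j x hx =>
    ⟨mul_nonneg (tp _).le hx.1, (mul_le_of_le_one_right (tp _).le hx.2).trans (tl j)⟩
  have tl2 : t^(n+2) ≤ t^2 := by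
    rw [pow_add]; nlinarith [pow_le_one₀ ht.le (by linarith : t ≤ 1) (n := n), tp 2]
  have inw : ∀ q ∈ Icc (46/100:ℝ) (83/100), t^(n+2) * q ∈ Icc 0 (t^2) := fun q hq =>
    ⟨mul_nonneg (tp _).le (by linarith [hq.1]), by nlinarith [tp (n+2), hq.1, hq.2]⟩
  have inb : ∀ a ∈ Icc (19/100:ℝ) (52/100), 1 - a ∈ Icc (48/100:ℝ) (81/100) := fun a ha =>
    ⟨by linarith [ha.2], by linarith [ha.1]⟩
  have first : ∀ a ∈ Icc (19/100:ℝ) (52/100), ∀ q ∈ Icc (46/100:ℝ) (83/100), ∃ X Y A0 B0 : ℝ,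
      A0 = A (t^(n+2) * q) (1 - a) ∧ B0 = B (t^(n+2) * q) (1 - a) ∧
      X = q * A0 ∧ Y = (1 - a) * B0 ∧ |A0 - 1/2| ≤ 1/200 ∧ |B0 - 1| ≤ 1/200 ∧
      X ∈ Icc (227/1000:ℝ) (4192/10000) ∧ Y ∈ Icc (477/1000:ℝ) (8141/10000) ∧
      G^[n+2] (t^(n+2) * q, 1 - a) = G (G^[n] (t^(n+1) * X, t * Y)) := by
    intro a ha q hq
    refine ⟨_, _, _, _, rfl, rfl, rfl, rfl, h.fa _ (inw q hq) _ (inb a ha), h.fb _ (inw q hq) _ (inb a ha), ?_, ?_, ?_⟩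
    · exact numX hq (h.fa _ (inw q hq) _ (inb a ha))
    · exact numY (inb a ha) (h.fb _ (inw q hq) _ (inb a ha))
    · rw [Function.iterate_succ_apply', Function.iterate_succ_apply, hG (t^(n+2) * q) (1 - a)]
      have e : ∀ z, s * (t^(n+2) * q * z) = t^(n+1) * (q * z) := fun z => by
        rw [pow_succ]; linear_combination (t^(n+1) * (q * z)) * hst
      rw [e]
  obtain ⟨X, Y, A0, B0, eA, eB, eX, eY, bA, bB, rX, rY, e⟩ := first a ha q hq
  obtain ⟨X', Y', A0', B0', eA', eB', eX', eY', bA', bB', rX', rY', e'⟩ := first a' ha' q' hq'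
  have dw : K * |t^(n+2) * q - t^(n+2) * q'| ≤ M / 1000 := by
    rw [← mul_sub, abs_mul, abs_of_pos (tp _), ← mul_assoc]
    have := mul_le_mul hn hM2 (abs_nonneg _) (by norm_num)
    linarith
  have db : |(1 - a) - (1 - a')| ≤ M := by
    rw [abs_sub_comm, show (1 - a') - (1 - a) = a - a' by ring]; exact hM1
  have dA : |A0 - A0'| ≤ 51/1000 * M := by
    have := h.ga _ (inw q hq) _ (inb a ha) _ (inw q' hq') _ (inb a' ha')
    rw [eA, eA']; linarith
  have dB : |B0 - B0'| ≤ 11/1000 * M := by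
    have := h.gb _ (inw q hq) _ (inb a ha) _ (inw q' hq') _ (inb a' ha')
    rw [eB, eB']; linarith
  have bA1 : |A0| ≤ 505/1000 := by have := abs_le.1 bA; rw [abs_le]; constructor <;> linarith
  have bB1 : |B0| ≤ 1005/1000 := by have := abs_le.1 bB; rw [abs_le]; constructor <;> linarith
  have dX : |X - X'| ≤ 637/1000 * M := by
    rw [eX, eX']
    have := dmul hM2 bA1 (c := 83/100) (by rw [abs_le]; constructor <;> linarith [hq'.1, hq'.2]) dA
    linarith only [this, M0]
  have dY : |Y - Y'| ≤ 1014/1000 * M := by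
    rw [eY, eY']
    have := dmul db bB1 (c := 81/100) (by rw [abs_le]; constructor <;> linarith [ha'.1, ha'.2]) dB
    linarith only [this, M0]
  obtain ⟨x, y, x', y', f1, f2, i1, i2, i3, i4, i5, i6⟩ := chain hst ht ht2 hC hCt hG h
    (X0 := X) (Y0 := Y) (X0' := X') (Y0' := Y') (M := 1014/1000 * M)
    ⟨by linarith only [rX.1], by linarith only [rX.2]⟩ ⟨by linarith only [rY.1], by linarith only [rY.2]⟩
    ⟨by linarith only [rX'.1], by linarith only [rX'.2]⟩ ⟨by linarith only [rY'.1], by linarith only [rY'.2]⟩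
    (by linarith) dY n n 0 rfl
  have E1 : 2 * C * (t^(0+1) + t - t^(n+1)) ≤ 1/1000 := by
    have : t^(0+1) + t - t^(n+1) ≤ 2 * t := by linarith [tl 0, tp (n+1)]
    refine (mul_le_mul_of_nonneg_left this (by linarith only [hC] : 0 ≤ 2 * C)).trans ?_
    linarith only [hCt]
  have i5 := i5.trans (mul_le_mul_of_nonneg_left E1 (by linarith))
  have i6 := i6.trans (mul_le_mul_of_nonneg_left E1 (by linarith))
  have i1 := abs_le.1 (i1.trans E1)
  have i2 := abs_le.1 (i2.trans E1)
  have i3 := abs_le.1 (i3.trans E1)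
  have i4 := abs_le.1 (i4.trans E1)
  have dx : |x - x'| ≤ 642/1000 * M := by
    have := abs_add_le ((x - x') - (X - X')) (X - X')
    rw [sub_add_cancel] at this; linarith only [this, i5, dX, M0]
  have dy : |y - y'| ≤ 1019/1000 * M := by
    have := abs_add_le ((y - y') - (Y - Y')) (Y - Y')
    rw [sub_add_cancel] at this; linarith only [this, i6, dY, M0]
  have rx : x ∈ Icc (226/1000:ℝ) (4202/10000) := ⟨by linarith only [rX.1, i1.1], by linarith only [rX.2, i1.2]⟩
  have rx' : x' ∈ Icc (226/1000:ℝ) (4202/10000) := ⟨by linarith only [rX'.1, i3.1], by linarith only [rX'.2, i3.2]⟩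
  have ry : y ∈ Icc (476/1000:ℝ) (8151/10000) := ⟨by linarith only [rY.1, i2.1], by linarith only [rY.2, i2.2]⟩
  have ry' : y' ∈ Icc (476/1000:ℝ) (8151/10000) := ⟨by linarith only [rY'.1, i4.1], by linarith only [rY'.2, i4.2]⟩
  have qx : x ∈ Icc (0:ℝ) 1 := ⟨by linarith only [rx.1], by linarith only [rx.2]⟩
  have qx' : x' ∈ Icc (0:ℝ) 1 := ⟨by linarith only [rx'.1], by linarith only [rx'.2]⟩
  have qy : y ∈ Icc (0:ℝ) 1 := ⟨by linarith only [ry.1], by linarith only [ry.2]⟩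
  have qy' : y' ∈ Icc (0:ℝ) 1 := ⟨by linarith only [ry'.1], by linarith only [ry'.2]⟩
  have z : (0:ℝ) ∈ Icc 0 t := ⟨le_rfl, ht.le⟩
  have sw : ∀ x : ℝ, s * (t^(0+1) * x) = x := fun x => by linear_combination x * hst
  have cb : ∀ d v : ℝ, d ≤ v → 0 ≤ v → C * (t^(n+1) * d) ≤ v / 4000 := fun d v hd hv => by
    have h1 : C * t^(n+1) ≤ 1/4000 := (mul_le_mul_of_nonneg_left (tl n) (by linarith)).trans hCt
    have h0 : 0 ≤ C * t^(n+1) := mul_nonneg (by linarith) (tp _).le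
    have k1 := mul_le_mul_of_nonneg_left hd h0
    have k2 := mul_le_mul_of_nonneg_right h1 hv
    linarith only [k1, k2]
  set A2 := A (t^(0+1) * x) (t^(n+1) * y) with hA2
  set B2 := B (t^(0+1) * x) (t^(n+1) * y) with hB2
  set A2' := A (t^(0+1) * x') (t^(n+1) * y') with hA2'
  set B2' := B (t^(0+1) * x') (t^(n+1) * y') with hB2'
  have hA : |A2 - 1| ≤ 51/100 * x + 1/4000 := by
    have := h.la _ (inn 0 x qx) _ (inn n y qy) 0 z 0 z
    rw [h.a0, sub_zero, sub_zero, abs_of_nonneg (inn 0 x qx).1, abs_of_nonneg (inn n y qy).1, sw] at this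
    linarith only [this, cb y 1 qy.2 zero_le_one]
  have hB : |B2 - 1| ≤ 1/100 * x + 1/4000 := by
    have := h.lb _ (inn 0 x qx) _ (inn n y qy) 0 z 0 z
    rw [h.b0, sub_zero, sub_zero, abs_of_nonneg (inn 0 x qx).1, abs_of_nonneg (inn n y qy).1, sw] at this
    linarith only [this, cb y 1 qy.2 zero_le_one]
  have dA2 : |A2 - A2'| ≤ 328/1000 * M := by
    have := h.la _ (inn 0 x qx) _ (inn n y qy) _ (inn 0 x' qx') _ (inn n y' qy')
    rw [← mul_sub, ← mul_sub, abs_mul, abs_mul, abs_of_pos (tp _), abs_of_pos (tp _), sw] at this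
    linarith only [this, dx, M0, cb _ _ dy (by linarith only [M0])]
  have dB2 : |B2 - B2'| ≤ 8/1000 * M := by
    have := h.lb _ (inn 0 x qx) _ (inn n y qy) _ (inn 0 x' qx') _ (inn n y' qy')
    rw [← mul_sub, ← mul_sub, abs_mul, abs_mul, abs_of_pos (tp _), abs_of_pos (tp _), sw] at this
    linarith only [this, dx, M0, cb _ _ dy (by linarith only [M0])]
  have vA := abs_le.1 hA
  have vB := abs_le.1 hB
  refine ⟨x * A2, y * B2, x' * A2', y' * B2', ?_, ?_, ⟨?_, ?_⟩, ⟨?_, ?_⟩, ?_, ?_⟩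
  · rw [e, f1, hG]
    refine Prod.ext ?_ ?_
    · show s * (t^(0+1) * x * A2) = _
      rw [mul_assoc, sw]
    · show t * (t^(n+1) * y * B2) = _
      ring
  · rw [e', f2, hG]
    refine Prod.ext ?_ ?_
    · show s * (t^(0+1) * x' * A2') = _
      rw [mul_assoc, sw]
    · show t * (t^(n+1) * y' * B2') = _
      ring
  · exact (numA rx hA).1
  · exact (numA rx hA).2
  · exact (numB rx ry hB).1
  · exact (numB rx ry hB).2
  · have := dmul dx (b := 1215/1000) (by rw [abs_le]; constructor <;> linarith only [rx.2, vA.1, vA.2, vB.1, vB.2]) (c := 4202/10000)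
      (by rw [abs_le]; constructor <;> linarith only [rx'.1, rx'.2]) dA2
    linarith only [this, M0]
  · have := dmul dy (b := 1005/1000) (by rw [abs_le]; constructor <;> linarith only [rx.2, vA.1, vA.2, vB.1, vB.2]) (c := 8151/10000)
      (by rw [abs_le]; constructor <;> linarith only [ry'.1, ry'.2]) dB2
    linarith only [this, M0]
end

section
open Filter Set Topology

def RR : Set (ℝ × ℝ) := Icc (19/100) (52/100) ×ˢ Icc (391/1000) (7055/10000)
def VV : Set (ℝ × ℝ) := Ioo (19/100) (52/100) ×ˢ Ioo (391/1000) (7055/10000)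

theorem VV_sub : VV ⊆ RR := prod_mono Ioo_subset_Icc_self Ioo_subset_Icc_self

theorem contr_fix {T : ℝ × ℝ → ℝ × ℝ} (h1 : ∀ x ∈ RR, T x ∈ VV)
    (h2 : ∀ x ∈ RR, ∀ y ∈ RR, dist (T x) (T y) ≤ 19/20 * dist x y) :
    ∃ x ∈ VV, T x = x ∧ ∀ y ∈ RR, Tendsto (fun k => T^[k] y) atTop (𝓝 x) := by
  have hc : IsComplete RR := ((isCompact_Icc.prod isCompact_Icc).isClosed).isComplete
  have hm : MapsTo T RR RR := fun x hx => VV_sub (h1 x hx)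
  have hk : ContractingWith (19/20 : NNReal) (hm.restrict T RR RR) := by
    refine ⟨?_, ?_⟩
    · rw [← NNReal.coe_lt_coe]; norm_num
    · refine LipschitzWith.of_dist_le_mul fun x y => ?_
      have := h2 x x.2 y y.2
      have e : ((19/20 : NNReal) : ℝ) = 19/20 := by norm_num
      rw [e]; exact this
  have all : ∀ y ∈ RR, ∃ x ∈ RR, T x = x ∧ Tendsto (fun k => T^[k] y) atTop (𝓝 x) := by
    intro y hy
    obtain ⟨x, hx, hf, ht, -⟩ := hk.exists_fixedPoint' hc hm hy (edist_ne_top _ _)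
    exact ⟨x, hx, hf, ht⟩
  have pt : ((3/10, 1/2) : ℝ × ℝ) ∈ RR := by
    refine ⟨⟨?_, ?_⟩, ⟨?_, ?_⟩⟩ <;> norm_num
  obtain ⟨x, hx, hfx, -⟩ := all _ pt
  refine ⟨x, hfx ▸ h1 x hx, hfx, fun y hy => ?_⟩
  obtain ⟨x', hx', hfx', ht⟩ := all y hy
  have := h2 x hx x' hx'
  rw [hfx, hfx'] at this
  have : dist x x' = 0 := by linarith [dist_nonneg (x := x) (y := x')]
  rw [eq_of_dist_eq_zero this]; exact ht

theorem contr_sink {f T : ℝ × ℝ → ℝ × ℝ} (Ψ : (ℝ × ℝ) ≃ₜ (ℝ × ℝ)) {m : ℕ} (hm : 1 ≤ m)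
    (hT : ∀ x, f^[m] (Ψ x) = Ψ (T x)) (h1 : ∀ x ∈ RR, T x ∈ VV)
    (h2 : ∀ x ∈ RR, ∀ y ∈ RR, dist (T x) (T y) ≤ 19/20 * dist x y) :
    ∃ x ∈ VV, IsSink f (Ψ x) m := by
  obtain ⟨x, hx, hf, ht⟩ := contr_fix h1 h2
  refine ⟨x, hx, hm, by rw [hT, hf], Ψ '' VV, Ψ.isOpenMap _ (isOpen_Ioo.prod isOpen_Ioo), ⟨x, hx, rfl⟩, ?_⟩
  rintro _ ⟨y, hy, rfl⟩
  have e : ∀ k, f^[k * m] (Ψ y) = Ψ (T^[k] y) := by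
    intro k
    rw [mul_comm, Function.iterate_mul]
    exact ((Function.Semiconj.iterate_right (f := Ψ) (ga := T) (gb := f^[m]) (fun x => (hT x).symm) k) y).symm
  simp only [e]
  exact (Ψ.continuous.tendsto x).comp (ht y (VV_sub hy))

def rho (z : ℝ × ℝ) : ℝ × ℝ := (z.2, 1 - z.1)

theorem rho4 (z : ℝ × ℝ) : rho (rho (rho (rho z))) = z := by
  simp [rho]

noncomputable def PsiN (v : ℝ) (hv : v ≠ 0) : (ℝ × ℝ) ≃ₜ (ℝ × ℝ) where
  toFun z := (v * (20/17 * z.2), 1 - z.1)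
  invFun z := (1 - z.2, 17/20 * (z.1 / v))
  left_inv z := by ext <;> simp <;> field_simp
  right_inv z := by ext <;> simp; field_simp
  continuous_toFun := by fun_prop
  continuous_invFun := by fun_prop

def Pass (G : ℝ × ℝ → ℝ × ℝ) (v : ℝ) (m : ℕ) : Prop :=
  ∀ a q a' q' M : ℝ, a ∈ Icc (19/100:ℝ) (52/100) → q ∈ Icc (46/100:ℝ) (83/100) →
    a' ∈ Icc (19/100:ℝ) (52/100) → q' ∈ Icc (46/100:ℝ) (83/100) →
    |a - a'| ≤ M → |q - q'| ≤ 20/17 * M →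
    ∃ a1 q1 a1' q1' : ℝ, G^[m] (v * q, 1 - a) = (a1, v * q1) ∧
      G^[m] (v * q', 1 - a') = (a1', v * q1') ∧
      a1 ∈ Ioo (19/100:ℝ) (52/100) ∧ q1 ∈ Ioo (46/100:ℝ) (83/100) ∧
      |a1 - a1'| ≤ 19/20 * M ∧ |q1 - q1'| ≤ 19/17 * M

theorem pass_T {G : ℝ × ℝ → ℝ × ℝ} {v : ℝ} (hv : v ≠ 0) {m : ℕ} (h : Pass G v m) :
    (∀ x ∈ RR, (PsiN v hv).symm (rho (G^[m] (PsiN v hv x))) ∈ VV) ∧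
    ∀ x ∈ RR, ∀ y ∈ RR, dist ((PsiN v hv).symm (rho (G^[m] (PsiN v hv x))))
      ((PsiN v hv).symm (rho (G^[m] (PsiN v hv y)))) ≤ 19/20 * dist x y := by
  have key : ∀ x ∈ RR, ∀ y ∈ RR, (PsiN v hv).symm (rho (G^[m] (PsiN v hv x))) ∈ VV ∧
    dist ((PsiN v hv).symm (rho (G^[m] (PsiN v hv x))))
      ((PsiN v hv).symm (rho (G^[m] (PsiN v hv y)))) ≤ 19/20 * dist x y := by
    rintro ⟨a, r⟩ ⟨ha, hr⟩ ⟨a', r'⟩ ⟨ha', hr'⟩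
    simp only at ha hr ha' hr'
    obtain ⟨a1, q1, a1', q1', e1, e2, m1, m2, d1, d2⟩ := h a (20/17 * r) a' (20/17 * r') (dist (a, r) (a', r')) ha
      ⟨by linarith [hr.1], by linarith [hr.2]⟩ ha' ⟨by linarith [hr'.1], by linarith [hr'.2]⟩
      (by rw [← Real.dist_eq, Prod.dist_eq]; exact le_max_left _ _)
      (by
        rw [← mul_sub, abs_mul, abs_of_pos (by norm_num : (0:ℝ) < 20/17)]
        refine mul_le_mul_of_nonneg_left ?_ (by norm_num)
        rw [← Real.dist_eq, Prod.dist_eq]; exact le_max_right _ _)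
    have s1 : (PsiN v hv).symm (rho (G^[m] (PsiN v hv (a, r)))) = (a1, 17/20 * q1) := by
      show (PsiN v hv).symm (rho (G^[m] (v * (20/17 * r), 1 - a))) = _
      rw [e1]
      show ((1 - (1 - a1), 17/20 * (v * q1 / v)) : ℝ × ℝ) = _
      rw [mul_div_cancel_left₀ _ hv, sub_sub_cancel]
    have s2 : (PsiN v hv).symm (rho (G^[m] (PsiN v hv (a', r')))) = (a1', 17/20 * q1') := by
      show (PsiN v hv).symm (rho (G^[m] (v * (20/17 * r'), 1 - a'))) = _
      rw [e2]
      show ((1 - (1 - a1'), 17/20 * (v * q1' / v)) : ℝ × ℝ) = _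
      rw [mul_div_cancel_left₀ _ hv, sub_sub_cancel]
    rw [s1, s2]
    refine ⟨⟨m1, ⟨?_, ?_⟩⟩, ?_⟩
    · show _ < 17/20 * q1
      linarith [m2.1]
    · show 17/20 * q1 < _
      linarith [m2.2]
    · rw [Prod.dist_eq (x := (a1, 17/20 * q1))]
      refine max_le ?_ ?_
      · rw [Real.dist_eq]; exact d1
      · rw [Real.dist_eq]
        show |17/20 * q1 - 17/20 * q1'| ≤ _
        rw [← mul_sub, abs_mul, abs_of_pos (by norm_num : (0:ℝ) < 17/20)]
        linarith
  exact ⟨fun x hx => (key x hx x hx).1, fun x hx y hy => (key x hx y hy).2⟩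

theorem four_sink {f : ℝ × ℝ → ℝ × ℝ} {G0 G1 G2 G3 : ℝ × ℝ → ℝ × ℝ} (L : (ℝ × ℝ) ≃ₜ (ℝ × ℝ))
    (hL : ∀ z, f (L z) = L (G0 z)) (r0 : ∀ z, rho (G0 z) = G1 (rho z)) (r1 : ∀ z, rho (G1 z) = G2 (rho z))
    (r2 : ∀ z, rho (G2 z) = G3 (rho z)) {v : ℝ} (hv : v ≠ 0) {m : ℕ} (hm : 1 ≤ m)
    (p0 : Pass G0 v m) (p1 : Pass G1 v m) (p2 : Pass G2 v m) (p3 : Pass G3 v m) :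
    ∃ x ∈ VV, IsSink f (L (PsiN v hv x)) (4 * m) := by
  set Ψ := PsiN v hv with hΨ
  set S := fun (G : ℝ × ℝ → ℝ × ℝ) (x : ℝ × ℝ) => Ψ.symm (rho (G^[m] (Ψ x))) with hS
  have eS : ∀ G x, Ψ (S G x) = rho (G^[m] (Ψ x)) := fun G x => Ψ.apply_symm_apply _
  have q0 : ∀ k z, rho (G0^[k] z) = G1^[k] (rho z) := fun k z =>
    Function.Semiconj.iterate_right (f := rho) r0 k z
  have q1 : ∀ k z, rho (G1^[k] z) = G2^[k] (rho z) := fun k z =>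
    Function.Semiconj.iterate_right (f := rho) r1 k z
  have q2 : ∀ k z, rho (G2^[k] z) = G3^[k] (rho z) := fun k z =>
    Function.Semiconj.iterate_right (f := rho) r2 k z
  obtain ⟨a0, b0⟩ := pass_T hv p0
  obtain ⟨a1, b1⟩ := pass_T hv p1
  obtain ⟨a2, b2⟩ := pass_T hv p2
  obtain ⟨a3, b3⟩ := pass_T hv p3
  have c0 : ∀ x ∈ RR, S G0 x ∈ RR := fun x hx => VV_sub (a0 x hx)
  have c1 : ∀ x ∈ RR, S G1 x ∈ RR := fun x hx => VV_sub (a1 x hx)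
  have c2 : ∀ x ∈ RR, S G2 x ∈ RR := fun x hx => VV_sub (a2 x hx)
  refine contr_sink (Ψ.trans L) (T := fun x => S G3 (S G2 (S G1 (S G0 x)))) (by omega) ?_
    (fun x hx => a3 _ (c2 _ (c1 _ (c0 _ hx)))) ?_
  · intro x
    show f^[4 * m] (L (Ψ x)) = L (Ψ (S G3 _))
    rw [eS, eS, eS, eS]
    have hi : ∀ k z, f^[k] (L z) = L (G0^[k] z) := fun k z =>
      (Function.Semiconj.iterate_right (f := L) (ga := G0) (gb := f) (fun z => (hL z).symm) k z).symm
    rw [hi]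
    congr 1
    simp only [← q2, ← q1, ← q0, rho4]
    simp only [← Function.iterate_add_apply]
    congr 2
    ring
  · intro x hx y hy
    have i0 := b0 x hx y hy
    have i1 := b1 _ (c0 x hx) _ (c0 y hy)
    have i2 := b2 _ (c1 _ (c0 x hx)) _ (c1 _ (c0 y hy))
    have i3 := b3 _ (c2 _ (c1 _ (c0 x hx))) _ (c2 _ (c1 _ (c0 y hy)))
    refine i3.trans (mul_le_mul_of_nonneg_left ?_ (by norm_num))
    have d0 := dist_nonneg (x := x) (y := y)
    have d1 := dist_nonneg (x := S G0 x) (y := S G0 y)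
    have d2 := dist_nonneg (x := S G1 (S G0 x)) (y := S G1 (S G0 y))
    have j0 : dist (S G0 x) (S G0 y) ≤ dist x y := by linarith
    have j1 : dist (S G1 (S G0 x)) (S G1 (S G0 y)) ≤ dist (S G0 x) (S G0 y) := by linarith
    have j2 : dist (S G2 (S G1 (S G0 x))) (S G2 (S G1 (S G0 y))) ≤ dist (S G1 (S G0 x)) (S G1 (S G0 y)) := by linarith
    exact j2.trans (j1.trans j0)

theorem orbit_finite {f : ℝ × ℝ → ℝ × ℝ} {p : ℝ × ℝ} {n : ℕ} (h : IsSink f p n) : (fwdOrbit f p).Finite := by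
  have : fwdOrbit f p ⊆ (fun k => f^[k] p) '' (Finset.range n : Set ℕ) := by
    rintro _ ⟨k, rfl⟩
    have hp : Function.IsPeriodicPt f n p := h.2.1
    exact ⟨k % n, by simpa using Nat.mod_lt _ h.1, hp.iterate_mod_apply k⟩
  exact (Set.Finite.image _ (Finset.finite_toSet _)).subset this

theorem many_sinks {f : ℝ × ℝ → ℝ × ℝ} (p : ℕ → ℝ × ℝ) (n : ℕ → ℕ) (hs : ∀ i, IsSink f (p i) (n i))
    (hp : Function.Injective p) : HasInfinitelyManySinks f := by
  obtain ⟨g, -, hg⟩ := exists_seq_of_forall_finset_exists (fun _ : ℕ => True)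
    (fun i j => Disjoint (fwdOrbit f (p i)) (fwdOrbit f (p j))) (by
      intro S _
      have hf : (⋃ i ∈ S, fwdOrbit f (p i)).Finite := Set.Finite.biUnion S.finite_toSet (fun i _ => orbit_finite (hs i))
      obtain ⟨j, hj⟩ : ∃ j, p j ∉ ⋃ i ∈ S, fwdOrbit f (p i) := by
        by_contra hcon
        push Not at hcon
        exact Set.infinite_range_of_injective hp (hf.subset (by rintro _ ⟨j, rfl⟩; exact hcon j))
      refine ⟨j, trivial, fun i hi => ?_⟩
      rw [Set.disjoint_left]
      rintro _ ⟨k, rfl⟩ ⟨l, hl⟩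
      apply hj
      simp only [mem_iUnion]
      refine ⟨i, hi, (n j * (l + 1) - l) + k, ?_⟩
      have hl' : f^[l] (p j) = f^[k] (p i) := hl
      show f^[_] (p i) = p j
      rw [Function.iterate_add_apply, ← hl', ← Function.iterate_add_apply]
      have e : n j * (l + 1) - l + l = n j * (l+1) := by
        have := (hs j).1
        have : l ≤ n j * (l+1) := by nlinarith
        omega
      rw [e]
      have hpp : Function.IsPeriodicPt f (n j) (p j) := (hs j).2.1
      exact hpp.mul_const (l+1))
  refine ⟨fun i => p (g i), fun i => n (g i), fun i => hs _, fun i j hij => ?_⟩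
  rcases lt_or_gt_of_ne hij with h | h
  · exact hg i j h
  · exact (hg j i h).symm

theorem good_sinks {s t C K : ℝ} {f G0 G1 G2 G3 : ℝ × ℝ → ℝ × ℝ} (L : (ℝ × ℝ) ≃ₜ (ℝ × ℝ))
    (hL : ∀ z, f (L z) = L (G0 z)) (r0 : ∀ z, rho (G0 z) = G1 (rho z)) (r1 : ∀ z, rho (G1 z) = G2 (rho z))
    (r2 : ∀ z, rho (G2 z) = G3 (rho z)) (hst : s * t = 1) (ht : 0 < t) (ht2 : t ≤ 1/2)
    (hC : 1 ≤ C) (hCt : C * t ≤ 1/4000) (hK : 0 ≤ K)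
    (hG : ∀ G ∈ ({G0, G1, G2, G3} : Set (ℝ × ℝ → ℝ × ℝ)), ∃ A B : ℝ → ℝ → ℝ,
      (∀ w b, G (w, b) = (s * (w * A w b), t * (b * B w b))) ∧ Good s t C K A B) :
    HasInfinitelyManySinks f := by
  have lim : Tendsto (fun n : ℕ => K * t^(n+2)) atTop (𝓝 0) := by
    have := (tendsto_pow_atTop_nhds_zero_of_lt_one ht.le (by linarith : t < 1)).const_mul K
    rw [mul_zero] at this
    exact (tendsto_add_atTop_iff_nat (f := fun n : ℕ => K * t^n) 2).2 this
  obtain ⟨n0, hn0⟩ := eventually_atTop.1 (lim.eventually (Iic_mem_nhds (by norm_num : (0:ℝ) < 1/2000)))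
  have hp : ∀ G ∈ ({G0, G1, G2, G3} : Set (ℝ × ℝ → ℝ × ℝ)), ∀ n, Pass G (t^(n0+n+2)) (n0+n+2) := by
    intro G hGm n
    obtain ⟨A, B, h1, h2⟩ := hG G hGm
    intro a q a' q' M ha hq ha' hq' hM1 hM2
    exact passage hst ht ht2 hC hCt h1 h2 hK (hn0 (n0+n) (by omega)) ha hq ha' hq' hM1 hM2
  have hv : ∀ n : ℕ, t^(n0+n+2) ≠ 0 := fun n => (pow_pos ht _).ne'
  choose x hx hsx using fun n => four_sink L hL r0 r1 r2 (hv n) (by omega : 1 ≤ n0+n+2)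
    (hp G0 (by simp) n) (hp G1 (by simp) n) (hp G2 (by simp) n) (hp G3 (by simp) n)
  refine many_sinks _ _ hsx ?_
  have anti : StrictAnti (fun n => t^(n0+n+2) * (20/17 * (x n).2)) := by
    refine strictAnti_nat_of_succ_lt fun n => ?_
    have a1 := (hx n).2.1
    have a2 := (hx (n+1)).2.2
    have e : t^(n0+(n+1)+2) = t^(n0+n+2) * t := by rw [← pow_succ]; congr 1
    have tp := pow_pos ht (n0+n+2)
    show t^(n0+(n+1)+2) * (20/17 * (x (n+1)).2) < t^(n0+n+2) * (20/17 * (x n).2)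
    rw [e, mul_assoc]
    refine mul_lt_mul_of_pos_left ?_ tp
    have a3 := (hx (n+1)).2.1
    have : t * (20/17 * (x (n+1)).2) ≤ 1/2 * (20/17 * (x (n+1)).2) :=
      mul_le_mul_of_nonneg_right ht2 (by linarith)
    linarith
  intro i j hij
  have := congrArg (fun z => (L.symm z).1) hij
  simp only [Homeomorph.symm_apply_apply] at this
  exact anti.injective this
end

section
open Filter Set Topology

structure Base (s t c0 : ℝ) (χ e0 e1 : ℝ → ℝ) : Prop where
  hst : s * t = 1
  ht : 0 < t
  hc0 : 1 ≤ c0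
  hs : c0 * t ≤ 1/4000
  x0 : χ 0 = 0
  xr : ∀ x ∈ Icc (0:ℝ) 1, χ x ∈ Icc (0:ℝ) 1
  xf : ∀ m ∈ Icc (0:ℝ) 1, ∀ x ∈ Icc 0 m, ∀ y ∈ Icc 0 m, |χ x - χ y| ≤ c0 * m^2 * |x - y|
  xm : ∀ x ∈ Icc (48/100:ℝ) (81/100), |χ x - 1/2| ≤ 1/1000
  xl : ∀ x ∈ Icc (48/100:ℝ) (81/100), ∀ y ∈ Icc (48/100:ℝ) (81/100), |χ x - χ y| ≤ 4/100 * |x - y|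
  e00 : e0 0 = t
  e10 : e1 0 = s
  e0r : ∀ x ∈ Icc (0:ℝ) 1, e0 x ∈ Icc (0:ℝ) s
  e1r : ∀ x ∈ Icc (0:ℝ) 1, e1 x ∈ Icc (0:ℝ) s
  e0l : ∀ x ∈ Icc (0:ℝ) 1, ∀ y ∈ Icc (0:ℝ) 1, |e0 x - e0 y| ≤ s * |x - y|
  e0m : ∀ x ∈ Icc (0:ℝ) (81/100), ∀ y ∈ Icc (0:ℝ) (81/100), |e0 x - e0 y| ≤ t/10000 * |x - y|
  e1l : ∀ x ∈ Icc (0:ℝ) 1, ∀ y ∈ Icc (0:ℝ) 1, |e1 x - e1 y| ≤ s^2/2 * |x - y|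

theorem mix {p p' x x' y y' s : ℝ} (hp : p ∈ Icc (0:ℝ) 1)
    (hx : x' ∈ Icc 0 s) (hy : y' ∈ Icc 0 s) :
    |((1 - p) * x + p * y) - ((1 - p') * x' + p' * y')| ≤ |x - x'| + p * |y - y'| + |p - p'| * s := by
  rw [show ((1 - p) * x + p * y) - ((1 - p') * x' + p' * y') = (1 - p) * (x - x') + p * (y - y') + (p - p') * (y' - x') by ring]
  refine (abs_add_le _ _).trans (add_le_add ((abs_add_le _ _).trans (add_le_add ?_ ?_)) ?_)
  · rw [abs_mul, abs_of_nonneg (by linarith [hp.2] : 0 ≤ 1 - p)]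
    exact mul_le_of_le_one_left (abs_nonneg _) (by linarith [hp.1])
  · rw [abs_mul, abs_of_nonneg hp.1]
  · rw [abs_mul]
    refine mul_le_mul_of_nonneg_left ?_ (abs_nonneg _)
    rw [abs_le]; constructor <;> linarith [hx.1, hx.2, hy.1, hy.2]

def aF (χ e0 e1 : ℝ → ℝ) (w b : ℝ) : ℝ := (1 - χ b) * e1 w + χ b * e0 w
def bF (χ e0 e1 : ℝ → ℝ) (w b : ℝ) : ℝ := (1 - χ w) * e0 b + χ w * e1 b

def SmallZ (ζ : ℝ) (Z : ℝ → ℝ → ℝ) : Prop := Z 0 0 = 0 ∧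
  ∀ w ∈ Icc (0:ℝ) 1, ∀ b ∈ Icc (0:ℝ) 1, ∀ w' ∈ Icc (0:ℝ) 1, ∀ b' ∈ Icc (0:ℝ) 1,
    |Z w b - Z w' b'| ≤ ζ * (|w - w'| + |b - b'|)

theorem addZ {k x x' z z' e f : ℝ} (hk : 0 ≤ k) (h1 : |x - x'| ≤ e) (h2 : |z - z'| ≤ f) :
    |k * (x + z) - k * (x' + z')| ≤ k * e + k * f := by
  rw [show k * (x + z) - k * (x' + z') = k * ((x - x') + (z - z')) by ring, abs_mul, abs_of_nonneg hk, ← mul_add]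
  exact mul_le_mul_of_nonneg_left ((abs_add_le _ _).trans (add_le_add h1 h2)) hk

set_option maxHeartbeats 1000000 in
theorem good_of {s t c0 : ℝ} {χ e0 e1 : ℝ → ℝ} (H : Base s t c0 χ e0 e1) {Za Zb : ℝ → ℝ → ℝ}
    (ha : SmallZ (t/10000) Za) (hb : SmallZ (t/10000) Zb) :
    Good s t c0 (2 * (c0 * s^2)) (fun w b => t * (aF χ e0 e1 w b + Za w b))
      (fun w b => s * (bF χ e0 e1 w b + Zb w b)) := by
  obtain ⟨hst, ht, hc0, hs, x0, xr, xf, xm, xl, e00, e10, e0r, e1r, e0l, e0m, e1l⟩ := H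
  have t1 : t ≤ 1/4000 := by nlinarith
  have s0 : 4000 ≤ s := by nlinarith
  have sc : c0 * 4000 ≤ s := by
    have := mul_le_mul_of_nonneg_right hs (by linarith : 0 ≤ s)
    have e : c0 * t * s = c0 := by linear_combination c0 * hst
    linarith
  have I1 : Icc 0 t ⊆ Icc (0:ℝ) 1 := Icc_subset_Icc le_rfl (by linarith)
  have I2 : Icc 0 t ⊆ Icc (0:ℝ) (81/100) := Icc_subset_Icc le_rfl (by linarith)
  have tt : t^2 ≤ t := by nlinarith
  have I3 : Icc 0 (t^2) ⊆ Icc 0 t := Icc_subset_Icc le_rfl tt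
  have I4 : Icc (48/100:ℝ) (81/100) ⊆ Icc (0:ℝ) (81/100) := Icc_subset_Icc (by norm_num) le_rfl
  have I5 : Icc (0:ℝ) (81/100) ⊆ Icc (0:ℝ) 1 := Icc_subset_Icc le_rfl (by norm_num)
  have s2 : s^2 * t = s := by linear_combination s * hst
  have s3 : s^2 * t^2 = 1 := by linear_combination (s * t + 1) * hst
  have i0 : (0:ℝ) ∈ Icc (0:ℝ) 1 := ⟨le_rfl, zero_le_one⟩
  have i00 : (0:ℝ) ∈ Icc (0:ℝ) (81/100) := ⟨le_rfl, by norm_num⟩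
  have xt : ∀ w ∈ Icc 0 t, χ w ≤ c0 * t^2 * t := by
    intro w hw
    have := xf t ⟨ht.le, by linarith⟩ w hw 0 ⟨le_rfl, ht.le⟩
    rw [x0, sub_zero, sub_zero, abs_of_nonneg hw.1] at this
    refine (le_abs_self _).trans (this.trans ?_)
    exact mul_le_mul_of_nonneg_left hw.2 (by positivity)
  have xt2 : ∀ w ∈ Icc 0 (t^2), χ w ≤ c0 * t^6 := by
    intro w hw
    have := xf (t^2) ⟨by positivity, by linarith⟩ w hw 0 ⟨le_rfl, by positivity⟩
    rw [x0, sub_zero, sub_zero, abs_of_nonneg hw.1] at this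
    refine (le_abs_self _).trans (this.trans ?_)
    calc c0 * (t^2)^2 * w ≤ c0 * (t^2)^2 * t^2 := mul_le_mul_of_nonneg_left hw.2 (by positivity)
      _ = _ := by ring
  have stw : ∀ x : ℝ, t * (s^2/2 * x) = s/2 * x := fun x => by linear_combination (s * x / 2) * hst
  have A1 : ∀ w ∈ Icc (0:ℝ) 1, ∀ b ∈ Icc (0:ℝ) 1, ∀ w' ∈ Icc (0:ℝ) 1, ∀ b' ∈ Icc (0:ℝ) 1,
      |aF χ e0 e1 w b - aF χ e0 e1 w' b'| ≤ |e1 w - e1 w'| + χ b * |e0 w - e0 w'| + |χ b - χ b'| * s :=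
    fun w hw b hb w' hw' b' hb' => mix (xr b hb) (e1r w' hw') (e0r w' hw')
  have B1 : ∀ w ∈ Icc (0:ℝ) 1, ∀ b ∈ Icc (0:ℝ) 1, ∀ w' ∈ Icc (0:ℝ) 1, ∀ b' ∈ Icc (0:ℝ) 1,
      |bF χ e0 e1 w b - bF χ e0 e1 w' b'| ≤ |e0 b - e0 b'| + χ w * |e1 b - e1 b'| + |χ w - χ w'| * s :=
    fun w hw b hb w' hw' b' hb' => mix (xr w hw) (e0r b' hb') (e1r b' hb')
  constructor
  · simp only [aF, x0, e10, ha.1]; linear_combination hst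
  · simp only [bF, x0, e00, hb.1]; linear_combination hst
  · intro w hw b hb' w' hw' b' hb''
    refine (addZ ht.le (A1 w (I1 hw) b (I1 hb') w' (I1 hw') b' (I1 hb''))
      (ha.2 w (I1 hw) b (I1 hb') w' (I1 hw') b' (I1 hb''))).trans ?_
    have k1 := mul_le_mul_of_nonneg_left (e1l w (I1 hw) w' (I1 hw')) ht.le
    rw [stw] at k1
    have k2 : χ b * |e0 w - e0 w'| ≤ 1 * (t/10000 * |w - w'|) :=
      mul_le_mul (xr b (I1 hb')).2 (e0m w (I2 hw) w' (I2 hw')) (abs_nonneg _) zero_le_one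
    have k3 := mul_le_mul_of_nonneg_left k2 ht.le
    have k4 := xf t ⟨ht.le, by linarith only [t1]⟩ b hb' b' hb''
    have k5 : t * (|χ b - χ b'| * s) ≤ c0 * t^2 * |b - b'| := by
      refine le_trans (le_of_eq ?_) k4
      linear_combination |χ b - χ b'| * hst
    have w0 := abs_nonneg (w - w')
    have b0 := abs_nonneg (b - b')
    have k6 : t^2 * |w - w'| ≤ s/1000 * |w - w'| := mul_le_mul_of_nonneg_right (by linarith only [tt, t1, s0]) w0
    have k7 : c0 * t^2 * |b - b'| ≤ 1/2 * |b - b'| := mul_le_mul_of_nonneg_right (by nlinarith only [hs, t1, ht]) b0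
    have k8 : t^2 * |b - b'| ≤ 1 * |b - b'| := mul_le_mul_of_nonneg_right (by linarith only [tt, t1]) b0
    have k9 : 1 * |b - b'| ≤ c0 * |b - b'| := mul_le_mul_of_nonneg_right hc0 b0
    have k10 : 0 ≤ s * |w - w'| := mul_nonneg (by linarith only [s0]) w0
    nlinarith only [k1, k3, k5, k6, k7, k8, k9, k10]
  · intro w hw b hb' w' hw' b' hb''
    have s00 : 0 ≤ s := by linarith only [s0]
    refine (addZ s00 (B1 w (I1 hw) b (I1 hb') w' (I1 hw') b' (I1 hb''))
      (hb.2 w (I1 hw) b (I1 hb') w' (I1 hw') b' (I1 hb''))).trans ?_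
    have w0 := abs_nonneg (w - w')
    have b0 := abs_nonneg (b - b')
    have k1 : s * |e0 b - e0 b'| ≤ 1/10000 * |b - b'| := by
      refine (mul_le_mul_of_nonneg_left (e0m b (I2 hb') b' (I2 hb'')) s00).trans (le_of_eq ?_)
      linear_combination (|b - b'| / 10000) * hst
    have k2 : s * (χ w * |e1 b - e1 b'|) ≤ c0 / 2 * |b - b'| := by
      have := mul_le_mul (xt w hw) (e1l b (I1 hb') b' (I1 hb'')) (abs_nonneg _) (by positivity)
      refine (mul_le_mul_of_nonneg_left this s00).trans (le_of_eq ?_)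
      linear_combination (c0 / 2 * |b - b'|) * ((s*t)^2 + s * t + 1) * hst
    have k3 : s * (|χ w - χ w'| * s) ≤ c0 * |w - w'| := by
      have := mul_le_mul_of_nonneg_left (xf t ⟨ht.le, by linarith only [t1]⟩ w hw w' hw') (sq_nonneg s)
      refine le_trans (le_of_eq (by ring)) (this.trans (le_of_eq ?_))
      linear_combination (c0 * |w - w'|) * s3
    have k4 : s * (t/10000 * (|w - w'| + |b - b'|)) = 1/10000 * (|w - w'| + |b - b'|) := by
      linear_combination (1/10000 * (|w - w'| + |b - b'|)) * hst
    have k5 : c0 * 4000 * |w - w'| ≤ s * |w - w'| := mul_le_mul_of_nonneg_right sc w0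
    have k6 : 1 * |w - w'| ≤ c0 * |w - w'| := mul_le_mul_of_nonneg_right hc0 w0
    have k9 : 1 * |b - b'| ≤ c0 * |b - b'| := mul_le_mul_of_nonneg_right hc0 b0
    linarith only [k1, k2, k3, k4, k5, k6, k9, w0, b0]
  · intro w hw b hb'
    have hw1 := I1 (I3 hw)
    have hb1 := I5 (I4 hb')
    have z := ha.2 w hw1 b hb1 0 i0 0 i0
    rw [ha.1, sub_zero, sub_zero, sub_zero, abs_of_nonneg hw1.1, abs_of_nonneg hb1.1] at z
    have z1 : |Za w b| ≤ t := z.trans (by nlinarith only [hw1.2, hb1.2, ht])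
    have y1 : |t * e1 w - 1| ≤ t := by
      have := e1l w hw1 0 i0
      rw [e10, sub_zero, abs_of_nonneg hw.1] at this
      have e : t * e1 w - 1 = t * (e1 w - s) := by linear_combination hst
      rw [e, abs_mul, abs_of_pos ht]
      have h1 : s^2/2 * w ≤ s^2/2 * t^2 := mul_le_mul_of_nonneg_left hw.2 (by positivity)
      have : |e1 w - s| ≤ 1 := by linarith only [this, h1, s3]
      exact mul_le_of_le_one_right ht.le this
    have y2 : |t * e0 w| ≤ t := by
      have := e0m w (I2 (I3 hw)) 0 i00
      rw [e00, sub_zero, abs_of_nonneg hw.1] at this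
      rw [abs_mul, abs_of_pos ht]
      refine mul_le_of_le_one_right ht.le ?_
      have v := abs_le.1 this
      have : t / 10000 * w ≤ t := by nlinarith only [hw1.2, ht, hw1.1]
      rw [abs_le]; constructor <;> linarith only [v.1, v.2, this, t1]
    have x1 := xm b hb'
    have xr1 := xr b hb1
    show |t * (((1 - χ b) * e1 w + χ b * e0 w) + Za w b) - 1/2| ≤ 1/200
    rw [show t * (((1 - χ b) * e1 w + χ b * e0 w) + Za w b) - 1/2 =
      (1/2 - χ b) + ((1 - χ b) * (t * e1 w - 1) + χ b * (t * e0 w) + t * Za w b) by ring]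
    have j1 : |(1 - χ b) * (t * e1 w - 1)| ≤ t := by
      rw [abs_mul, abs_of_nonneg (by linarith only [xr1.2])]
      exact (mul_le_of_le_one_left (abs_nonneg _) (by linarith only [xr1.1])).trans y1
    have j2 : |χ b * (t * e0 w)| ≤ t := by
      rw [abs_mul, abs_of_nonneg xr1.1]
      exact (mul_le_of_le_one_left (abs_nonneg _) xr1.2).trans y2
    have j3 : |t * Za w b| ≤ t := by
      rw [abs_mul, abs_of_pos ht]
      exact (mul_le_of_le_one_left (abs_nonneg _) (by linarith only [t1])).trans z1
    have := abs_le.1 j1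
    have := abs_le.1 j2
    have := abs_le.1 j3
    have := abs_le.1 x1
    rw [abs_le]
    constructor <;> linarith
  · intro w hw b hb'
    have s00 : 0 ≤ s := by linarith only [s0]
    have hw1 := I1 (I3 hw)
    have hb1 := I5 (I4 hb')
    have z := hb.2 w hw1 b hb1 0 i0 0 i0
    rw [hb.1, sub_zero, sub_zero, sub_zero, abs_of_nonneg hw1.1, abs_of_nonneg hb1.1] at z
    have z1 : |s * Zb w b| ≤ 2/10000 := by
      rw [abs_mul, abs_of_nonneg s00]
      have := mul_le_mul_of_nonneg_left z s00
      have e : s * (t/10000 * (w + b)) = 1/10000 * (w + b) := by linear_combination (1/10000 * (w+b)) * hst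
      linarith only [this, e, hw1.2, hb1.2]
    have y1 : |s * (e0 b - t)| ≤ 1/10000 := by
      have := e0m b (I4 hb') 0 i00
      rw [e00, sub_zero, abs_of_nonneg hb1.1] at this
      rw [abs_mul, abs_of_nonneg s00]
      have := mul_le_mul_of_nonneg_left this s00
      have e : s * (t/10000 * b) = 1/10000 * b := by linear_combination (1/10000 * b) * hst
      linarith only [this, e, hb1.2]
    have y2 : |s * (χ w * (e1 b - e0 b))| ≤ 1/1000 := by
      have xr1 := xr w hw1
      have d : |e1 b - e0 b| ≤ s := by
        have := e1r b hb1
        have := e0r b hb1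
        rw [abs_le]; constructor <;> linarith [(e1r b hb1).1, (e1r b hb1).2, (e0r b hb1).1, (e0r b hb1).2]
      rw [abs_mul, abs_mul, abs_of_nonneg s00, abs_of_nonneg xr1.1]
      have := mul_le_mul_of_nonneg_left (mul_le_mul (xt2 w hw) d (abs_nonneg _) (by positivity)) s00
      refine this.trans ?_
      have e : s * (c0 * t^6 * s) = (c0 * t) * t^3 := by linear_combination (c0 * t^4) * s3
      rw [e]
      have t3 : t^3 ≤ 1 := pow_le_one₀ ht.le (by linarith only [t1])
      have := mul_le_mul hs t3 (by positivity) (by norm_num)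
      linarith only [this]
    show |s * (((1 - χ w) * e0 b + χ w * e1 b) + Zb w b) - 1| ≤ 1/200
    have e : s * (((1 - χ w) * e0 b + χ w * e1 b) + Zb w b) - 1 =
      s * (e0 b - t) + s * (χ w * (e1 b - e0 b)) + s * Zb w b := by linear_combination hst
    rw [e]
    have := abs_le.1 z1
    have := abs_le.1 y1
    have := abs_le.1 y2
    rw [abs_le]
    constructor <;> linarith
  · intro w hw b hb' w' hw' b' hb''
    have hw1 := I1 (I3 hw)
    have hb1 := I5 (I4 hb')
    have hw1' := I1 (I3 hw')
    have hb1' := I5 (I4 hb'')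
    refine (addZ ht.le (A1 w hw1 b hb1 w' hw1' b' hb1') (ha.2 w hw1 b hb1 w' hw1' b' hb1')).trans ?_
    have k1 := mul_le_mul_of_nonneg_left (e1l w hw1 w' hw1') ht.le
    rw [stw] at k1
    have k2 : χ b * |e0 w - e0 w'| ≤ 1 * (t/10000 * |w - w'|) :=
      mul_le_mul (xr b hb1).2 (e0m w (I2 (I3 hw)) w' (I2 (I3 hw'))) (abs_nonneg _) zero_le_one
    have k3 := mul_le_mul_of_nonneg_left k2 ht.le
    have k4 := xl b hb' b' hb''
    have k5 : t * (|χ b - χ b'| * s) ≤ 4/100 * |b - b'| := by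
      refine le_trans (le_of_eq ?_) k4
      linear_combination |χ b - χ b'| * hst
    have w0 := abs_nonneg (w - w')
    have b0 := abs_nonneg (b - b')
    have k6 : t^2 * |w - w'| ≤ 1 * |w - w'| := mul_le_mul_of_nonneg_right (by linarith only [tt, t1, s0]) w0
    have k8 : t^2 * |b - b'| ≤ 1 * |b - b'| := mul_le_mul_of_nonneg_right (by linarith only [tt, t1]) b0
    have k9 : (s/2 + 1) * |w - w'| ≤ 2 * (c0 * s^2) * |w - w'| :=
      mul_le_mul_of_nonneg_right (by nlinarith only [hc0, s0]) w0
    nlinarith only [k1, k3, k5, k6, k8, k9, w0, b0]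
  · intro w hw b hb' w' hw' b' hb''
    have s00 : 0 ≤ s := by linarith only [s0]
    have hw1 := I1 (I3 hw)
    have hb1 := I5 (I4 hb')
    have hw1' := I1 (I3 hw')
    have hb1' := I5 (I4 hb'')
    refine (addZ s00 (B1 w hw1 b hb1 w' hw1' b' hb1') (hb.2 w hw1 b hb1 w' hw1' b' hb1')).trans ?_
    have w0 := abs_nonneg (w - w')
    have b0 := abs_nonneg (b - b')
    have k1 : s * |e0 b - e0 b'| ≤ 1/10000 * |b - b'| := by
      refine (mul_le_mul_of_nonneg_left (e0m b (I4 hb') b' (I4 hb'')) s00).trans (le_of_eq ?_)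
      linear_combination (|b - b'| / 10000) * hst
    have k2 : s * (χ w * |e1 b - e1 b'|) ≤ 1/1000 * |b - b'| := by
      have := mul_le_mul (xt2 w hw) (e1l b hb1 b' hb1') (abs_nonneg _) (by positivity)
      refine (mul_le_mul_of_nonneg_left this s00).trans ?_
      have e : s * (c0 * t^6 * (s^2/2 * |b - b'|)) = (c0 * t) / 2 * t^2 * |b - b'| := by
        linear_combination (c0 / 2 * |b - b'| * t^3) * ((s*t)^2 + s * t + 1) * hst
      rw [e]
      refine mul_le_mul_of_nonneg_right ?_ b0
      have := mul_le_mul hs (by linarith only [tt, t1] : t^2 ≤ 1) (by positivity) (by norm_num)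
      linarith only [this]
    have k3 : s * (|χ w - χ w'| * s) ≤ c0 * s^2 * |w - w'| := by
      have := xf 1 ⟨zero_le_one, le_rfl⟩ w hw1 w' hw1'
      have := mul_le_mul_of_nonneg_left this (sq_nonneg s)
      linarith only [this]
    have k4 : s * (t/10000 * (|w - w'| + |b - b'|)) = 1/10000 * (|w - w'| + |b - b'|) := by
      linear_combination (1/10000 * (|w - w'| + |b - b'|)) * hst
    have k5 : 1 * |w - w'| ≤ (c0 * s^2) * |w - w'| := mul_le_mul_of_nonneg_right (by nlinarith only [hc0, s0]) w0
    linarith only [k1, k2, k3, k4, k5, w0, b0]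
end

section
open Filter Set Topology

noncomputable def chi (b : ℝ) : ℝ :=
  (1 - (1 - 2*b)^15)^3 * (8 + 9 * (1 - 2*b)^15 + 3 * ((1 - 2*b)^15)^2) / 16

theorem chi_flip (b : ℝ) : chi (1 - b) = 1 - chi b := by
  unfold chi
  rw [show (1 - 2 * (1 - b)) = -(1 - 2 * b) by ring]
  generalize hv : 1 - 2*b = v
  rw [show (-v)^15 = -v^15 by ring]
  generalize v^15 = θ
  ring

theorem chi_zero : chi 0 = 0 := by norm_num [chi]

theorem chi_deriv (b : ℝ) : HasDerivAt chi ((15/16) * (1 - (1 - 2*b)^30)^2 * (30 * (1 - 2*b)^14)) b := by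
  have h1 : HasDerivAt (fun b : ℝ => (1 - 2*b)) (-2) b := by
    simpa using ((hasDerivAt_id b).const_mul 2).const_sub 1
  have h2 := h1.pow 15
  have h3 : HasDerivAt (fun θ : ℝ => (1 - θ)^3 * (8 + 9 * θ + 3 * θ^2) / 16)
      (-(15/16) * (1 - ((1 - 2*b)^15)^2)^2) ((1-2*b)^15) := by
    generalize (1-2*b)^15 = θ
    have a := (((hasDerivAt_id θ).const_sub 1).pow 3).mul
      ((((hasDerivAt_id θ).const_mul 9).const_add 8).add (((hasDerivAt_id θ).pow 2).const_mul 3))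
    have a' := a.div_const 16
    refine a'.congr_deriv ?_
    simp
    ring
  have h4 := HasDerivAt.comp b h3 h2
  refine h4.congr_deriv ?_
  push_cast
  ring

theorem chi_lip {a b M : ℝ} (h : ∀ x ∈ Icc a b, (15/16) * (1 - (1 - 2*x)^30)^2 * (30 * (1 - 2*x)^14) ≤ M)
    {x y : ℝ} (hx : x ∈ Icc a b) (hy : y ∈ Icc a b) : |chi x - chi y| ≤ M * |x - y| := by
  have := (convex_Icc a b).norm_image_sub_le_of_norm_hasDerivWithin_le (f := chi) (C := M)
    (fun z _ => (chi_deriv z).hasDerivWithinAt) (fun z hz => by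
      rw [Real.norm_eq_abs, abs_of_nonneg]
      · exact h z hz
      · have : 0 ≤ (1 - 2*z)^14 := Even.pow_nonneg (by decide) _
        positivity) hy hx
  simpa [Real.norm_eq_abs] using this

theorem chi_mono_bound {x : ℝ} (hx : x ∈ Icc (48/100:ℝ) (81/100)) : |1 - 2*x| ≤ 62/100 := by
  rw [abs_le]; constructor <;> linarith [hx.1, hx.2]

theorem chi_range {x : ℝ} (hx : x ∈ Icc (0:ℝ) 1) : chi x ∈ Icc (0:ℝ) 1 := by
  have hv : |(1 - 2*x)^15| ≤ 1 := by
    rw [abs_pow]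
    exact pow_le_one₀ (abs_nonneg _) (by rw [abs_le]; constructor <;> linarith [hx.1, hx.2])
  unfold chi
  generalize (1 - 2*x)^15 = θ at hv
  obtain ⟨h1, h2⟩ := abs_le.1 hv
  constructor
  · have : 0 ≤ 8 + 9 * θ + 3 * θ^2 := by nlinarith
    have : 0 ≤ 1 - θ := by linarith
    positivity
  · have e : 1 - (1 - θ)^3 * (8 + 9 * θ + 3 * θ^2) / 16 = (1 + θ)^3 * (8 - 9 * θ + 3 * θ^2) / 16 := by ring
    have : 0 ≤ 8 - 9 * θ + 3 * θ^2 := by nlinarith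
    have : 0 ≤ 1 + θ := by linarith
    have : 0 ≤ (1 + θ)^3 * (8 - 9 * θ + 3 * θ^2) / 16 := by positivity
    linarith

theorem chi_xm {x : ℝ} (hx : x ∈ Icc (48/100:ℝ) (81/100)) : |chi x - 1/2| ≤ 1/1000 := by
  have hv : |(1 - 2*x)^15| ≤ 8/10000 := by
    rw [abs_pow]
    exact (pow_le_pow_left₀ (abs_nonneg _) (chi_mono_bound hx) 15).trans (by norm_num)
  unfold chi
  generalize (1 - 2*x)^15 = θ at hv
  have e : (1 - θ)^3 * (8 + 9 * θ + 3 * θ^2) / 16 - 1/2 = -(15/16 * (1 - 2*θ^2/3 + θ^4/5)) * θ := by ring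
  rw [e, abs_mul, abs_neg]
  have h2 : θ^2 ≤ 1 := by
    rw [← sq_abs]; nlinarith [abs_nonneg θ]
  have : |15/16 * (1 - 2*θ^2/3 + θ^4/5)| ≤ 1 := by
    rw [abs_le]; constructor <;> nlinarith [sq_nonneg θ, sq_nonneg (θ^2)]
  nlinarith [abs_nonneg θ]

theorem chi_xl {x y : ℝ} (hx : x ∈ Icc (48/100:ℝ) (81/100)) (hy : y ∈ Icc (48/100:ℝ) (81/100)) :
    |chi x - chi y| ≤ 4/100 * |x - y| := by
  refine chi_lip (fun z hz => ?_) hx hy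
  have h0 : 0 ≤ (1 - 2*z)^14 := Even.pow_nonneg (by decide) _
  have h1 : (1 - 2*z)^14 ≤ 125/100000 := by
    have : (1 - 2*z)^14 = |1 - 2*z|^14 := by rw [← abs_pow, abs_of_nonneg h0]
    rw [this]
    exact (pow_le_pow_left₀ (abs_nonneg _) (chi_mono_bound hz) 14).trans (by norm_num)
  have h2 : 0 ≤ (1 - 2*z)^30 := Even.pow_nonneg (by decide) _
  have h3 : (1 - 2*z)^30 ≤ 1 := by
    rw [show (1 - 2*z)^30 = |1 - 2*z|^30 by rw [← abs_pow, abs_of_nonneg h2]]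
    exact pow_le_one₀ (abs_nonneg _) ((chi_mono_bound hz).trans (by norm_num))
  generalize (1 - 2*z)^30 = P at h2 h3 ⊢
  generalize (1 - 2*z)^14 = Q at h0 h1 ⊢
  have h4 : (1 - P)^2 ≤ 1 := by nlinarith
  nlinarith

theorem chi_xf {m : ℝ} (hm : m ∈ Icc (0:ℝ) 1) {x y : ℝ} (hx : x ∈ Icc 0 m) (hy : y ∈ Icc 0 m) :
    |chi x - chi y| ≤ 110000 * m^2 * |x - y| := by
  refine chi_lip (fun z hz => ?_) hx hy
  have hz1 : |1 - 2*z| ≤ 1 := by rw [abs_le]; constructor <;> linarith [hz.1, hz.2, hm.2]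
  have h0 : 0 ≤ (1 - 2*z)^14 := Even.pow_nonneg (by decide) _
  have h1 : (1 - 2*z)^14 ≤ 1 := by
    rw [show (1 - 2*z)^14 = |1 - 2*z|^14 by rw [← abs_pow, abs_of_nonneg h0]]
    exact pow_le_one₀ (abs_nonneg _) hz1
  have h2 : 0 ≤ (1 - 2*z)^30 := Even.pow_nonneg (by decide) _
  have h3 : (1 - 2*z)^30 ≤ 1 := by
    rw [show (1 - 2*z)^30 = |1 - 2*z|^30 by rw [← abs_pow, abs_of_nonneg h2]]
    exact pow_le_one₀ (abs_nonneg _) hz1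
  have h4 : 1 - (1 - 2*z)^30 ≤ 60 * m := by
    have := one_add_mul_le_pow (a := -(2*z)) (by linarith [hz.2, hm.2]) 30
    have e : 1 + -(2*z) = 1 - 2*z := by ring
    rw [e] at this
    push_cast at this
    generalize (1 - 2*z)^30 = P at this ⊢
    linarith [hz.2]
  generalize (1 - 2*z)^30 = P at h2 h3 h4 ⊢
  generalize (1 - 2*z)^14 = Q at h0 h1 ⊢
  have h5 : (1 - P)^2 ≤ (60 * m)^2 := pow_le_pow_left₀ (by linarith) h4 2
  have h6 : (1 - P)^2 * Q ≤ (60*m)^2 * 1 := mul_le_mul h5 h1 h0 (by positivity)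
  nlinarith [sq_nonneg m]

noncomputable def ez (n : ℕ) (w : ℝ) : ℝ := 1/(n:ℝ) + (1 - 1/(n:ℝ)) * w^n
noncomputable def eo (n : ℕ) (w : ℝ) : ℝ := 1/(n:ℝ) + (1 - 1/(n:ℝ)) * ∑ i ∈ Finset.range (n+1), (1-w)^i

theorem eo_flip (n : ℕ) (w : ℝ) : w * eo n w = 1 - (1 - w) * ez n (1 - w) := by
  have := mul_neg_geom_sum (1 - w) (n+1)
  unfold eo ez
  rw [show 1 - (1 - w) = w by ring] at this
  linear_combination (1 - 1/(n:ℝ)) * this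

theorem powlip {m x y : ℝ} (hx : x ∈ Icc 0 m) (hy : y ∈ Icc 0 m) (n : ℕ) :
    |x^n - y^n| ≤ n * m^(n-1) * |x - y| := by
  refine (abs_pow_sub_pow_le x y n).trans ?_
  have : max |x| |y| ≤ m := by
    rw [abs_of_nonneg hx.1, abs_of_nonneg hy.1]; exact max_le hx.2 hy.2
  have h2 := pow_le_pow_left₀ (le_max_of_le_left (abs_nonneg x)) this (n-1)
  calc |x - y| * n * max |x| |y| ^ (n-1) ≤ |x - y| * n * m^(n-1) := by gcongr
    _ = _ := by ring

theorem base_of {n : ℕ} (hn : (440000000:ℝ) ≤ n) (hm : (n:ℝ)^2 * (81/100:ℝ)^(n-1) ≤ 1/10000) :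
    Base n (1/n) 110000 chi (ez n) (eo n) := by
  have n0 : (0:ℝ) < n := by linarith
  have hn0 : n ≠ 0 := by rintro rfl; simp at n0
  have t0 : 0 < 1/(n:ℝ) := by positivity
  have st : (n:ℝ) * (1/n) = 1 := by field_simp
  have t1 : 1/(n:ℝ) ≤ 1 := by rw [div_le_one n0]; linarith
  refine ⟨st, t0, by norm_num, ?_, chi_zero, fun x hx => chi_range hx, fun m hm x hx y hy => chi_xf hm hx hy,
    fun x hx => chi_xm hx, fun x hx y hy => chi_xl hx hy, ?_, ?_, ?_, ?_, ?_, ?_, ?_⟩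
  · rw [mul_one_div, div_le_iff₀ n0]; linarith
  · simp [ez, hn0]
  · simp only [eo, sub_zero, one_pow, Finset.sum_const, Finset.card_range, nsmul_eq_mul]
    push_cast
    linear_combination -st
  · intro x hx
    have h1 : x^n ≤ 1 := pow_le_one₀ hx.1 hx.2
    have h2 : 0 ≤ x^n := pow_nonneg hx.1 n
    unfold ez
    constructor
    · have : 0 ≤ (1 - 1/(n:ℝ)) * x^n := mul_nonneg (by linarith) h2
      linarith
    · have : (1 - 1/(n:ℝ)) * x^n ≤ (1 - 1/(n:ℝ)) * 1 := mul_le_mul_of_nonneg_left h1 (by linarith)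
      linarith
  · intro x hx
    have h1 : ∑ i ∈ Finset.range (n+1), (1-x)^i ≤ ∑ i ∈ Finset.range (n+1), (1:ℝ) :=
      Finset.sum_le_sum fun i _ => pow_le_one₀ (by linarith [hx.2]) (by linarith [hx.1])
    have h2 : 0 ≤ ∑ i ∈ Finset.range (n+1), (1-x)^i :=
      Finset.sum_nonneg fun i _ => pow_nonneg (by linarith [hx.2]) i
    simp only [Finset.sum_const, Finset.card_range, nsmul_eq_mul, mul_one] at h1
    push_cast at h1
    unfold eo
    constructor
    · have := mul_nonneg (by linarith : 0 ≤ 1 - 1/(n:ℝ)) h2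
      linarith
    · have := mul_le_mul_of_nonneg_left h1 (by linarith : 0 ≤ 1 - 1/(n:ℝ))
      have e : (1 - 1/(n:ℝ)) * (n + 1) = n - 1/(n:ℝ) := by linear_combination -st
      linarith
  · intro x hx y hy
    have := powlip hx hy n
    rw [one_pow, mul_one] at this
    unfold ez
    rw [show 1/(n:ℝ) + (1 - 1/(n:ℝ)) * x^n - (1/(n:ℝ) + (1 - 1/(n:ℝ)) * y^n) = (1 - 1/(n:ℝ)) * (x^n - y^n) by ring,
      abs_mul, abs_of_nonneg (by linarith : 0 ≤ 1 - 1/(n:ℝ))]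
    exact (mul_le_of_le_one_left (abs_nonneg _) (by linarith)).trans this
  · intro x hx y hy
    have := powlip hx hy n
    unfold ez
    rw [show 1/(n:ℝ) + (1 - 1/(n:ℝ)) * x^n - (1/(n:ℝ) + (1 - 1/(n:ℝ)) * y^n) = (1 - 1/(n:ℝ)) * (x^n - y^n) by ring,
      abs_mul, abs_of_nonneg (by linarith : 0 ≤ 1 - 1/(n:ℝ))]
    refine (mul_le_of_le_one_left (abs_nonneg _) (by linarith)).trans (this.trans ?_)
    refine mul_le_mul_of_nonneg_right ?_ (abs_nonneg _)
    have := mul_le_mul_of_nonneg_left hm t0.le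
    have e : 1/(n:ℝ) * ((n:ℝ)^2 * (81/100:ℝ)^(n-1)) = n * (81/100:ℝ)^(n-1) := by field_simp
    rw [e] at this
    linarith
  · intro x hx y hy
    have hx' : 1 - x ∈ Icc (0:ℝ) 1 := ⟨by linarith [hx.2], by linarith [hx.1]⟩
    have hy' : 1 - y ∈ Icc (0:ℝ) 1 := ⟨by linarith [hy.2], by linarith [hy.1]⟩
    have h1 : ∀ i ∈ Finset.range (n+1), |(1-x)^i - (1-y)^i| ≤ (i:ℝ) * |x - y| := fun i _ => by
      have := powlip hx' hy' i
      rw [one_pow, mul_one] at this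
      rwa [show (1 - x) - (1 - y) = y - x by ring, abs_sub_comm y x] at this
    have h2 := (Finset.abs_sum_le_sum_abs (fun i => (1-x)^i - (1-y)^i) (Finset.range (n+1))).trans (Finset.sum_le_sum h1)
    rw [← Finset.sum_mul] at h2
    have h3 : (∑ i ∈ Finset.range (n+1), (i:ℝ)) = n * (n+1) / 2 := by
      have := Finset.sum_range_id_mul_two (n+1)
      have h := congrArg (Nat.cast (R := ℝ)) this
      push_cast [Nat.add_sub_cancel] at h
      linarith
    rw [h3, Finset.sum_sub_distrib] at h2
    unfold eo
    rw [add_sub_add_left_eq_sub, ← mul_sub, abs_mul, abs_of_nonneg (by linarith : 0 ≤ 1 - 1/(n:ℝ))]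
    have := mul_le_mul_of_nonneg_left h2 (by linarith : 0 ≤ 1 - 1/(n:ℝ))
    refine this.trans ?_
    rw [← mul_assoc]
    refine mul_le_mul_of_nonneg_right ?_ (abs_nonneg _)
    have e : (1 - 1/(n:ℝ)) * (n * (n+1) / 2) = (n:ℝ)^2/2 - 1/2 := by linear_combination (-(n+1)/2) * st
    linarith

theorem exists_n : ∃ n : ℕ, (440000000:ℝ) ≤ n ∧ (n:ℝ)^2 * (81/100:ℝ)^(n-1) ≤ 1/10000 := by
  have h1 := tendsto_pow_const_mul_const_pow_of_abs_lt_one 2 (r := (81/100:ℝ)) (by rw [abs_of_pos] <;> norm_num)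
  have h2 := h1.eventually (eventually_le_nhds (show (0:ℝ) < 81/1000000 by norm_num))
  have h3 := tendsto_natCast_atTop_atTop (R := ℝ) |>.eventually_ge_atTop 440000000
  obtain ⟨n, hn, hm⟩ := (h2.and h3).exists
  refine ⟨n, hm, ?_⟩
  cases n with
  | zero => norm_num at hm
  | succ k =>
    rw [pow_succ (81/100:ℝ)] at hn
    simp only [Nat.add_sub_cancel]
    generalize hq : (((k+1:ℕ):ℝ))^2 = q at *
    have : q * (81/100:ℝ)^k * (81/100) ≤ 81/1000000 := by
      rw [mul_assoc]; exact hn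
    linarith
end

section
open Filter Set Topology

def RPoly (g : ℝ × ℝ → ℝ) : Prop :=
  ∃ P : MvPolynomial (Fin 2) ℝ, ∀ p : ℝ × ℝ, g p = MvPolynomial.eval ![p.1, p.2] P

namespace RPoly
variable {g k : ℝ × ℝ → ℝ}
theorem cst (a : ℝ) : RPoly (fun _ => a) := ⟨MvPolynomial.C a, by simp⟩
theorem fs : RPoly (fun p => p.1) := ⟨MvPolynomial.X 0, by simp⟩
theorem sn : RPoly (fun p => p.2) := ⟨MvPolynomial.X 1, by simp⟩
theorem add (hg : RPoly g) (hk : RPoly k) : RPoly (fun p => g p + k p) := by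
  obtain ⟨P, hP⟩ := hg; obtain ⟨Q, hQ⟩ := hk
  exact ⟨P + Q, fun p => by simp [hP, hQ]⟩
theorem sub (hg : RPoly g) (hk : RPoly k) : RPoly (fun p => g p - k p) := by
  obtain ⟨P, hP⟩ := hg; obtain ⟨Q, hQ⟩ := hk
  exact ⟨P - Q, fun p => by simp [hP, hQ]⟩
theorem mul (hg : RPoly g) (hk : RPoly k) : RPoly (fun p => g p * k p) := by
  obtain ⟨P, hP⟩ := hg; obtain ⟨Q, hQ⟩ := hk
  exact ⟨P * Q, fun p => by simp [hP, hQ]⟩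
theorem pow (hg : RPoly g) (n : ℕ) : RPoly (fun p => g p ^ n) := by
  obtain ⟨P, hP⟩ := hg
  exact ⟨P ^ n, fun p => by simp [hP]⟩
theorem div (hg : RPoly g) (a : ℝ) : RPoly (fun p => g p / a) := by
  simpa [div_eq_mul_inv] using hg.mul (cst a⁻¹)
theorem sum {F : ℕ → ℝ × ℝ → ℝ} (h : ∀ i, RPoly (F i)) (n : ℕ) :
    RPoly (fun p => ∑ i ∈ Finset.range n, F i p) := by
  choose P hP using h
  exact ⟨∑ i ∈ Finset.range n, P i, fun p => by simp [hP]⟩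
theorem analytic (hg : RPoly g) : AnalyticOnNhd ℝ g univ := by
  obtain ⟨P, hP⟩ := hg
  rw [show g = fun p : ℝ × ℝ => MvPolynomial.aeval ![p.1, p.2] P from funext fun p => by
    rw [hP]; rfl]
  refine AnalyticOnNhd.aeval_mvPolynomial (fun i => ?_) P
  fin_cases i
  · exact analyticOnNhd_fst
  · exact analyticOnNhd_snd
theorem contDiff (hg : RPoly g) : ContDiff ℝ 1 g := hg.analytic.contDiff
theorem bound (hg : RPoly g) : ∃ M : ℝ, 0 < M ∧ (∀ w ∈ Icc (0:ℝ) 1, ∀ b ∈ Icc (0:ℝ) 1, |g (w, b)| ≤ M) ∧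
    ∀ w ∈ Icc (0:ℝ) 1, ∀ b ∈ Icc (0:ℝ) 1, ∀ w' ∈ Icc (0:ℝ) 1, ∀ b' ∈ Icc (0:ℝ) 1,
      |g (w, b) - g (w', b')| ≤ M * (|w - w'| + |b - b'|) := by
  have hc : IsCompact (Icc (0:ℝ) 1 ×ˢ Icc (0:ℝ) 1) := isCompact_Icc.prod isCompact_Icc
  obtain ⟨M1, h1⟩ := hc.exists_bound_of_continuousOn hg.contDiff.continuous.continuousOn
  obtain ⟨K, hK⟩ := (LocallyLipschitz.locallyLipschitzOn hg.contDiff.locallyLipschitz (s := Icc (0:ℝ) 1 ×ˢ Icc (0:ℝ) 1)).exists_lipschitzOnWith_of_compact hc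
  refine ⟨max (max M1 K) 1, by positivity, fun w hw b hb => ?_, fun w hw b hb w' hw' b' hb' => ?_⟩
  · exact (h1 (w, b) ⟨hw, hb⟩).trans ((le_max_left _ _).trans (le_max_left _ _))
  · have := hK.dist_le_mul (w, b) ⟨hw, hb⟩ (w', b') ⟨hw', hb'⟩
    rw [Real.dist_eq, Prod.dist_eq, Real.dist_eq, Real.dist_eq] at this
    refine this.trans (mul_le_mul ((le_max_right _ _).trans (le_max_left _ _)) ?_ (by positivity) (by positivity))
    exact max_le (by simp) (by simp)
end RPoly

/-- bounded and Lipschitz on the unit interval -/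
def BL (ε : ℝ) (g : ℝ → ℝ) : Prop := (∀ x ∈ Icc (0:ℝ) 1, |g x| ≤ ε) ∧
  ∀ x ∈ Icc (0:ℝ) 1, ∀ y ∈ Icc (0:ℝ) 1, |g x - g y| ≤ ε * |x - y|

theorem BL.mul {a b : ℝ} {g k : ℝ → ℝ} (hg : BL a g) (hk : BL b k) : BL (2 * (a * b)) (fun x => g x * k x) := by
  have a0 : 0 ≤ a := (abs_nonneg _).trans (hg.1 0 (by simp))
  have b0 : 0 ≤ b := (abs_nonneg _).trans (hk.1 0 (by simp))
  constructor
  · intro x hx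
    rw [abs_mul]
    have := mul_le_mul (hg.1 x hx) (hk.1 x hx) (abs_nonneg _) a0
    nlinarith [mul_nonneg a0 b0]
  · intro x hx y hy
    rw [show g x * k x - g y * k y = (g x - g y) * k x + g y * (k x - k y) by ring]
    refine (abs_add_le _ _).trans ?_
    rw [abs_mul, abs_mul]
    have h1 := mul_le_mul (hg.2 x hx y hy) (hk.1 x hx) (abs_nonneg _) (by positivity)
    have h2 := mul_le_mul (hg.1 y hy) (hk.2 x hx y hy) (abs_nonneg _) a0
    linarith

theorem BL.mono {a b : ℝ} {g : ℝ → ℝ} (hg : BL a g) (h : a ≤ b) : BL b g :=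
  ⟨fun x hx => (hg.1 x hx).trans h, fun x hx y hy => (hg.2 x hx y hy).trans (mul_le_mul_of_nonneg_right h (abs_nonneg _))⟩

noncomputable def uu (w : ℝ) : ℝ := w * (w - 1) / 2
noncomputable def hw (M : ℕ) (w : ℝ) : ℝ := (w - 1) / 2 * (uu w ^ (M+1) * (2 - uu w ^ (M+2)))
noncomputable def hh (M : ℕ) (w : ℝ) : ℝ := w * hw M w

theorem hh_eq (M : ℕ) (w : ℝ) : hh M w = 1 - (1 - uu w ^ (M+2))^2 := by
  unfold hh hw
  have : w * ((w - 1)/2) = uu w := by unfold uu; ring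
  rw [← mul_assoc, this]; ring

theorem hh_flip (M : ℕ) (w : ℝ) : hh M (1 - w) = hh M w := by
  rw [hh_eq, hh_eq, show uu (1 - w) = uu w by unfold uu; ring]

theorem hw_zero (M : ℕ) : hw M 0 = 0 := by simp [hw, uu]
theorem hh_zero (M : ℕ) : hh M 0 = 0 := by simp [hh]

theorem uu_bl (M : ℕ) : BL (((M:ℝ)+1) * (1/8)^M) (fun w => uu w ^ (M+1)) := by
  have hu : ∀ x ∈ Icc (0:ℝ) 1, |uu x| ≤ 1/8 := fun x hx => by
    unfold uu
    rw [abs_le]; constructor <;> nlinarith [hx.1, hx.2, sq_nonneg (x - 1/2)]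
  constructor
  · intro x hx
    rw [abs_pow, pow_succ]
    have h1 := pow_le_pow_left₀ (abs_nonneg _) (hu x hx) M
    have h2 := mul_le_mul h1 (hu x hx) (abs_nonneg _) (by positivity)
    have : (0:ℝ) ≤ (1/8)^M := by positivity
    have : (0:ℝ) ≤ M * (1/8)^M := by positivity
    linarith
  · intro x hx y hy
    refine (abs_pow_sub_pow_le _ _ _).trans ?_
    have h1 := pow_le_pow_left₀ (le_max_of_le_left (abs_nonneg _)) (max_le (hu x hx) (hu y hy)) M
    have h2 : |uu x - uu y| ≤ |x - y| := by
      rw [show uu x - uu y = (x + y - 1)/2 * (x - y) by unfold uu; ring, abs_mul]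
      refine mul_le_of_le_one_left (abs_nonneg _) ?_
      rw [abs_le]; constructor <;> linarith [hx.1, hx.2, hy.1, hy.2]
    simp only [Nat.add_sub_cancel]
    push_cast
    calc |uu x - uu y| * (M + 1) * max |uu x| |uu y| ^ M ≤ |x - y| * (M+1) * (1/8)^M := by gcongr
      _ = _ := by ring

theorem hw_bl {ε : ℝ} (hε : 0 < ε) : ∀ᶠ M in atTop, BL ε (hw M) ∧ BL ε (hh M) := by
  have h0 : Tendsto (fun M : ℕ => ((M:ℝ)+1) * (1/8)^M) atTop (𝓝 0) := by
    have h1 := tendsto_pow_const_mul_const_pow_of_abs_lt_one 1 (r := (1/8:ℝ)) (by rw [abs_of_pos] <;> norm_num)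
    have h2 := tendsto_pow_atTop_nhds_zero_of_abs_lt_one (r := (1/8:ℝ)) (by rw [abs_of_pos] <;> norm_num)
    have := h1.add h2
    rw [add_zero] at this
    exact this.congr fun M => by ring
  filter_upwards [h0.eventually (eventually_le_nhds (show (0:ℝ) < 1/2 by norm_num)),
    h0.eventually (eventually_le_nhds (show (0:ℝ) < ε/24 by positivity))] with M hM1 hM2
  have b1 := uu_bl M
  have bid : BL 1 (fun x => x) := ⟨fun x hx => by rw [abs_of_nonneg hx.1]; exact hx.2, fun x _ y _ => by simp⟩
  have b2 : BL 1 (fun x => (x - 1)/2) := by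
    refine ⟨fun x hx => by rw [abs_le]; constructor <;> linarith [hx.1, hx.2], fun x _ y _ => ?_⟩
    rw [show (x-1)/2 - (y-1)/2 = 1/2 * (x - y) by ring, abs_mul, abs_of_pos (by norm_num : (0:ℝ) < 1/2)]
    linarith [abs_nonneg (x - y)]
  have bu : BL 1 uu := by
    have := ((b2.mul bid).mono (b := 2) (by norm_num))
    have h8 := uu_bl 0
    have := h8.mono (b := 1) (by norm_num)
    simpa using this
  have b3 : BL 3 (fun w => 2 - uu w ^ (M+2)) := by
    have := (b1.mul bu).mono (b := 1) (by linarith)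
    constructor
    · intro x hx
      have := this.1 x hx
      simp only [← pow_succ] at this
      rw [abs_le] at this ⊢
      constructor <;> linarith [this.1, this.2]
    · intro x hx y hy
      have := this.2 x hx y hy
      simp only [← pow_succ] at this
      rw [show 2 - uu x ^ (M+2) - (2 - uu y ^ (M+2)) = -(uu x ^ (M+2) - uu y ^ (M+2)) by ring, abs_neg]
      linarith [abs_nonneg (x - y)]
  have b4 := b2.mul (b1.mul b3)
  have b5 : BL (ε/2) (hw M) := BL.mono b4 (by linarith)
  exact ⟨b5.mono (by linarith), BL.mono (bid.mul b5) (by linarith)⟩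

theorem smallZ_of {ζ : ℝ} (hζ : 0 < ζ) {R : ℝ → ℝ → ℝ} (hR : RPoly (fun p => R p.1 p.2)) :
    ∃ ε > 0, ∀ g : ℝ → ℝ, g 0 = 0 → BL ε g → SmallZ ζ (fun w b => g w * R w b) ∧ SmallZ ζ (fun w b => g b * R w b) := by
  obtain ⟨M, M0, h1, h2⟩ := hR.bound
  refine ⟨ζ / (2 * M), by positivity, fun g g0 hg => ?_⟩
  have e : ζ / (2 * M) * M = ζ / 2 := by field_simp
  have key : ∀ {w b w' b' x x' : ℝ}, w ∈ Icc (0:ℝ) 1 → b ∈ Icc (0:ℝ) 1 → w' ∈ Icc (0:ℝ) 1 → b' ∈ Icc (0:ℝ) 1 →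
      x ∈ Icc (0:ℝ) 1 → x' ∈ Icc (0:ℝ) 1 → |x - x'| ≤ |w - w'| + |b - b'| →
      |g x * R w b - g x' * R w' b'| ≤ ζ * (|w - w'| + |b - b'|) := by
    intro w b w' b' x x' hw hb hw' hb' hx hx' hxx
    rw [show g x * R w b - g x' * R w' b' = (g x - g x') * R w b + g x' * (R w b - R w' b') by ring]
    refine (abs_add_le _ _).trans ?_
    rw [abs_mul, abs_mul]
    have a1 := mul_le_mul (hg.2 x hx x' hx') (h1 w hw b hb) (abs_nonneg _) (by positivity)
    have a2 := mul_le_mul (hg.1 x' hx') (h2 w hw b hb w' hw' b' hb') (abs_nonneg _) (by positivity)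
    have e1 : ζ / (2 * M) * |x - x'| * M = ζ / 2 * |x - x'| := by rw [← e]; ring
    have e2 : ζ / (2 * M) * (M * (|w - w'| + |b - b'|)) = ζ / 2 * (|w - w'| + |b - b'|) := by rw [← e]; ring
    have a3 : ζ / 2 * |x - x'| ≤ ζ / 2 * (|w - w'| + |b - b'|) := mul_le_mul_of_nonneg_left hxx (by positivity)
    rw [e1] at a1; rw [e2] at a2
    linarith only [a1, a2, a3]
  refine ⟨⟨by simp [g0], fun w hw b hb w' hw' b' hb' => ?_⟩, ⟨by simp [g0], fun w hw b hb w' hw' b' hb' => ?_⟩⟩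
  · exact key hw hb hw' hb' hw hw' (by linarith [abs_nonneg (b - b')])
  · exact key hw hb hw' hb' hb hb' (by linarith [abs_nonneg (w - w')])

theorem smallZ_ev {ζ : ℝ} (hζ : 0 < ζ) {R : ℝ → ℝ → ℝ} (hR : RPoly (fun p => R p.1 p.2)) :
    ∀ᶠ M in atTop, SmallZ ζ (fun w b => hw M w * R w b) ∧ SmallZ ζ (fun w b => hw M b * R w b) ∧
      SmallZ ζ (fun w b => hh M w * R w b) ∧ SmallZ ζ (fun w b => hh M b * R w b) := by
  obtain ⟨ε, ε0, h⟩ := smallZ_of hζ hR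
  filter_upwards [hw_bl ε0] with M hM
  exact ⟨(h _ (hw_zero M) hM.1).1, (h _ (hw_zero M) hM.1).2, (h _ (hh_zero M) hM.2).1, (h _ (hh_zero M) hM.2).2⟩

namespace RPoly
variable {W B : ℝ × ℝ → ℝ}
theorem chi' (hB : RPoly B) : RPoly (fun p => chi (B p)) := by
  have : RPoly (fun p => (1 - 2 * B p)^15) := ((cst 1).sub ((cst 2).mul hB)).pow 15
  exact ((((cst 1).sub this).pow 3).mul (((cst 8).add ((cst 9).mul this)).add ((cst 3).mul (this.pow 2)))).div 16
theorem ez' (hB : RPoly B) (n : ℕ) : RPoly (fun p => ez n (B p)) :=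
  (cst _).add ((cst _).mul (hB.pow n))
theorem eo' (hB : RPoly B) (n : ℕ) : RPoly (fun p => eo n (B p)) :=
  (cst _).add ((cst _).mul (sum (fun i => ((cst 1).sub hB).pow i) (n+1)))
theorem aF' (hW : RPoly W) (hB : RPoly B) (n : ℕ) : RPoly (fun p => aF chi (ez n) (eo n) (W p) (B p)) :=
  (((cst 1).sub hB.chi').mul (hW.eo' n)).add (hB.chi'.mul (hW.ez' n))
theorem bF' (hW : RPoly W) (hB : RPoly B) (n : ℕ) : RPoly (fun p => bF chi (ez n) (eo n) (W p) (B p)) :=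
  (((cst 1).sub hW.chi').mul (hB.ez' n)).add (hW.chi'.mul (hB.eo' n))
theorem uu' (hW : RPoly W) : RPoly (fun p => uu (W p)) := (hW.mul (hW.sub (cst 1))).div 2
theorem hw' (hW : RPoly W) (M : ℕ) : RPoly (fun p => hw M (W p)) :=
  ((hW.sub (cst 1)).div 2).mul ((hW.uu'.pow _).mul ((cst 2).sub (hW.uu'.pow _)))
theorem hh' (hW : RPoly W) (M : ℕ) : RPoly (fun p => hh M (W p)) := hW.mul (hW.hw' M)
end RPoly
end

section
open Filter Set Topology MeasureTheory

noncomputable def GI (n M : ℕ) (κ σ : ℝ) (z : ℝ × ℝ) : ℝ × ℝ :=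
  (z.1 * (aF chi (ez n) (eo n) z.1 z.2 + hw M z.1 * (κ - z.1 * aF chi (ez n) (eo n) z.1 z.2)),
   z.2 * (bF chi (ez n) (eo n) z.1 z.2 + hh M z.1 * (1 + σ * (1 - z.2) - bF chi (ez n) (eo n) z.1 z.2)))

noncomputable def GII (n M : ℕ) (κ σ : ℝ) (z : ℝ × ℝ) : ℝ × ℝ :=
  (z.1 * (aF chi (ez n) (eo n) z.1 z.2 + hh M z.2 * (1 + σ * (1 - z.1) - aF chi (ez n) (eo n) z.1 z.2)),
   z.2 * (bF chi (ez n) (eo n) z.1 z.2 + hw M z.2 * (κ - z.2 * bF chi (ez n) (eo n) z.1 z.2)))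

theorem aF_rho (n : ℕ) (w b : ℝ) : aF chi (ez n) (eo n) b (1 - w) = bF chi (ez n) (eo n) w b := by
  unfold aF bF
  rw [chi_flip]; ring

theorem bF_rho (n : ℕ) (w b : ℝ) :
    (1 - w) * bF chi (ez n) (eo n) b (1 - w) = 1 - w * aF chi (ez n) (eo n) w b := by
  unfold aF bF
  have h1 := eo_flip n w
  have h2 := eo_flip n (1 - w)
  rw [show 1 - (1 - w) = w by ring] at h2
  linear_combination (chi b) * h2 + (1 - chi b) * h1

theorem rho_GI (n M : ℕ) (κ κ' σ : ℝ) (hκ : κ' = 1 - κ) (z : ℝ × ℝ) :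
    rho (GI n M κ σ z) = GII n M κ' σ (rho z) := by
  obtain ⟨w, b⟩ := z
  subst hκ
  have h1 := aF_rho n w b
  have h2 := bF_rho n w b
  have h3 := hh_flip M w
  have h4 : hh M w = w * hw M w := rfl
  have h5 : hh M (1 - w) = (1 - w) * hw M (1 - w) := rfl
  simp only [rho, GI, GII, h1]
  generalize aF chi (ez n) (eo n) w b = a at *
  generalize bF chi (ez n) (eo n) w b = bb at *
  generalize bF chi (ez n) (eo n) b (1 - w) = b' at *
  refine Prod.ext ?_ ?_
  · simp only; rw [h3]
  · simp only
    rw [h3] at h5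
    linear_combination (-(1 - hh M w)) * h2 + (1 - κ - (1 - w) * b') * h5 + (κ - w * a) * h4

theorem rho_GII (n M : ℕ) (κ σ σ' : ℝ) (hσ : σ' = -σ) (z : ℝ × ℝ) :
    rho (GII n M κ σ z) = GI n M κ σ' (rho z) := by
  obtain ⟨w, b⟩ := z
  subst hσ
  have h1 := aF_rho n w b
  have h2 := bF_rho n w b
  simp only [rho, GI, GII, h1]
  generalize aF chi (ez n) (eo n) w b = a at *
  generalize bF chi (ez n) (eo n) w b = bb at *
  generalize bF chi (ez n) (eo n) b (1 - w) = b' at *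
  refine Prod.ext ?_ ?_
  · simp only
  · simp only
    linear_combination (-(1 - hh M b)) * h2

theorem exists_M {n : ℕ} (hn : (440000000:ℝ) ≤ n) (hm : (n:ℝ)^2 * (81/100:ℝ)^(n-1) ≤ 1/10000) (S : ℝ) :
    ∃ M : ℕ, ∀ G ∈ ({GI n M 2 S, GII n M (-1) S, GI n M (-1) (-S), GII n M 2 (-S)} : Set (ℝ × ℝ → ℝ × ℝ)),
      ∃ A B : ℝ → ℝ → ℝ, (∀ w b, G (w, b) = ((n:ℝ) * (w * A w b), 1/(n:ℝ) * (b * B w b))) ∧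
        Good n (1/n) 110000 (2 * (110000 * (n:ℝ)^2)) A B := by
  have HB := base_of hn hm
  have hst := HB.hst
  have ζ0 : 0 < 1/(n:ℝ)/10000 := by have := HB.ht; positivity
  have evI : ∀ κ σ : ℝ, ∀ᶠ M in atTop, ∃ A B : ℝ → ℝ → ℝ,
      (∀ w b, GI n M κ σ (w, b) = ((n:ℝ) * (w * A w b), 1/(n:ℝ) * (b * B w b))) ∧
        Good n (1/n) 110000 (2 * (110000 * (n:ℝ)^2)) A B := by
    intro κ σ
    have p1 : RPoly (fun p => κ - p.1 * aF chi (ez n) (eo n) p.1 p.2) :=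
      (RPoly.cst κ).sub (RPoly.fs.mul (RPoly.fs.aF' RPoly.sn n))
    have p2 : RPoly (fun p => 1 + σ * (1 - p.2) - bF chi (ez n) (eo n) p.1 p.2) :=
      ((RPoly.cst 1).add ((RPoly.cst σ).mul ((RPoly.cst 1).sub RPoly.sn))).sub (RPoly.fs.bF' RPoly.sn n)
    filter_upwards [smallZ_ev ζ0 (R := fun w b => κ - w * aF chi (ez n) (eo n) w b) p1,
      smallZ_ev ζ0 (R := fun w b => 1 + σ * (1 - b) - bF chi (ez n) (eo n) w b) p2] with M h1 h2
    refine ⟨_, _, fun w b => ?_, good_of HB h1.1 h2.2.2.1⟩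
    refine Prod.ext ?_ ?_
    · simp only [GI]
      generalize aF chi (ez n) (eo n) w b = a
      linear_combination (-(w * (a + hw M w * (κ - w * a)))) * hst
    · simp only [GI]
      generalize bF chi (ez n) (eo n) w b = a
      linear_combination (-(b * (a + hh M w * (1 + σ * (1 - b) - a)))) * hst
  have evII : ∀ κ σ : ℝ, ∀ᶠ M in atTop, ∃ A B : ℝ → ℝ → ℝ,
      (∀ w b, GII n M κ σ (w, b) = ((n:ℝ) * (w * A w b), 1/(n:ℝ) * (b * B w b))) ∧
        Good n (1/n) 110000 (2 * (110000 * (n:ℝ)^2)) A B := by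
    intro κ σ
    have p1 : RPoly (fun p => κ - p.2 * bF chi (ez n) (eo n) p.1 p.2) :=
      (RPoly.cst κ).sub (RPoly.sn.mul (RPoly.fs.bF' RPoly.sn n))
    have p2 : RPoly (fun p => 1 + σ * (1 - p.1) - aF chi (ez n) (eo n) p.1 p.2) :=
      ((RPoly.cst 1).add ((RPoly.cst σ).mul ((RPoly.cst 1).sub RPoly.fs))).sub (RPoly.fs.aF' RPoly.sn n)
    filter_upwards [smallZ_ev ζ0 (R := fun w b => κ - b * bF chi (ez n) (eo n) w b) p1,
      smallZ_ev ζ0 (R := fun w b => 1 + σ * (1 - w) - aF chi (ez n) (eo n) w b) p2] with M h1 h2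
    refine ⟨_, _, fun w b => ?_, good_of HB h2.2.2.2 h1.2.1⟩
    refine Prod.ext ?_ ?_
    · simp only [GII]
      generalize aF chi (ez n) (eo n) w b = a
      linear_combination (-(w * (a + hh M b * (1 + σ * (1 - w) - a)))) * hst
    · simp only [GII]
      generalize bF chi (ez n) (eo n) w b = a
      linear_combination (-(b * (a + hw M b * (κ - b * a)))) * hst
  obtain ⟨M, h1, h2, h3, h4⟩ := ((evI 2 S).and ((evII (-1) S).and ((evI (-1) (-S)).and (evII 2 (-S))))).exists
  refine ⟨M, fun G hG => ?_⟩
  rcases hG with rfl | rfl | rfl | rfl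
  exacts [h1, h2, h3, h4]

noncomputable def kap (M : ℕ) (v : ℝ) : ℝ := (v + 3)/2 * ∑ i ∈ Finset.range (M+2), uu (v + 2) ^ i

theorem kap_eq (M : ℕ) (v : ℝ) : v^2 * kap M v^2 = 1 - hh M (v + 2) := by
  have h := mul_neg_geom_sum (uu (v+2)) (M+2)
  rw [hh_eq]
  have e : v * ((v + 3)/2) = -(1 - uu (v+2)) := by unfold uu; ring
  have : v * kap M v = -(1 - uu (v+2) ^ (M+2)) := by
    unfold kap
    rw [← mul_assoc, e, neg_mul, h]
  rw [← mul_pow, this]; ring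

noncomputable def fA (n M : ℕ) (S x0 : ℝ) (z : ℝ × ℝ) : ℝ :=
  kap M z.1 ^ 2 * ((z.1 + 2) * aF chi (ez n) (eo n) (z.1 + 2) ((z.2 - x0)/S) - 2)
noncomputable def fB (n M : ℕ) (S x0 : ℝ) (z : ℝ × ℝ) : ℝ :=
  S * (kap M z.1 ^ 2 * (((z.2 - x0)/S) * bF chi (ez n) (eo n) (z.1 + 2) ((z.2 - x0)/S)
    - ((z.2 - x0)/S) * (1 + S * (1 - (z.2 - x0)/S))))

theorem fA_poly (n M : ℕ) (S x0 : ℝ) : RPoly (fA n M S x0) := by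
  have w : RPoly (fun p => p.1 + 2) := RPoly.fs.add (RPoly.cst 2)
  have b : RPoly (fun p => (p.2 - x0)/S) := (RPoly.sn.sub (RPoly.cst x0)).div S
  have k : RPoly (fun p => kap M p.1) :=
    ((RPoly.fs.add (RPoly.cst 3)).div 2).mul (RPoly.sum (fun i => w.uu'.pow i) _)
  exact (k.pow 2).mul ((w.mul (w.aF' b n)).sub (RPoly.cst 2))

theorem fB_poly (n M : ℕ) (S x0 : ℝ) : RPoly (fB n M S x0) := by
  have w : RPoly (fun p => p.1 + 2) := RPoly.fs.add (RPoly.cst 2)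
  have b : RPoly (fun p => (p.2 - x0)/S) := (RPoly.sn.sub (RPoly.cst x0)).div S
  have k : RPoly (fun p => kap M p.1) :=
    ((RPoly.fs.add (RPoly.cst 3)).div 2).mul (RPoly.sum (fun i => w.uu'.pow i) _)
  exact (RPoly.cst S).mul ((k.pow 2).mul ((b.mul (w.bF' b n)).sub
    (b.mul ((RPoly.cst 1).add ((RPoly.cst S).mul ((RPoly.cst 1).sub b))))))

noncomputable def ff (n M : ℕ) (c S x0 : ℝ) (z : ℝ × ℝ) : ℝ × ℝ :=
  (z.1^2 * fA n M S x0 z, c - z.2^2 + z.1^2 * fB n M S x0 z)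

theorem ff_conj (n M : ℕ) {c S x0 : ℝ} (hS : S ≠ 0) (h1 : c - x0^2 = x0) (h2 : -2 * x0 = 1 + S) (w b : ℝ) :
    ff n M c S x0 (w - 2, S * b + x0) = ((GI n M 2 S (w, b)).1 - 2, S * (GI n M 2 S (w, b)).2 + x0) := by
  have k := kap_eq M (w - 2)
  have hb : (S * b + x0 - x0)/S = b := by field_simp; ring
  have hhe : hh M w = w * hw M w := rfl
  unfold ff fA fB GI
  simp only [hb, sub_add_cancel] at k ⊢
  generalize aF chi (ez n) (eo n) w b = a
  generalize bF chi (ez n) (eo n) w b = bb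
  refine Prod.ext ?_ ?_
  · simp only
    linear_combination (w * a - 2) * k + (w*a - 2) * (-hhe)
  · simp only
    linear_combination (S * (b * bb - b * (1 + S * (1 - b)))) * k + h1 + S * b * h2

noncomputable def Lh (S x0 : ℝ) (hS : S ≠ 0) : (ℝ × ℝ) ≃ₜ (ℝ × ℝ) where
  toFun z := (z.1 - 2, S * z.2 + x0)
  invFun z := (z.1 + 2, (z.2 - x0)/S)
  left_inv z := by ext <;> simp; field_simp
  right_inv z := by ext <;> simp; field_simp; ring
  continuous_toFun := by fun_prop
  continuous_invFun := by fun_prop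

theorem deg_two {c : ℝ} {B : ℝ × ℝ → ℝ} (Q : MvPolynomial (Fin 2) ℝ)
    (h : ∀ p : ℝ × ℝ, c - p.2^2 + p.1^2 * B p = MvPolynomial.eval ![p.1, p.2] Q) : 2 ≤ Q.totalDegree := by
  have e : MvPolynomial.aeval ![(0 : Polynomial ℝ), Polynomial.X] Q = Polynomial.C c - Polynomial.X^2 := by
    refine Polynomial.funext fun x => ?_
    have h1 := h (0, x)
    have h2 : Polynomial.eval x (MvPolynomial.aeval ![(0 : Polynomial ℝ), Polynomial.X] Q) =
        MvPolynomial.eval ![0, x] Q := by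
      have := MvPolynomial.map_aeval ![(0 : Polynomial ℝ), Polynomial.X] (Polynomial.evalRingHom x) Q
      rw [Polynomial.coe_evalRingHom] at this
      rw [this]
      have e1 : (Polynomial.evalRingHom x).comp (algebraMap ℝ (Polynomial ℝ)) = RingHom.id ℝ := by
        ext; simp
      rw [e1, MvPolynomial.coe_eval₂Hom, ← MvPolynomial.eval₂_id]
      congr 1
      funext i
      fin_cases i <;> simp
    rw [h2]
    simp at h1 ⊢
    exact h1.symm
  have := MvPolynomial.aeval_natDegree_le (n := 1) Q le_rfl ![(0 : Polynomial ℝ), Polynomial.X] (fun i => by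
    fin_cases i <;> simp)
  rw [e, mul_one] at this
  refine le_trans (le_of_eq ?_) this
  rw [Polynomial.natDegree_sub_eq_right_of_natDegree_lt] <;> simp

theorem main_result :
    ∃ f : ℝ × ℝ → ℝ × ℝ, IsPolyMapDegTwo f ∧ HasInfinitelyManySinks f ∧
      ∃ A : Set (ℝ × ℝ), IsPDCantorAttractor f A := by
  obtain ⟨c, hc⟩ := exists_feig
  have hF : Feig c := hc
  obtain ⟨n, hn, hm⟩ := exists_n
  have HB := base_of hn hm
  have c0 : 0 < c := hc.1
  obtain ⟨S, hSdef⟩ : ∃ S, S = √(1 + 4 * c) := ⟨_, rfl⟩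
  have S2 : S^2 = 1 + 4 * c := by rw [hSdef]; exact Real.sq_sqrt (by linarith)
  have S0 : 0 < S := by rw [hSdef]; exact Real.sqrt_pos.2 (by linarith)
  obtain ⟨x0, hx0⟩ : ∃ x0, x0 = (-1 - S)/2 := ⟨_, rfl⟩
  have e1 : c - x0^2 = x0 := by rw [hx0]; linear_combination (-1/4) * S2
  have e2 : -2 * x0 = 1 + S := by rw [hx0]; ring
  obtain ⟨M, hM⟩ := exists_M hn hm S
  have hA := fA_poly n M S x0
  have hB := fB_poly n M S x0
  have hp1 : RPoly (fun z => (ff n M c S x0 z).1) := (RPoly.fs.pow 2).mul hA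
  have hp2 : RPoly (fun z => (ff n M c S x0 z).2) :=
    ((RPoly.cst c).sub (RPoly.sn.pow 2)).add ((RPoly.fs.pow 2).mul hB)
  have conj := ff_conj n M S0.ne' e1 e2
  have n0 : (0:ℝ) < n := by linarith
  refine ⟨ff n M c S x0, ?_, ?_, ?_⟩
  · obtain ⟨P, hP⟩ := hp1
    obtain ⟨Q, hQ⟩ := hp2
    exact ⟨P, Q, le_max_of_le_right (deg_two Q hQ), fun p => Prod.ext (hP p) (hQ p)⟩
  · refine good_sinks (Lh S x0 S0.ne') (fun z => conj z.1 z.2) (rho_GI n M 2 (-1) S (by norm_num))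
      (rho_GII n M (-1) S (-S) rfl) (rho_GI n M (-1) 2 (-S) (by norm_num)) HB.hst HB.ht ?_ HB.hc0 HB.hs (by positivity) hM
    rw [div_le_div_iff₀ n0 (by norm_num)]; linarith
  · refine PD2D hF hA.contDiff hB.contDiff rfl ?_
    have conj' : ∀ v x, ff n M c S x0 (v, x) =
        ((GI n M 2 S (v + 2, (x - x0)/S)).1 - 2, S * (GI n M 2 S (v + 2, (x - x0)/S)).2 + x0) := fun v x => by
      rw [← conj]
      congr 2
      · ring
      · field_simp; ring
    intro s hs
    have han : AnalyticOnNhd ℝ (ff n M c S x0) univ := hp1.analytic.prod hp2.analytic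
    refine null_pre han (-2, x0) (a := n) (a' := 1/n) n0.ne' HB.ht.ne' ?_ ?_ ?_ s hs
    · simp only [conj', sub_self, zero_div]
      have d : Differentiable ℝ (fun w : ℝ => aF chi (ez n) (eo n) w 0 + hw M w * (2 - w * aF chi (ez n) (eo n) w 0)) := by
        have p : RPoly (fun p => aF chi (ez n) (eo n) p.1 0 + hw M p.1 * (2 - p.1 * aF chi (ez n) (eo n) p.1 0)) :=
          (RPoly.fs.aF' (RPoly.cst 0) n).add ((RPoly.fs.hw' M).mul ((RPoly.cst 2).sub (RPoly.fs.mul (RPoly.fs.aF' (RPoly.cst 0) n))))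
        exact (p.contDiff.differentiable one_ne_zero).comp (g := _) (f := fun w : ℝ => (w, (0:ℝ))) (by fun_prop)
      have h := ((hasDerivAt_id (-2 + 2 : ℝ)).mul (d (-2 + 2)).hasDerivAt).sub_const 2
      have h' := HasDerivAt.comp_add_const (-2:ℝ) 2 h
      refine h'.congr_deriv ?_
      simp [hw_zero, aF, chi_zero, HB.e10]
    · simp only [conj', neg_add_cancel]
      have d : Differentiable ℝ (fun b : ℝ => bF chi (ez n) (eo n) 0 b + hh M 0 * (1 + S * (1 - b) - bF chi (ez n) (eo n) 0 b)) := by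
        have p : RPoly (fun p => bF chi (ez n) (eo n) 0 p.1 + hh M 0 * (1 + S * (1 - p.1) - bF chi (ez n) (eo n) 0 p.1)) :=
          ((RPoly.cst 0).bF' RPoly.fs n).add ((RPoly.cst _).mul (((RPoly.cst 1).add ((RPoly.cst S).mul ((RPoly.cst 1).sub RPoly.fs))).sub ((RPoly.cst 0).bF' RPoly.fs n)))
        exact (p.contDiff.differentiable one_ne_zero).comp (g := _) (f := fun w : ℝ => (w, (0:ℝ))) (by fun_prop)
      have h := (hasDerivAt_id (0:ℝ)).mul (d 0).hasDerivAt
      have g : HasDerivAt (fun t : ℝ => (t - x0)/S) (1/S) x0 := ((hasDerivAt_id x0).sub_const x0).div_const S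
      have h' := ((HasDerivAt.comp_of_eq x0 h g (by simp)).const_mul S).add_const x0
      refine h'.congr_deriv ?_
      simp [hh_zero, bF, chi_zero, HB.e00]
      field_simp
    · intro t
      simp [conj', GI]
end

/-- There exists a polynomial map `f : ℝ² → ℝ²` of degree at least 2 having infinitely many
distinct sinks and a period doubling Cantor attractor. -/
theorem exists_polyMap_with_infinitely_many_sinks_and_PD_attractor :
    ∃ f : ℝ × ℝ → ℝ × ℝ, IsPolyMapDegTwo f ∧ HasInfinitelyManySinks f ∧
      ∃ A : Set (ℝ × ℝ), IsPDCantorAttractor f A :=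
  main_result
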